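/- Let A be a σ-unital simple C*-algebra with QT̃(A) ≠ {0}. Suppose A has strict comparison and the canonical map Γ is surjective. If a, b ∈ (A⊗K)_+ satisfy d_τ(a) < d_τ(b) for all τ ∈ QT̃(A)\{0}, then there exists x ∈ A⊗K with x*x = a and xx* ∈ Her(b), i.e., a ≾̃ b. -/

import Mathlib

open scoped ENNReal
open Filter Topology

noncomputable section

namespace Paper

/-! ### Generic definitions in a (non-unital) C*-algebra -/

variable (R : Type*) [NonUnitalCStarAlgebra R] [PartialOrder R] [StarOrderedRing R]

variable {R} in
/-- The hereditary C*-subalgebra generated by `b`, i.e. `closure (b R b)`. -/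
def her (b : R) : Set R := closure {x : R | ∃ y : R, x = b * y * b}

/-- `I` is a (not necessarily closed) two-sided ideal of the subalgebra `B`. -/
def IsIdealIn (B I : Set R) : Prop :=
  I ⊆ B ∧ (0 : R) ∈ I ∧ (∀ x ∈ I, ∀ y ∈ I, x + y ∈ I) ∧ (∀ x ∈ I, -x ∈ I) ∧
    (∀ x ∈ I, ∀ b ∈ B, x * b ∈ I ∧ b * x ∈ I)

variable {R} in
/-- The Pedersen ideal of the subalgebra `B`: the minimal dense two-sided ideal of `B`,
equivalently the intersection of all dense two-sided ideals of `B`. -/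
def pedersenIn (B : Set R) : Set R :=
  ⋂ I ∈ {I : Set R | IsIdealIn R B I ∧ B ⊆ closure I}, I

/-- The Pedersen ideal of `R`. -/
def pedersen : Set R := pedersenIn (Set.univ : Set R)

variable {R} in
/-- Cuntz subequivalence `a ≲ b`. -/
def CuntzLE (a b : R) : Prop :=
  ∃ x : ℕ → R, Tendsto (fun n => ‖a - star (x n) * b * x n‖) atTop (𝓝 0)

variable {R} in
/-- Cuntz subequivalence relative to a subset `B` (the `xₙ` are taken in `B`). -/
def CuntzLEIn (B : Set R) (a b : R) : Prop :=
  ∃ x : ℕ → R, (∀ n, x n ∈ B) ∧ Tendsto (fun n => ‖a - star (x n) * b * x n‖) atTop (𝓝 0)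

variable {R} in
/-- Cuntz equivalence `a ∼ b`. -/
def CuntzEq (a b : R) : Prop := CuntzLE a b ∧ CuntzLE b a

/-- The cut-off function `f_ε`: `0` on `[0, ε/2]`, `1` on `[ε, ∞)`, linear in between. -/
def cutoff (ε : ℝ) : ℝ → ℝ := fun t => min 1 (max 0 (2 * t / ε - 1))

variable {R} in
/-- `f_ε(a)`, via the (non-unital) continuous functional calculus. -/
def fEps (ε : ℝ) (a : R) : R := cfcₙ (cutoff ε) a

/-- A densely defined 2-quasitrace on `R` (recorded by its values on positive elements;
the value on non-positive elements is normalised to `0`). -/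
structure QuasiTrace : Type _ where
  toFun : R → ℝ≥0∞
  zero_of_not_nonneg : ∀ a : R, ¬ (0 ≤ a) → toFun a = 0
  map_zero : toFun 0 = 0
  map_smul : ∀ (r : ℝ) (a : R), 0 < r → 0 ≤ a → toFun (r • a) = ENNReal.ofReal r * toFun a
  map_add_of_commute : ∀ a b : R, 0 ≤ a → 0 ≤ b → a * b = b * a →
    toFun (a + b) = toFun a + toFun b
  map_star_mul_self : ∀ x : R, toFun (star x * x) = toFun (x * star x)
  lowerSemicontinuousOn : LowerSemicontinuousOn toFun {a : R | 0 ≤ a}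
  finite_on_pedersen : ∀ a ∈ pedersen R, 0 ≤ a → toFun a < ∞
  exists_matrix_extension : ∃ σ : Matrix (Fin 2) (Fin 2) R → ℝ≥0∞,
    (∀ a : R, σ (fun i j => if i = 0 ∧ j = 0 then a else 0) = toFun a) ∧
    σ 0 = 0 ∧
    (∀ (r : ℝ) (x : Matrix (Fin 2) (Fin 2) R), 0 < r → (∃ y, x = star y * y) →
      σ (r • x) = ENNReal.ofReal r * σ x) ∧
    (∀ x y : Matrix (Fin 2) (Fin 2) R, (∃ z, x = star z * z) → (∃ z, y = star z * z) →
      x * y = y * x → σ (x + y) = σ x + σ y) ∧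
    (∀ x : Matrix (Fin 2) (Fin 2) R, σ (star x * x) = σ (x * star x))

/-- The topology of pointwise convergence on the Pedersen ideal. -/
instance : TopologicalSpace (QuasiTrace R) :=
  TopologicalSpace.induced (fun τ => fun a : pedersen R => τ.toFun a) inferInstance

variable {R}

/-- The zero quasitrace. -/
def QuasiTrace.IsZero (τ : QuasiTrace R) : Prop := ∀ a : R, τ.toFun a = 0

/-- The dimension function `d_τ(a) = lim_{ε → 0} τ(f_ε(a))`. -/
def dTau (τ : QuasiTrace R) (a : R) : ℝ≥0∞ :=
  ⨆ n : ℕ, τ.toFun (fEps (1 / (n + 1)) a)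

/-- `ω(a)` relative to a set `S` of quasitraces:
`lim_n sup {d_τ(a) - τ(f_{1/n}(a)) : τ ∈ S}`. -/
def omegaOn (S : Set (QuasiTrace R)) (a : R) : ℝ≥0∞ :=
  ⨅ n : ℕ, ⨆ τ ∈ S, (dTau τ a - τ.toFun (fEps (1 / (n + 1)) a))

/-- The seminorm `‖x‖_{2,S}`. -/
def norm2On (S : Set (QuasiTrace R)) (x : R) : ℝ≥0∞ :=
  ⨆ τ ∈ S, (τ.toFun (star x * x)) ^ (1 / 2 : ℝ)

variable (R)

/-- `R` has (Blackadar's) strict comparison. -/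
def StrictComparison : Prop :=
  ∀ a b : R, 0 ≤ a → 0 ≤ b →
    (∀ τ : QuasiTrace R, ¬ τ.IsZero → dTau τ a < dTau τ b) → CuntzLE a b

/-- `R` is a simple C*-algebra: it is nonzero and has no nontrivial closed two-sided ideals. -/
def IsSimpleCStar : Prop :=
  (∃ x : R, x ≠ 0) ∧
    ∀ I : TwoSidedIdeal R, IsClosed (I : Set R) → (I : Set R) = {0} ∨ (I : Set R) = Set.univ

/-- `R` is σ-unital: it contains a strictly positive element `h`
(equivalently, `Her(h) = R`). -/
def SigmaUnital : Prop := ∃ h : R, 0 ≤ h ∧ her h = Set.univ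

/-- `R` is elementary: isomorphic to the algebra of compact operators on some Hilbert space. -/
def IsElementary : Prop :=
  ∃ (H : Type) (_ : NormedAddCommGroup H) (_ : InnerProductSpace ℂ H) (_ : CompleteSpace H)
    (φ : R →⋆ₙₐ[ℂ] (H →L[ℂ] H)), Function.Injective φ ∧
      Set.range φ = {T : H →L[ℂ] H | IsCompactOperator (⇑T)}

/-- `R` is purely infinite: `R ≇ ℂ` and `b ≲ a` for all nonzero positive `a, b`. -/
def PurelyInfinite : Prop :=
  (¬ ∃ φ : R →⋆ₙₐ[ℂ] ℂ, Function.Bijective φ) ∧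
    ∀ a b : R, 0 ≤ a → 0 ≤ b → a ≠ 0 → b ≠ 0 → CuntzLE b a

/-- `R` is finite: its minimal unitization contains no non-unitary isometry. -/
def IsFiniteCStar : Prop :=
  ∀ v : Unitization ℂ R, star v * v = 1 → v * star v = 1

/-- `R` has stable rank one: the invertible elements are dense in the minimal unitization. -/
def StableRankOne : Prop := Dense {x : Unitization ℂ R | IsUnit x}

variable {R}

/-- `c` represents `n·[a]` in the Cuntz semigroup: it is the sum of `n` mutually
orthogonal positive elements, each Cuntz equivalent to `a`. -/
def IsNFoldRep (n : ℕ) (a c : R) : Prop :=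
  ∃ f : Fin n → R, (∀ i, 0 ≤ f i) ∧ (∀ i, CuntzEq (f i) a) ∧
    (∀ i j, i ≠ j → f i * f j = 0) ∧ c = ∑ i, f i

/-- `s` represents the supremum of the increasing sequence of Cuntz classes `[y n]`. -/
def IsCuntzLUB (y : ℕ → R) (s : R) : Prop :=
  (∀ n, CuntzLE (y n) s) ∧ ∀ c : R, 0 ≤ c → (∀ n, CuntzLE (y n) c) → CuntzLE s c

/-- `[x] ≪ [y]` in the Cuntz semigroup. -/
def CuntzWayBelow (x y : R) : Prop :=
  ∀ yseq : ℕ → R, (∀ n, 0 ≤ yseq n) → (∀ n, CuntzLE (yseq n) (yseq (n + 1))) →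
    ∀ s : R, 0 ≤ s → IsCuntzLUB yseq s → CuntzLE y s → ∃ n₀, CuntzLE x (yseq n₀)

variable (R)

/-- The Cuntz semigroup of `R` is almost unperforated. -/
def AlmostUnperforated : Prop :=
  ∀ (a b : R) (k : ℕ), 1 ≤ k → 0 ≤ a → 0 ≤ b →
    (∃ c d : R, IsNFoldRep (k + 1) a c ∧ IsNFoldRep k b d ∧ CuntzLE c d) → CuntzLE a b

/-- The Cuntz semigroup of `R` is almost divisible. -/
def AlmostDivisible : Prop :=
  ∀ x y : R, 0 ≤ x → 0 ≤ y → CuntzWayBelow x y → ∀ n : ℕ, 1 ≤ n →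
    ∃ z : R, 0 ≤ z ∧ (∃ c : R, IsNFoldRep n z c ∧ CuntzLE c y) ∧
      (∃ c : R, IsNFoldRep (n + 1) z c ∧ CuntzLE x c)

/-! ### The stabilization `W ≅ A ⊗ K` -/

variable (A W : Type*) [NonUnitalCStarAlgebra A] [PartialOrder A] [StarOrderedRing A]
  [NonUnitalCStarAlgebra W] [PartialOrder W] [StarOrderedRing W]

/-- A realization of `W` as the stabilization `A ⊗ K`: the maps `emb i j : a ↦ a ⊗ e_{ij}`
are isometric, satisfy the matrix-unit relations, and have dense joint linear span. -/
structure Stabilization : Type _ where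
  emb : ℕ → ℕ → (A →ₗ[ℂ] W)
  emb_mul : ∀ (i j k l : ℕ) (a b : A),
    emb i j a * emb k l b = if j = k then emb i l (a * b) else 0
  emb_star : ∀ (i j : ℕ) (a : A), star (emb i j a) = emb j i (star a)
  norm_emb : ∀ (i j : ℕ) (a : A), ‖emb i j a‖ = ‖a‖
  dense_span : Dense (Submodule.span ℂ {w : W | ∃ (i j : ℕ) (a : A), w = emb i j a} : Set W)

variable {A W}

/-- The set `QT(A)` of quasitraces normalized on `A ⊆ A ⊗ K`. -/
def QTSet (SB : Stabilization A W) : Set (QuasiTrace W) :=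
  {τ | (⨆ a : {a : A // 0 ≤ a ∧ ‖a‖ ≤ 1}, τ.toFun (SB.emb 0 0 a)) = 1}

/-- The quasitraces normalized on the hereditary subalgebra `Her(c) ⊆ W`. -/
def QTSetHer (c : W) : Set (QuasiTrace W) :=
  {τ : QuasiTrace W |
    (⨆ a : {a : W // a ∈ her c ∧ 0 ≤ a ∧ ‖a‖ ≤ 1}, τ.toFun a) = 1}

/-- `ω(a) = 0` for `a ∈ W = A ⊗ K`, computed relative to `\overline{QT(Her(e))}^w`
for any nonzero `e ∈ Ped(A)₊`. -/
def OmegaZero (SB : Stabilization A W) (a : W) : Prop :=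
  ∀ e : A, 0 ≤ e → e ≠ 0 → e ∈ pedersen A →
    omegaOn (closure (QTSetHer (SB.emb 0 0 e))) a = 0

/-- `A` has tracial approximate oscillation zero. -/
def TAOZ (SB : Stabilization A W) : Prop :=
  ∀ e : A, 0 ≤ e → e ≠ 0 → e ∈ pedersen A →
    ∀ a : W, 0 ≤ a → a ∈ pedersen W →
      ∃ b : ℕ → W, (∀ n, 0 ≤ b n) ∧ (∀ n, ‖b n‖ ≤ 1) ∧
        (∀ n, b n ∈ pedersenIn (her a)) ∧
        Tendsto (fun n => omegaOn (closure (QTSetHer (SB.emb 0 0 e))) (b n)) atTop (𝓝 0) ∧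
        Tendsto (fun n => norm2On (closure (QTSetHer (SB.emb 0 0 e))) (a - b n)) atTop (𝓝 0)

/-! ### Affine functions on the quasitrace cone and the map `Γ` -/

variable (W) in
/-- `ρ = t·τ + (1-t)·σ` as quasitraces. -/
def IsCombo (t : ℝ) (τ σ ρ : QuasiTrace W) : Prop :=
  ∀ a : W, 0 ≤ a →
    ρ.toFun a = ENNReal.ofReal t * τ.toFun a + ENNReal.ofReal (1 - t) * σ.toFun a

variable (W) in
/-- `f` is affine on the quasitrace cone. -/
def IsAffineQT (f : QuasiTrace W → ℝ≥0∞) : Prop :=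
  ∀ t : ℝ, 0 ≤ t → t ≤ 1 → ∀ τ σ ρ : QuasiTrace W, IsCombo W t τ σ ρ →
    f ρ = ENNReal.ofReal t * f τ + ENNReal.ofReal (1 - t) * f σ

variable (W) in
/-- Membership in `Aff₊(QT̃(A))`. -/
def MemAffPlus (f : QuasiTrace W → ℝ≥0∞) : Prop :=
  (∀ τ, f τ = 0) ∨
    (Continuous f ∧ IsAffineQT W f ∧ (∀ τ, f τ < ∞) ∧
      (∀ τ : QuasiTrace W, ¬ τ.IsZero → 0 < f τ) ∧
      (∀ τ : QuasiTrace W, τ.IsZero → f τ = 0))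

variable (W) in
/-- Membership in `LAff₊(QT̃(A))`. -/
def MemLAffPlus (f : QuasiTrace W → ℝ≥0∞) : Prop :=
  ∃ g : ℕ → QuasiTrace W → ℝ≥0∞, (∀ n, MemAffPlus W (g n)) ∧
    (∀ n τ, g n τ ≤ g (n + 1) τ) ∧ ∀ τ, f τ = ⨆ n, g n τ

variable (W) in
/-- The canonical map `Γ : Cu(A) → LAff₊(QT̃(A))`, `Γ([a])(τ) = d_τ(a)`, is surjective. -/
def GammaSurjective : Prop :=
  ∀ f : QuasiTrace W → ℝ≥0∞, MemLAffPlus W f →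
    ∃ a : W, 0 ≤ a ∧ ∀ τ : QuasiTrace W, dTau τ a = f τ

/-!
Strict comparison gives `a ≲ b`, hence only approximate factorisations `x*x ≈ a`. To make them
exact, `a` is compared with a sum `D = ∑ dᵢ` of orthogonal elements which has room to absorb
errors: for each `i`, twice `d_τ(dᵢ)` is smaller than the sum of finitely many later `d_τ(dⱼ)`,
for all `τ ≠ 0`. To find such `dᵢ`, cut `b` spectrally into increments with continuous affine
trace values, smooth this sequence exponentially so that its terms decay slowly, and realise the
smoothed values by surjectivity of `Γ`. The smoothing loses an arbitrarily small proportion of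
`d_τ(b)`, which simplicity of the algebra allows: the strict inequality `d_τ(a) < d_τ(b)` improves
to `(n + 1) τ(f_ε(a)) ≤ n τ(f_δ(b))` uniformly in `τ` for every cutoff of `a`. Hence every cutoff
of `a` lies below a partial sum of `D`, and every partial sum of `D` lies below `b`. In both
comparisons the room in the tails of `D` permits correcting successive factorisations by unitaries
so that they converge, which gives `a ≾̃ D ≾̃ b`.
-/

/-! ### Closed right ideals -/

section ClosedRightIdeal

variable {V : Type*} [NonUnitalCStarAlgebra V]

/-- The closed right ideal generated by `b`, that is the closure of `b V`. -/
def closedRightIdeal (b : V) : Submodule ℂ V :=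
  (LinearMap.range (LinearMap.mulLeft ℂ b)).topologicalClosure

namespace closedRightIdeal

lemma isClosed (b : V) : IsClosed (closedRightIdeal b : Set V) :=
  Submodule.isClosed_topologicalClosure _

lemma base_mul_mem (b x : V) : b * x ∈ closedRightIdeal b :=
  Submodule.le_topologicalClosure _ ⟨x, rfl⟩

lemma induction {b : V} {p : V → Prop} (hp : IsClosed {x | p x}) (h : ∀ y, p (b * y))
    {x : V} (hx : x ∈ closedRightIdeal b) : p x := by
  have hx' : x ∈ closure (LinearMap.range (LinearMap.mulLeft ℂ b) : Set V) := hx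
  refine closure_minimal ?_ hp hx'
  rintro _ ⟨y, rfl⟩
  exact h y

lemma mul_mem {b x : V} (hx : x ∈ closedRightIdeal b) (w : V) : x * w ∈ closedRightIdeal b :=
  induction (p := fun x => x * w ∈ closedRightIdeal b)
    ((isClosed b).preimage (by fun_prop : Continuous fun x : V => x * w))
    (fun y => by rw [mul_assoc]; exact base_mul_mem b _) hx

lemma mul_eq_zero {b c x : V} (h : c * b = 0) (hx : x ∈ closedRightIdeal b) : c * x = 0 :=
  induction (p := fun x => c * x = 0) (isClosed_eq (by fun_prop) continuous_const)
    (fun y => by rw [← mul_assoc, h, zero_mul]) hx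

lemma le_of_mem {b b' : V} (h : b ∈ closedRightIdeal b') :
    closedRightIdeal b ≤ closedRightIdeal b' := fun _ hx =>
  induction (p := fun x => x ∈ closedRightIdeal b') (isClosed b') (fun y => mul_mem h y) hx

lemma exists_norm_sub_lt {b x : V} (hx : x ∈ closedRightIdeal b) {ε : ℝ} (hε : 0 < ε) :
    ∃ y, ‖x - b * y‖ < ε := by
  have hx' : x ∈ closure (LinearMap.range (LinearMap.mulLeft ℂ b) : Set V) := hx
  obtain ⟨_, ⟨y, rfl⟩, hy⟩ := Metric.mem_closure_iff.1 hx' ε hε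
  exact ⟨y, by simpa [dist_eq_norm] using hy⟩

lemma mul_star_mem_her {b x : V} (hb : IsSelfAdjoint b) (hx : x ∈ closedRightIdeal b) :
    x * star x ∈ her b := by
  refine induction (p := fun x => x * star x ∈ her b)
    (isClosed_closure.preimage (by fun_prop : Continuous fun x : V => x * star x))
    (fun y => subset_closure ⟨y * star y, ?_⟩) hx
  simp only [star_mul, hb.star_eq, mul_assoc]

end closedRightIdeal

/-- The hereditary C*-subalgebra of `b`, presented as the intersection of the closed right ideal
of `b` with its adjoint; for `0 ≤ b` its carrier is `her b`. -/
def hereditarySubalgebra (b : V) : NonUnitalStarSubalgebra ℂ V where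
  carrier := {x | x ∈ closedRightIdeal b ∧ star x ∈ closedRightIdeal b}
  add_mem' := fun ⟨hx, hx'⟩ ⟨hy, hy'⟩ => ⟨add_mem hx hy, by rw [star_add]; exact add_mem hx' hy'⟩
  zero_mem' := ⟨zero_mem _, by rw [star_zero]; exact zero_mem _⟩
  mul_mem' := fun ⟨hx, _⟩ ⟨_, hy'⟩ =>
    ⟨closedRightIdeal.mul_mem hx _, by rw [star_mul]; exact closedRightIdeal.mul_mem hy' _⟩
  smul_mem' := fun _ _ ⟨hx, hx'⟩ =>
    ⟨Submodule.smul_mem _ _ hx, by rw [star_smul]; exact Submodule.smul_mem _ _ hx'⟩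
  star_mem' := fun ⟨hx, hx'⟩ => ⟨hx', by rwa [star_star]⟩

lemma isClosed_hereditarySubalgebra (b : V) : IsClosed (hereditarySubalgebra b : Set V) :=
  (closedRightIdeal.isClosed b).inter ((closedRightIdeal.isClosed b).preimage continuous_star)

end ClosedRightIdeal

/-! ### The cut-off functions -/

section Cutoff

@[fun_prop]
lemma continuous_cutoff (ε : ℝ) : Continuous (cutoff ε) := by unfold cutoff; fun_prop

@[simp] lemma cutoff_zero (ε : ℝ) : cutoff ε 0 = 0 := by simp [cutoff]

lemma cutoff_nonneg (ε t : ℝ) : 0 ≤ cutoff ε t := by simp [cutoff]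

lemma cutoff_le_one (ε t : ℝ) : cutoff ε t ≤ 1 := by simp [cutoff]

lemma cutoff_eq_one {ε t : ℝ} (hε : 0 < ε) (h : ε ≤ t) : cutoff ε t = 1 := by
  refine min_eq_left (le_max_of_le_right ?_)
  rw [le_sub_iff_add_le, le_div_iff₀ hε]
  linarith

lemma cutoff_eq_zero {ε t : ℝ} (hε : 0 < ε) (h : t ≤ ε / 2) : cutoff ε t = 0 := by
  unfold cutoff
  rw [max_eq_left, min_eq_right zero_le_one]
  rw [sub_nonpos, div_le_one hε]
  linarith

lemma cutoff_le_mul {ε t : ℝ} (hε : 0 < ε) (ht : 0 ≤ t) : cutoff ε t ≤ 2 / ε * t := by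
  rcases le_total t (ε / 2) with h | h
  · rw [cutoff_eq_zero hε h]; positivity
  · refine (cutoff_le_one _ _).trans ?_
    rw [div_mul_eq_mul_div, le_div_iff₀ hε]
    linarith

lemma cutoff_le_cutoff {δ ε t : ℝ} (hδ : 0 < δ) (h : δ ≤ ε) (ht : 0 ≤ t) :
    cutoff ε t ≤ cutoff δ t := by
  unfold cutoff
  gcongr

lemma cutoff_mul_cutoff {δ ε t : ℝ} (hδ : 0 < δ) (h : δ ≤ ε / 2) :
    cutoff δ t * cutoff ε t = cutoff ε t := by
  rcases le_total t (ε / 2) with ht | ht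
  · rw [cutoff_eq_zero (by linarith) ht, mul_zero]
  · rw [cutoff_eq_one hδ (h.trans ht), one_mul]

lemma abs_sub_cutoff_mul_le {ε t : ℝ} (hε : 0 < ε) (ht : 0 ≤ t) : |t - cutoff ε t * t| ≤ ε := by
  have h₀ := cutoff_nonneg ε t
  have h₁ := cutoff_le_one ε t
  rcases le_total t ε with h | h
  · rw [abs_le]; constructor <;> nlinarith
  · rw [cutoff_eq_one hε h]; simp [hε.le]

variable {V : Type*} [NonUnitalCStarAlgebra V]

lemma isSelfAdjoint_fEps (ε : ℝ) (a : V) : IsSelfAdjoint (fEps ε a) := cfcₙ_predicate _ _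

@[simp] lemma star_fEps (ε : ℝ) (a : V) : star (fEps ε a) = fEps ε a :=
  (isSelfAdjoint_fEps ε a).star_eq

lemma norm_fEps_le_one (ε : ℝ) (a : V) : ‖fEps ε a‖ ≤ 1 :=
  norm_cfcₙ_le fun t _ => by
    rw [Real.norm_eq_abs, abs_of_nonneg (cutoff_nonneg ε t)]; exact cutoff_le_one ε t

lemma fEps_mul_fEps (a : V) {δ ε : ℝ} (hδ : 0 < δ) (h : δ ≤ ε / 2) :
    fEps δ a * fEps ε a = fEps ε a := by
  unfold fEps
  rw [← cfcₙ_mul ..]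
  exact cfcₙ_congr fun t _ => cutoff_mul_cutoff hδ h

lemma commute_fEps_fEps (a : V) (δ ε : ℝ) : Commute (fEps δ a) (fEps ε a) :=
  cfcₙ_commute_cfcₙ _ _ a

lemma commute_fEps_self {a : V} (ha : IsSelfAdjoint a) (ε : ℝ) : Commute (fEps ε a) a := by
  have h := cfcₙ_commute_cfcₙ (cutoff ε) (fun t => t) a
  rwa [cfcₙ_id' ℝ a ha] at h

lemma sub_fEps_mul_self {a : V} (ha : IsSelfAdjoint a) (ε : ℝ) :
    a - fEps ε a * a = cfcₙ (fun t : ℝ => t - cutoff ε t * t) a := by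
  rw [cfcₙ_sub .., cfcₙ_mul .., cfcₙ_id' ℝ a ha, fEps]

lemma cfcₙ_mem_closedRightIdeal {a b : V} (ha : IsSelfAdjoint a) (h : a ∈ closedRightIdeal b)
    (f : ℝ → ℝ) : cfcₙ f a ∈ closedRightIdeal b := by
  have hmem : a ∈ hereditarySubalgebra b := ⟨h, by rwa [ha.star_eq]⟩
  have := isClosed_hereditarySubalgebra b
  exact (cfcₙ_mem (𝕜' := ℂ) (s := hereditarySubalgebra b) f hmem).1

lemma fEps_mem_closedRightIdeal {a b : V} (ha : IsSelfAdjoint a) (h : a ∈ closedRightIdeal b)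
    (ε : ℝ) : fEps ε a ∈ closedRightIdeal b := cfcₙ_mem_closedRightIdeal ha h _

variable [PartialOrder V] [StarOrderedRing V]

lemma fEps_nonneg (ε : ℝ) (a : V) : 0 ≤ fEps ε a :=
  cfcₙ_nonneg fun t _ => cutoff_nonneg ε t

lemma norm_sub_fEps_mul_self_le {a : V} (ha : 0 ≤ a) {ε : ℝ} (hε : 0 < ε) :
    ‖a - fEps ε a * a‖ ≤ ε := by
  rw [sub_fEps_mul_self ha.isSelfAdjoint]
  exact norm_cfcₙ_le fun t ht =>
    abs_sub_cutoff_mul_le hε (quasispectrum_nonneg_of_nonneg a ha t ht)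

lemma fEps_le_fEps {a : V} (ha : 0 ≤ a) {δ ε : ℝ} (hδ : 0 < δ) (h : δ ≤ ε) :
    fEps ε a ≤ fEps δ a :=
  cfcₙ_mono fun t ht => cutoff_le_cutoff hδ h (quasispectrum_nonneg_of_nonneg a ha t ht)

lemma self_mem_closedRightIdeal {a : V} (ha : 0 ≤ a) : a ∈ closedRightIdeal a := by
  refine (closedRightIdeal.isClosed a).mem_of_tendsto
    (f := fun n : ℕ => fEps (1 / (n + 1)) a * a) (b := atTop) ?_ (Eventually.of_forall fun n => ?_)
  · rw [tendsto_iff_norm_sub_tendsto_zero]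
    refine squeeze_zero (fun _ => norm_nonneg _) (fun n => ?_)
      (tendsto_one_div_add_atTop_nhds_zero_nat (𝕜 := ℝ))
    rw [norm_sub_rev]
    exact norm_sub_fEps_mul_self_le ha (by positivity)
  · rw [(commute_fEps_self ha.isSelfAdjoint _).eq]
    exact closedRightIdeal.base_mul_mem _ _

@[simp] lemma star_sqrt (a : V) : star (CFC.sqrt a) = CFC.sqrt a := (CFC.sqrt_nonneg a).star_eq

lemma sqrt_mul_star_sqrt {a : V} (ha : 0 ≤ a) : CFC.sqrt a * star (CFC.sqrt a) = a := by
  rw [star_sqrt, CFC.sqrt_mul_sqrt_self a ha]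

lemma sqrt_mem_closedRightIdeal {a b : V} (ha : 0 ≤ a) (h : a ∈ closedRightIdeal b) :
    CFC.sqrt a ∈ closedRightIdeal b := by
  rw [CFC.sqrt_eq_real_sqrt a ha]
  exact cfcₙ_mem_closedRightIdeal ha.isSelfAdjoint h _

end Cutoff

/-! ### Compressions by `1 - E` -/

section ComplCompression

variable {V : Type*} [NonUnitalCStarAlgebra V]

/-- The compression `(1 - E) c (1 - E)`, expanded so that it makes sense without a unit. -/
def complCompression (E c : V) : V := c - E * c - c * E + E * c * E

lemma complCompression_sub (E b c : V) :
    complCompression E (b - c) = complCompression E b - complCompression E c := by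
  simp only [complCompression, mul_sub, sub_mul]
  abel

lemma complCompression_mul_star {E : V} (hE : IsSelfAdjoint E) (x : V) :
    complCompression E (x * star x) = (x - E * x) * star (x - E * x) := by
  rw [star_sub, star_mul, hE.star_eq, complCompression]
  noncomm_ring

lemma mul_complCompression_eq_zero {φ E : V} (h : φ * E = φ) (b : V) :
    φ * complCompression E b = 0 := by
  have hfactor : φ * complCompression E b = (φ - φ * E) * (b - b * E) := by
    unfold complCompression; noncomm_ring
  rw [hfactor, h, sub_self, zero_mul]

lemma complCompression_mem_closedRightIdeal {E b c : V} (hc : c ∈ closedRightIdeal b)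
    (hE : E ∈ closedRightIdeal b) : complCompression E c ∈ closedRightIdeal b :=
  add_mem (sub_mem (sub_mem hc (closedRightIdeal.mul_mem hE _))
    (closedRightIdeal.mul_mem hc _)) (by
      rw [mul_assoc]; exact closedRightIdeal.mul_mem hE _)

variable [PartialOrder V] [StarOrderedRing V]

lemma complCompression_eq_sqrt {E b : V} (hE : IsSelfAdjoint E) (hb : 0 ≤ b) :
    complCompression E b = (CFC.sqrt b - E * CFC.sqrt b) * star (CFC.sqrt b - E * CFC.sqrt b) := by
  rw [← complCompression_mul_star hE, sqrt_mul_star_sqrt hb]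

lemma complCompression_nonneg {E b : V} (hE : IsSelfAdjoint E) (hb : 0 ≤ b) :
    0 ≤ complCompression E b := by
  rw [complCompression_eq_sqrt hE hb]
  exact mul_star_self_nonneg _

lemma complCompression_mono {E b c : V} (hE : IsSelfAdjoint E) (h : b ≤ c) :
    complCompression E b ≤ complCompression E c := by
  rw [← sub_nonneg, ← complCompression_sub]
  exact complCompression_nonneg hE (sub_nonneg.2 h)

lemma norm_complCompression_fEps_le {e : V} (he : 0 ≤ e) {η : ℝ} (hη : 0 < η) :
    ‖complCompression (fEps η e) e‖ ≤ η := by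
  have hfactor : complCompression (fEps η e) e =
      (e - fEps η e * e) - fEps η e * (e - fEps η e * e) := by
    rw [complCompression, mul_assoc (fEps η e), ← (commute_fEps_self he.isSelfAdjoint η).eq]
    noncomm_ring
  rw [hfactor, sub_fEps_mul_self he.isSelfAdjoint, fEps, ← cfcₙ_mul .., ← cfcₙ_sub ..]
  refine norm_cfcₙ_le fun t ht => ?_
  have hcut := abs_sub_cutoff_mul_le hη (quasispectrum_nonneg_of_nonneg e he t ht)
  have h₀ := cutoff_nonneg η t
  have h₁ := cutoff_le_one η t
  rw [← one_sub_mul, Real.norm_eq_abs, abs_mul, abs_of_nonneg (by linarith)]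
  nlinarith [abs_nonneg (t - cutoff η t * t)]

lemma norm_sub_fEps_mul_sq_le {x e : V} (h : x * star x ≤ e) {η : ℝ} (hη : 0 < η) :
    ‖x - fEps η e * x‖ ^ 2 ≤ η := by
  have hE := isSelfAdjoint_fEps η e
  rw [pow_two, ← CStarRing.norm_self_mul_star, ← complCompression_mul_star hE]
  exact (CStarAlgebra.norm_le_norm_of_nonneg_of_le
    (complCompression_nonneg hE (mul_star_self_nonneg x)) (complCompression_mono hE h)).trans
    (norm_complCompression_fEps_le ((mul_star_self_nonneg x).trans h) hη)

lemma norm_sub_fEps_mul_le {x e : V} (h : x * star x ≤ e) {ε η : ℝ} (hε : 0 ≤ ε) (hη : 0 < η)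
    (hle : η ≤ ε ^ 2) : ‖x - fEps η e * x‖ ≤ ε :=
  le_of_sq_le_sq ((norm_sub_fEps_mul_sq_le h hη).trans hle) hε

lemma mem_closedRightIdeal_of_mul_star_le {x e : V} (h : x * star x ≤ e) :
    x ∈ closedRightIdeal e := by
  have he : 0 ≤ e := (mul_star_self_nonneg x).trans h
  have hclosure : x ∈ closure (closedRightIdeal e : Set V) := by
    rw [Metric.mem_closure_iff]
    intro ε hε
    refine ⟨fEps ((ε / 2) ^ 2) e * x, closedRightIdeal.mul_mem
      (fEps_mem_closedRightIdeal he.isSelfAdjoint (self_mem_closedRightIdeal he) _) _, ?_⟩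
    rw [dist_eq_norm]
    exact (norm_sub_fEps_mul_le h (half_pos hε).le (by positivity) le_rfl).trans_lt
      (half_lt_self hε)
  rwa [(closedRightIdeal.isClosed e).closure_eq] at hclosure

lemma mem_closedRightIdeal_of_le {p q : V} (hp : 0 ≤ p) (h : p ≤ q) : p ∈ closedRightIdeal q := by
  have hsqrt : CFC.sqrt p ∈ closedRightIdeal q :=
    mem_closedRightIdeal_of_mul_star_le (by rwa [sqrt_mul_star_sqrt hp])
  rw [← CFC.sqrt_mul_sqrt_self p hp]
  exact closedRightIdeal.mul_mem hsqrt _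

lemma sub_mul_mem_closedRightIdeal_complCompression {E b x : V} (hE : IsSelfAdjoint E)
    (hb : 0 ≤ b) (hx : x ∈ closedRightIdeal b) :
    x - E * x ∈ closedRightIdeal (complCompression E b) := by
  refine closedRightIdeal.induction
    (p := fun x => x - E * x ∈ closedRightIdeal (complCompression E b))
    ((closedRightIdeal.isClosed _).preimage (by fun_prop : Continuous fun x : V => x - E * x))
    (fun y => ?_) hx
  have hfactor : b * y - E * (b * y) =
      (CFC.sqrt b - E * CFC.sqrt b) * (CFC.sqrt b * y) := by
    conv_lhs => rw [← CFC.sqrt_mul_sqrt_self b hb]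
    noncomm_ring
  rw [hfactor, complCompression_eq_sqrt hE hb]
  exact closedRightIdeal.mul_mem (mem_closedRightIdeal_of_mul_star_le le_rfl) _

end ComplCompression

/-! ### Dimension functions -/

section DimensionFunction

variable {V : Type*} [NonUnitalCStarAlgebra V]

lemma commute_of_mul_eq_right {g x : V} (hg : IsSelfAdjoint g) (hx : IsSelfAdjoint x)
    (h : g * x = x) : Commute g x := (hg.commute_iff hx).2 (by rwa [h])

/-- A continuous function `k` vanishing at `0` with `k(t) t k(t) = f_δ(t)`, so that `f_δ(p)` is
`k(p) p k(p)`. -/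
def cutoffRoot (δ : ℝ) : ℝ → ℝ := fun t => √(cutoff δ t / max t (δ / 2))

lemma continuous_cutoffRoot {δ : ℝ} (hδ : 0 < δ) : Continuous (cutoffRoot δ) := by
  refine Real.continuous_sqrt.comp ((continuous_cutoff δ).div₀ (by fun_prop) fun t => ?_)
  exact (lt_max_of_lt_right (half_pos hδ)).ne'

@[simp] lemma cutoffRoot_zero (δ : ℝ) : cutoffRoot δ 0 = 0 := by simp [cutoffRoot]

lemma cutoffRoot_mul_mul_cutoffRoot {δ : ℝ} (hδ : 0 < δ) (t : ℝ) :
    cutoffRoot δ t * t * cutoffRoot δ t = cutoff δ t := by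
  have hmax : 0 < max t (δ / 2) := lt_max_of_lt_right (half_pos hδ)
  rw [mul_right_comm, cutoffRoot, Real.mul_self_sqrt (div_nonneg (cutoff_nonneg _ _) hmax.le)]
  rcases le_total t (δ / 2) with ht | ht
  · rw [cutoff_eq_zero hδ ht, zero_div, zero_mul]
  · rw [max_eq_left ht, div_mul_cancel₀ _ (by linarith)]

lemma cfcₙ_cutoffRoot_conj {p : V} (hp : IsSelfAdjoint p) {δ : ℝ} (hδ : 0 < δ) :
    cfcₙ (cutoffRoot δ) p * p * cfcₙ (cutoffRoot δ) p = fEps δ p := by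
  have hk := continuous_cutoffRoot hδ
  nth_rw 2 [← cfcₙ_id' ℝ p hp]
  rw [← cfcₙ_mul .., ← cfcₙ_mul ..]
  exact cfcₙ_congr fun t _ => cutoffRoot_mul_mul_cutoffRoot hδ t

variable [PartialOrder V]

lemma dTau_le (τ : QuasiTrace V) {a : V} {c : ℝ≥0∞}
    (h : ∀ δ : ℝ, 0 < δ → τ.toFun (fEps δ a) ≤ c) : dTau τ a ≤ c :=
  iSup_le fun _ => h _ (by positivity)

lemma dTau_zero (τ : QuasiTrace V) : dTau τ (0 : V) = 0 :=
  le_antisymm (dTau_le τ fun _ _ => by simp [fEps, cfcₙ_apply_zero, τ.map_zero]) bot_le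

variable [StarOrderedRing V]

lemma tendsto_fEps_mul {b x : V} (hb : 0 ≤ b) (hx : x ∈ closedRightIdeal b) :
    Tendsto (fun n : ℕ => fEps (1 / (n + 1)) b * x) atTop (𝓝 x) := by
  rw [Metric.tendsto_atTop']
  intro ε hε
  obtain ⟨y, hy⟩ := closedRightIdeal.exists_norm_sub_lt hx (show 0 < ε / 4 by positivity)
  have hsmall : Tendsto (fun n : ℕ => 1 / ((n : ℝ) + 1) * ‖y‖) atTop (𝓝 0) := by
    simpa only [zero_mul] using tendsto_one_div_add_atTop_nhds_zero_nat.mul_const ‖y‖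
  obtain ⟨N, hN⟩ := eventually_atTop.1 (hsmall.eventually_lt_const (show 0 < ε / 2 by positivity))
  refine ⟨N, fun n hn => ?_⟩
  set f := fEps (1 / ((n : ℝ) + 1)) b
  have hsplit : x - f * x = (x - b * y) + (b - f * b) * y - f * (x - b * y) := by noncomm_ring
  have hy₂ : ‖(b - f * b) * y‖ ≤ 1 / ((n : ℝ) + 1) * ‖y‖ := (norm_mul_le _ _).trans <|
    mul_le_mul_of_nonneg_right (norm_sub_fEps_mul_self_le hb (by positivity)) (norm_nonneg y)
  have hy₃ : ‖f * (x - b * y)‖ ≤ ‖x - b * y‖ := (norm_mul_le _ _).trans <|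
    mul_le_of_le_one_left (norm_nonneg _) (norm_fEps_le_one _ _)
  rw [dist_eq_norm, norm_sub_rev, hsplit]
  linarith [norm_sub_le ((x - b * y) + (b - f * b) * y) (f * (x - b * y)),
    norm_add_le (x - b * y) ((b - f * b) * y), hN n hn.le]

lemma conjugate_le_mul_self {c y : V} (hc : 0 ≤ c) (hc₁ : ‖c‖ ≤ 1) (hy : IsSelfAdjoint y) :
    y * c * y ≤ y * y := by
  have hconj := CStarAlgebra.star_left_conjugate_le_norm_smul (a := y) (b := c)
  have hyy : 0 ≤ y * y := by simpa only [hy.star_eq] using star_mul_self_nonneg y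
  rw [hy.star_eq] at hconj
  exact hconj.trans (by simpa only [one_smul] using smul_le_smul_of_nonneg_right hc₁ hyy)

lemma mul_self_le_of_norm_le_one {g : V} (hg : 0 ≤ g) (hg₁ : ‖g‖ ≤ 1) : g * g ≤ g := by
  have hsqrt := CFC.sqrt_mul_sqrt_self g hg
  have hconj := conjugate_le_mul_self hg hg₁ (CFC.sqrt_nonneg g).isSelfAdjoint
  have hg₂ : CFC.sqrt g * g * CFC.sqrt g = g * g := by
    nth_rw 2 [← hsqrt]
    rw [← mul_assoc, hsqrt, mul_assoc, hsqrt]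
  rwa [hg₂, hsqrt] at hconj

lemma le_of_mul_eq_right {g x : V} (hg : 0 ≤ g) (hx : 0 ≤ x) (hg₁ : ‖g‖ ≤ 1) (hx₁ : ‖x‖ ≤ 1)
    (h : g * x = x) : x ≤ g := by
  have hcomm := commute_of_mul_eq_right hg.isSelfAdjoint hx.isSelfAdjoint h
  have hconj := conjugate_le_mul_self hx hx₁ hg.isSelfAdjoint
  rw [h, ← hcomm.eq, h] at hconj
  exact hconj.trans (mul_self_le_of_norm_le_one hg hg₁)

namespace QuasiTrace

variable (τ : QuasiTrace V)

lemma mono_of_commute {x y : V} (hx : 0 ≤ x) (h : x ≤ y) (hc : Commute x y) :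
    τ.toFun x ≤ τ.toFun y := by
  have hadd := τ.map_add_of_commute x (y - x) hx (sub_nonneg.2 h)
    (by rw [mul_sub, sub_mul, hc.eq])
  rw [add_sub_cancel] at hadd
  exact hadd ▸ le_self_add

lemma fEps_anti {a : V} (ha : 0 ≤ a) {δ ε : ℝ} (hδ : 0 < δ) (h : δ ≤ ε) :
    τ.toFun (fEps ε a) ≤ τ.toFun (fEps δ a) :=
  τ.mono_of_commute (fEps_nonneg _ _) (fEps_le_fEps ha hδ h) (commute_fEps_fEps _ _ _)

lemma le_of_tendsto {t : V} {u : ℕ → V} {c : ℝ≥0∞} (hu : ∀ n, 0 ≤ u n)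
    (ht : Tendsto u atTop (𝓝 t)) (h : ∀ n, τ.toFun (u n) ≤ c) : τ.toFun t ≤ c := by
  by_contra! hc
  have hnear := τ.lowerSemicontinuousOn t (ge_of_tendsto' ht hu) c hc
  have hwithin : Tendsto u atTop (𝓝[{a : V | 0 ≤ a}] t) :=
    tendsto_nhdsWithin_iff.2 ⟨ht, Eventually.of_forall hu⟩
  obtain ⟨n, hn⟩ := (hwithin.eventually hnear).exists
  exact (h n).not_gt hn

end QuasiTrace

variable (τ : QuasiTrace V)

lemma toFun_fEps_le_dTau {a : V} (ha : 0 ≤ a) {ε : ℝ} (hε : 0 < ε) :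
    τ.toFun (fEps ε a) ≤ dTau τ a := by
  obtain ⟨n, hn⟩ := exists_nat_one_div_lt hε
  exact (τ.fEps_anti ha (by positivity) hn.le).trans
    (le_iSup (fun n : ℕ => τ.toFun (fEps (1 / (n + 1)) a)) n)

lemma dTau_le_toFun {g x : V} (hg : 0 ≤ g) (hg₁ : ‖g‖ ≤ 1) (hx : 0 ≤ x) (h : g * x = x) :
    dTau τ x ≤ τ.toFun g := by
  refine dTau_le τ fun δ _ => ?_
  have hfix : g * fEps δ x = fEps δ x :=
    closedRightIdeal.induction (p := fun y => g * y = y) (isClosed_eq (by fun_prop) continuous_id)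
      (fun y => by rw [← mul_assoc, h])
      (fEps_mem_closedRightIdeal hx.isSelfAdjoint (self_mem_closedRightIdeal hx) δ)
  exact τ.mono_of_commute (fEps_nonneg _ _)
    (le_of_mul_eq_right hg (fEps_nonneg _ _) hg₁ (norm_fEps_le_one _ _) hfix)
    (commute_of_mul_eq_right hg.isSelfAdjoint (isSelfAdjoint_fEps _ _) hfix).symm

lemma toFun_le_dTau {t b : V} (ht : 0 ≤ t) (hb : 0 ≤ b) (h : t ∈ closedRightIdeal b)
    (ht₁ : ‖t‖ ≤ 1) : τ.toFun t ≤ dTau τ b := by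
  set s := CFC.sqrt t
  have hs : s * star s = t := sqrt_mul_star_sqrt ht
  have hs₁ : ‖s‖ * ‖s‖ ≤ 1 := by rwa [← CStarRing.norm_self_mul_star, hs]
  have hlim := tendsto_fEps_mul hb (sqrt_mem_closedRightIdeal ht h)
  refine τ.le_of_tendsto (fun n => mul_star_self_nonneg _)
    (hs ▸ hlim.mul hlim.star) fun n => ?_
  set f := fEps (1 / ((n : ℝ) + 1)) b
  set g := fEps (1 / ((n : ℝ) + 1) / 2) b
  have hfix : g * (f * s * star (f * s)) = f * s * star (f * s) := by
    rw [← mul_assoc, ← mul_assoc, fEps_mul_fEps b (by positivity) le_rfl]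
  have hfs : ‖f * s‖ ≤ ‖s‖ := (norm_mul_le _ _).trans <|
    mul_le_of_le_one_left (norm_nonneg s) (norm_fEps_le_one _ _)
  have hfs₁ : ‖f * s * star (f * s)‖ ≤ 1 := by
    rw [CStarRing.norm_self_mul_star]
    exact (mul_self_le_mul_self (norm_nonneg _) hfs).trans hs₁
  calc τ.toFun (f * s * star (f * s)) ≤ τ.toFun g :=
        τ.mono_of_commute (mul_star_self_nonneg _)
          (le_of_mul_eq_right (fEps_nonneg _ _) (mul_star_self_nonneg _) (norm_fEps_le_one _ _)
            hfs₁ hfix)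
          (commute_of_mul_eq_right (isSelfAdjoint_fEps _ _) (.mul_star_self _) hfix).symm
    _ ≤ dTau τ b := toFun_fEps_le_dTau τ hb (by positivity)

lemma dTau_le_dTau {t b : V} (ht : 0 ≤ t) (hb : 0 ≤ b) (h : t ∈ closedRightIdeal b) :
    dTau τ t ≤ dTau τ b :=
  dTau_le τ fun δ _ => toFun_le_dTau τ (fEps_nonneg _ _) hb
    (fEps_mem_closedRightIdeal ht.isSelfAdjoint h δ) (norm_fEps_le_one _ _)

lemma dTau_mul_star_le (x : V) : dTau τ (x * star x) ≤ dTau τ (star x * x) := by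
  refine dTau_le τ fun δ hδ => ?_
  set k := cfcₙ (cutoffRoot δ) (x * star x)
  have hk : star k = k := (cfcₙ_predicate (R := ℝ) _ _ : IsSelfAdjoint k).star_eq
  have hfEps : fEps δ (x * star x) = (k * x) * star (k * x) := by
    rw [← cfcₙ_cutoffRoot_conj (.mul_star_self x) hδ, star_mul, hk]
    simp only [mul_assoc, k]
  have hnorm : ‖star (k * x) * (k * x)‖ ≤ 1 := by
    rw [CStarRing.norm_star_mul_self, ← CStarRing.norm_self_mul_star, ← hfEps]
    exact norm_fEps_le_one _ _
  have hstar : star x ∈ closedRightIdeal (star x * x) :=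
    mem_closedRightIdeal_of_mul_star_le (by rw [star_star])
  rw [hfEps, ← τ.map_star_mul_self]
  refine toFun_le_dTau τ (star_mul_self_nonneg _) (star_mul_self_nonneg _) ?_ hnorm
  rw [star_mul, mul_assoc]
  exact closedRightIdeal.mul_mem hstar _

lemma dTau_mul_star_eq (x : V) : dTau τ (x * star x) = dTau τ (star x * x) := by
  refine le_antisymm (dTau_mul_star_le τ x) ?_
  simpa only [star_star] using dTau_mul_star_le τ (star x)

lemma fEps_mul_fEps_eq_zero {x y : V} (hx : 0 ≤ x) (hy : 0 ≤ y) (h : x * y = 0) (δ ε : ℝ) :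
    fEps δ x * fEps ε y = 0 := by
  have hF := isSelfAdjoint_fEps δ x
  have hG := isSelfAdjoint_fEps ε y
  have hxG : x * fEps ε y = 0 := closedRightIdeal.mul_eq_zero h
    (fEps_mem_closedRightIdeal hy.isSelfAdjoint (self_mem_closedRightIdeal hy) _)
  have hGx : fEps ε y * x = 0 := by rw [← (hx.isSelfAdjoint.commute_of_mul_eq_zero hG hxG).eq, hxG]
  have hGF : fEps ε y * fEps δ x = 0 := closedRightIdeal.mul_eq_zero hGx
    (fEps_mem_closedRightIdeal hx.isSelfAdjoint (self_mem_closedRightIdeal hx) δ)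
  rw [← (hG.commute_of_mul_eq_zero hF hGF).eq, hGF]

lemma dTau_add_le_of_orthogonal_mem {x y b : V} (hx : 0 ≤ x) (hy : 0 ≤ y) (hb : 0 ≤ b)
    (h : x * y = 0) (hxb : x ∈ closedRightIdeal b) (hyb : y ∈ closedRightIdeal b) :
    dTau τ x + dTau τ y ≤ dTau τ b := by
  refine ENNReal.iSup_add_iSup_le fun m n => ?_
  set F := fEps (1 / ((m : ℝ) + 1)) x
  set G := fEps (1 / ((n : ℝ) + 1)) y
  have hF : IsSelfAdjoint F := isSelfAdjoint_fEps _ _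
  have hG : IsSelfAdjoint G := isSelfAdjoint_fEps _ _
  have hFG : F * G = 0 := fEps_mul_fEps_eq_zero hx hy h _ _
  have hnorm : ‖F + G‖ ≤ 1 := by
    rw [hF.norm_add_eq_max hG hFG]
    exact max_le (norm_fEps_le_one _ _) (norm_fEps_le_one _ _)
  rw [← τ.map_add_of_commute F G (fEps_nonneg _ _) (fEps_nonneg _ _)
    (hF.commute_of_mul_eq_zero hG hFG).eq]
  exact toFun_le_dTau τ (add_nonneg (fEps_nonneg _ _) (fEps_nonneg _ _)) hb
    (add_mem (fEps_mem_closedRightIdeal hx.isSelfAdjoint hxb _)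
      (fEps_mem_closedRightIdeal hy.isSelfAdjoint hyb _)) hnorm

lemma toFun_conj_le_dTau {p s k : V} (hp : 0 ≤ p) (hk : IsSelfAdjoint k) (hkp : Commute k p)
    (hs : k * p * k ≤ s) (hs₁ : ‖s‖ ≤ 1) : τ.toFun (k * p * k) ≤ dTau τ p := by
  have hpos : 0 ≤ k * p * k := by simpa only [hk.star_eq] using star_left_conjugate_nonneg hp k
  refine toFun_le_dTau τ hpos hp ?_
    ((CStarAlgebra.norm_le_norm_of_nonneg_of_le hpos hs).trans hs₁)
  rw [hkp.eq, mul_assoc]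
  exact closedRightIdeal.base_mul_mem _ _

lemma dTau_add_le_of_mul_eq_zero {p q : V} (hp : 0 ≤ p) (hq : 0 ≤ q) (h : p * q = 0) :
    dTau τ (p + q) ≤ dTau τ p + dTau τ q := by
  refine dTau_le τ fun δ hδ => ?_
  have hpq := hp.isSelfAdjoint.commute_of_mul_eq_zero hq.isSelfAdjoint h
  have hsum : IsSelfAdjoint (p + q) := hp.isSelfAdjoint.add hq.isSelfAdjoint
  set k := cfcₙ (cutoffRoot δ) (p + q)
  have hk : IsSelfAdjoint k := cfcₙ_predicate _ _
  have hcomm : ∀ c, Commute (p + q) c → Commute k c := fun c hc =>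
    Commute.cfcₙ hc (by rwa [hsum.star_eq]) _
  have hkp : Commute k p := hcomm p ((Commute.refl p).add_left hpq.symm)
  have hkq : Commute k q := hcomm q (hpq.add_left (Commute.refl q))
  have hkpk : 0 ≤ k * p * k := by simpa only [hk.star_eq] using star_left_conjugate_nonneg hp k
  have hkqk : 0 ≤ k * q * k := by simpa only [hk.star_eq] using star_left_conjugate_nonneg hq k
  have hfEps : fEps δ (p + q) = k * p * k + k * q * k := by
    rw [← cfcₙ_cutoffRoot_conj hsum hδ]
    noncomm_ring
  have hsum₁ : ‖k * p * k + k * q * k‖ ≤ 1 := hfEps ▸ norm_fEps_le_one _ _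
  have hcommute : Commute (k * p * k) (k * q * k) :=
    .mul_left (.mul_left (.mul_right (.mul_right (.refl k) hkq) (.refl k))
      (.mul_right (.mul_right hkp.symm hpq) hkp.symm))
      (.mul_right (.mul_right (.refl k) hkq) (.refl k))
  rw [hfEps, τ.map_add_of_commute _ _ hkpk hkqk hcommute.eq]
  exact add_le_add
    (toFun_conj_le_dTau τ hp hk hkp (le_add_of_nonneg_right hkqk) hsum₁)
    (toFun_conj_le_dTau τ hq hk hkq (le_add_of_nonneg_left hkpk) hsum₁)

lemma dTau_add_of_mul_eq_zero {p q : V} (hp : 0 ≤ p) (hq : 0 ≤ q) (h : p * q = 0) :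
    dTau τ (p + q) = dTau τ p + dTau τ q :=
  le_antisymm (dTau_add_le_of_mul_eq_zero τ hp hq h)
    (dTau_add_le_of_orthogonal_mem τ hp hq (add_nonneg hp hq) h
      (mem_closedRightIdeal_of_le hp (le_add_of_nonneg_right hq))
      (mem_closedRightIdeal_of_le hq (le_add_of_nonneg_left hp)))

end DimensionFunction

/-! ### Orthogonal isometries and subadditivity -/

section OrthogonalIsometries

variable {V : Type*} [NonUnitalCStarAlgebra V]

/-- `L i` acts as left multiplication by `s i`, where the `s i` are isometries with mutually
orthogonal ranges in the multiplier algebra; only the resulting inner products are recorded. -/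
def OrthogonalIsometries (L : ℕ → V → V) : Prop :=
  ∀ i j x y, star (L i x) * L j y = if i = j then star x * y else 0

variable [PartialOrder V] [StarOrderedRing V]

lemma add_mem_closedRightIdeal_mul_star (a c : V) :
    a + c ∈ closedRightIdeal (a * star a + c * star c) := by
  have hparallelogram : (a + c) * star (a + c) ≤
      (a * star a + c * star c) + (a * star a + c * star c) := by
    rw [← sub_nonneg]
    convert mul_star_self_nonneg (a - c) using 1
    rw [star_add, star_sub]
    noncomm_ring
  refine closedRightIdeal.le_of_mem ?_ (mem_closedRightIdeal_of_mul_star_le hparallelogram)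
  have hmem := self_mem_closedRightIdeal
    (add_nonneg (mul_star_self_nonneg a) (mul_star_self_nonneg c))
  exact add_mem hmem hmem

variable {L : ℕ → V → V} (τ : QuasiTrace V)

-- Rotate `p` and `q` to orthogonal positions: `p + q = x x*` for a row `x = (√p, √q)`, and
-- `x* x` is dominated by the corresponding diagonal.
lemma dTau_add_le (hL : OrthogonalIsometries L) {p q : V} (hp : 0 ≤ p) (hq : 0 ≤ q) :
    dTau τ (p + q) ≤ dTau τ p + dTau τ q := by
  obtain ⟨A, hA⟩ : ∃ A, A = L 0 (CFC.sqrt p) := ⟨_, rfl⟩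
  obtain ⟨B, hB⟩ : ∃ B, B = L 1 (CFC.sqrt q) := ⟨_, rfl⟩
  have hAA : star A * A = p := by
    rw [hA, hL, if_pos rfl, star_sqrt, CFC.sqrt_mul_sqrt_self p hp]
  have hBB : star B * B = q := by
    rw [hB, hL, if_pos rfl, star_sqrt, CFC.sqrt_mul_sqrt_self q hq]
  have hAB : star A * B = 0 := by rw [hA, hB, hL, if_neg zero_ne_one]
  have hBA : star B * A = 0 := by rw [hA, hB, hL, if_neg one_ne_zero]
  have hsum : star (A + B) * (A + B) = p + q := by
    rw [star_add, mul_add, add_mul, add_mul, hAA, hBB, hAB, hBA, add_zero, zero_add]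
  have hmem : (A + B) * star (A + B) ∈ closedRightIdeal (A * star A + B * star B) :=
    closedRightIdeal.mul_mem (add_mem_closedRightIdeal_mul_star A B) _
  have horth : A * star A * (B * star B) = 0 := by
    rw [mul_assoc, ← mul_assoc (star A), hAB, zero_mul, mul_zero]
  have hA₀ := mul_star_self_nonneg A
  have hB₀ := mul_star_self_nonneg B
  calc dTau τ (p + q) = dTau τ ((A + B) * star (A + B)) := by rw [← hsum, dTau_mul_star_eq]
    _ ≤ dTau τ (A * star A + B * star B) :=
        dTau_le_dTau τ (mul_star_self_nonneg _) (add_nonneg hA₀ hB₀) hmem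
    _ ≤ dTau τ (A * star A) + dTau τ (B * star B) := dTau_add_le_of_mul_eq_zero τ hA₀ hB₀ horth
    _ = dTau τ p + dTau τ q := by rw [dTau_mul_star_eq, dTau_mul_star_eq, hAA, hBB]

lemma dTau_sum_le (hL : OrthogonalIsometries L) {ι : Type*} (s : Finset ι) (p : ι → V)
    (hp : ∀ i ∈ s, 0 ≤ p i) : dTau τ (∑ i ∈ s, p i) ≤ ∑ i ∈ s, dTau τ (p i) := by
  classical
  induction s using Finset.induction_on with
  | empty => simp only [Finset.sum_empty, dTau_zero, le_refl]
  | insert i s hi ih =>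
    have hps : ∀ j ∈ s, 0 ≤ p j := fun j hj => hp j (Finset.mem_insert_of_mem hj)
    rw [Finset.sum_insert hi, Finset.sum_insert hi]
    exact (dTau_add_le τ hL (hp i (Finset.mem_insert_self _ _)) (Finset.sum_nonneg hps)).trans
      (add_le_add_right (ih hps) _)

lemma dTau_le_add_complCompression (hL : OrthogonalIsometries L) {b e : V} (hb : 0 ≤ b)
    (he : 0 ≤ e) (η : ℝ) : dTau τ b ≤ dTau τ e + dTau τ (complCompression (fEps η e) b) := by
  set E := fEps η e
  have hE : IsSelfAdjoint E := isSelfAdjoint_fEps _ _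
  have hEbE : 0 ≤ E * b * E := by simpa only [hE.star_eq] using star_left_conjugate_nonneg hb E
  have hsqrt : CFC.sqrt b ∈ closedRightIdeal (E * b * E + complCompression E b) := by
    have hmem := add_mem_closedRightIdeal_mul_star (E * CFC.sqrt b) (CFC.sqrt b - E * CFC.sqrt b)
    have hconj : E * CFC.sqrt b * star (E * CFC.sqrt b) = E * b * E := by
      rw [star_mul, star_sqrt, hE.star_eq, ← mul_assoc, mul_assoc E,
        CFC.sqrt_mul_sqrt_self b hb]
    rwa [add_sub_cancel, ← complCompression_eq_sqrt hE hb, hconj] at hmem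
  have hmem : b ∈ closedRightIdeal (E * b * E + complCompression E b) := by
    have h := closedRightIdeal.mul_mem hsqrt (CFC.sqrt b)
    rwa [CFC.sqrt_mul_sqrt_self b hb] at h
  have hle : dTau τ (E * b * E) ≤ dTau τ e := dTau_le_dTau τ hEbE he <|
    closedRightIdeal.mul_mem (closedRightIdeal.mul_mem
      (fEps_mem_closedRightIdeal he.isSelfAdjoint (self_mem_closedRightIdeal he) _) _) _
  calc dTau τ b ≤ dTau τ (E * b * E + complCompression E b) :=
        dTau_le_dTau τ hb (add_nonneg hEbE (complCompression_nonneg hE hb)) hmem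
    _ ≤ dTau τ (E * b * E) + dTau τ (complCompression E b) :=
        dTau_add_le τ hL hEbE (complCompression_nonneg hE hb)
    _ ≤ dTau τ e + dTau τ (complCompression E b) := by gcongr

end OrthogonalIsometries

/-! ### Unitaries near the identity of a hereditary subalgebra -/

section SquareRoot

variable {U : Type*} [CStarAlgebra U] [PartialOrder U] [StarOrderedRing U]

lemma norm_le_of_le_algebraMap {x : U} (hx : IsSelfAdjoint x) {c : ℝ} (hc : 0 ≤ c)
    (h₁ : x ≤ algebraMap ℝ U c) (h₂ : -algebraMap ℝ U c ≤ x) : ‖x‖ ≤ c := by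
  rw [← map_neg] at h₂
  have hle := (le_algebraMap_iff_spectrum_le hx).1 h₁
  have hge := (algebraMap_le_iff_le_spectrum hx).1 h₂
  rw [← cfc_id' ℝ x hx]
  exact norm_cfc_le hc fun t ht => abs_le.2 ⟨hge t ht, hle t ht⟩

lemma le_add_algebraMap_sqrt_norm {s t : U} (hs : 0 ≤ s) (ht : 0 ≤ t) :
    s ≤ t + algebraMap ℝ U √‖s * s - t * t‖ := by
  set c := ‖s * s - t * t‖
  have hsa : IsSelfAdjoint (s * s - t * t) := by
    simp [isSelfAdjoint_iff, hs.star_eq, ht.star_eq]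
  have hsq : s * s ≤ (t + algebraMap ℝ U √c) * (t + algebraMap ℝ U √c) := by
    have hexp : (t + algebraMap ℝ U √c) * (t + algebraMap ℝ U √c) =
        t * t + algebraMap ℝ U c + (√c • t + √c • t) := by
      have hc : algebraMap ℝ U c = algebraMap ℝ U √c * algebraMap ℝ U √c := by
        rw [← map_mul, Real.mul_self_sqrt (norm_nonneg _)]
      rw [hc]
      simp only [Algebra.algebraMap_eq_smul_one, mul_add, add_mul, smul_mul_assoc, one_mul,
        mul_smul_comm, mul_one, smul_add]
      abel
    have hle : s * s ≤ t * t + algebraMap ℝ U c :=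
      sub_le_iff_le_add'.1 hsa.le_algebraMap_norm_self
    have hnonneg : 0 ≤ √c • t := smul_nonneg c.sqrt_nonneg ht
    exact hexp ▸ hle.trans (le_add_of_nonneg_right (add_nonneg hnonneg hnonneg))
  have hr : 0 ≤ t + algebraMap ℝ U √c := add_nonneg ht (algebraMap_nonneg U c.sqrt_nonneg)
  simpa only [CFC.sqrt_mul_self s hs, CFC.sqrt_mul_self _ hr] using CFC.sqrt_le_sqrt _ _ hsq

lemma norm_sub_sq_le_norm_mul_self_sub {s t : U} (hs : 0 ≤ s) (ht : 0 ≤ t) :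
    ‖s - t‖ ^ 2 ≤ ‖s * s - t * t‖ := by
  have hst := le_add_algebraMap_sqrt_norm hs ht
  have hts := le_add_algebraMap_sqrt_norm ht hs
  rw [norm_sub_rev] at hts
  refine (Real.le_sqrt (norm_nonneg _) (norm_nonneg _)).1 <| norm_le_of_le_algebraMap
    (hs.isSelfAdjoint.sub ht.isSelfAdjoint) (Real.sqrt_nonneg _) (sub_le_iff_le_add'.2 hst) ?_
  rwa [neg_le_sub_iff_le_add]

lemma exists_unitary_mul_sqrt_eq (S : StarSubalgebra ℂ U) [IsClosed (S : Set U)] {g : U}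
    (hg : g ∈ S) (hg' : IsUnit g) :
    ∃ u ∈ unitary U, u ∈ S ∧ u * CFC.sqrt (star g * g) = g := by
  have hgg : 0 ≤ star g * g := star_mul_self_nonneg g
  have hs : CFC.sqrt (star g * g) ∈ S := by
    rw [CFC.sqrt_eq_real_sqrt _ hgg]
    exact cfcₙ_mem (𝕜' := ℂ) (s := S) _ (mul_mem (star_mem hg) hg)
  have hunit : IsUnit (⟨_, hs⟩ : S) :=
    S.coe_isUnit.1 ((CFC.isUnit_sqrt_iff _ hgg).2 (hg'.star.mul hg'))
  obtain ⟨w, hw⟩ := hunit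
  let sUnit : Uˣ := Units.map (S.subtype : S →* U) w
  have hsUnit : (sUnit : U) = CFC.sqrt (star g * g) := congrArg Subtype.val hw
  refine ⟨hg'.unit * ↑sUnit⁻¹, (Units.mul_inv_mem_unitary _ _).2 ?_,
    mul_mem hg (↑w⁻¹ : S).2, ?_⟩
  · ext
    simp only [Units.val_mul, Units.coe_star, hsUnit, IsUnit.unit_spec, star_sqrt,
      CFC.sqrt_mul_sqrt_self _ hgg]
  · rw [← hsUnit, IsUnit.unit_spec, Units.inv_mul_cancel_right]

end SquareRoot
section IsUnitaryIncrement

variable {V : Type*} [NonUnitalCStarAlgebra V]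

/-- The unitization of `hereditarySubalgebra b`, as a subalgebra of the unitization of `V`. -/
def hereditaryUnitization (b : V) : StarSubalgebra ℂ (Unitization ℂ V) where
  carrier := {m | m.snd ∈ hereditarySubalgebra b}
  add_mem' := fun hx hy => by
    rw [Set.mem_ofPred_eq, Unitization.snd_add]
    exact add_mem hx hy
  mul_mem' := fun hx hy => by
    rw [Set.mem_ofPred_eq, Unitization.snd_mul]
    exact add_mem (add_mem (SMulMemClass.smul_mem _ hy) (SMulMemClass.smul_mem _ hx))
      (mul_mem hx hy)
  algebraMap_mem' := fun r => by
    rw [Set.mem_ofPred_eq, Unitization.algebraMap_eq_inl, Unitization.snd_inl]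
    exact zero_mem _
  star_mem' := fun hx => by
    rw [Set.mem_ofPred_eq, Unitization.snd_star]
    exact star_mem hx

instance isClosed_hereditaryUnitization (b : V) :
    IsClosed (hereditaryUnitization b : Set (Unitization ℂ V)) :=
  (isClosed_hereditarySubalgebra b).preimage Unitization.continuous_snd

lemma inr_mem_hereditaryUnitization {b x : V} (h : x ∈ hereditarySubalgebra b) :
    (x : Unitization ℂ V) ∈ hereditaryUnitization b := h

/-- The invertible elements with positive scalar part in the unitization of the hereditary
subalgebra of `b`. Fixing the phase of the scalar part makes their polar unitaries lie in
`1 + hereditarySubalgebra b`. -/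
def positiveScalarUnits (b : V) : Set (Unitization ℂ V) :=
  {g | g ∈ hereditaryUnitization b ∧ IsUnit g ∧ ∃ r : ℝ, 0 < r ∧ g.fst = (r : ℂ)}

/-- `1 + v` is a unitary in the unitization of the hereditary subalgebra of `b`; it acts on `V` by
`x ↦ x + v * x`. Stated in terms of `v` so as to stay inside the non-unital algebra `V`. -/
structure IsUnitaryIncrement (b v : V) : Prop where
  mem : v ∈ hereditarySubalgebra b
  star_mul_self : v + star v + star v * v = 0
  mul_star_self : v + star v + v * star v = 0

lemma star_one_add_mul_one_add (v : V) :
    star (1 + (v : Unitization ℂ V)) * (1 + (v : Unitization ℂ V)) =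
      1 + ((v + star v + star v * v : V) : Unitization ℂ V) := by
  simp only [star_add, star_one, ← Unitization.inr_star, Unitization.inr_add, Unitization.inr_mul]
  noncomm_ring

lemma isUnitaryIncrement_iff {b v : V} : IsUnitaryIncrement b v ↔
    v ∈ hereditarySubalgebra b ∧ (1 + v : Unitization ℂ V) ∈ unitary (Unitization ℂ V) := by
  have hiff (w : V) : 1 + (w : Unitization ℂ V) = 1 ↔ w = 0 := by
    rw [add_eq_left, ← Unitization.inr_zero ℂ, Unitization.inr_injective.eq_iff]
  have hr : (1 + (v : Unitization ℂ V)) * star (1 + (v : Unitization ℂ V)) =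
      1 + ((v + star v + v * star v : V) : Unitization ℂ V) := by
    have h := star_one_add_mul_one_add (star v)
    rwa [Unitization.inr_star, ← star_one, ← star_add, star_star, star_one, star_star,
      add_comm (star v)] at h
  rw [Unitary.mem_iff, star_one_add_mul_one_add, hr, hiff, hiff]
  exact ⟨fun h => ⟨h.1, h.2, h.3⟩, fun h => ⟨h.1, h.2.1, h.2.2⟩⟩

namespace IsUnitaryIncrement

variable {b v : V}

lemma zero (b : V) : IsUnitaryIncrement b 0 := ⟨zero_mem _, by simp, by simp⟩

lemma star_act_mul_act (h : IsUnitaryIncrement b v) (x y : V) :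
    star (x + v * x) * (y + v * y) = star x * y := by
  have hexp : star (x + v * x) * (y + v * y) =
      star x * y + star x * (v + star v + star v * v) * y := by
    rw [star_add, star_mul]
    noncomm_ring
  rw [hexp, h.star_mul_self, mul_zero, zero_mul, add_zero]

lemma norm_act (h : IsUnitaryIncrement b v) (x : V) : ‖x + v * x‖ = ‖x‖ := by
  refine (mul_self_inj_of_nonneg (norm_nonneg _) (norm_nonneg _)).1 ?_
  rw [← CStarRing.norm_star_mul_self, h.star_act_mul_act, CStarRing.norm_star_mul_self]

lemma act_mem (h : IsUnitaryIncrement b v) {x : V} (hx : x ∈ closedRightIdeal b) :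
    x + v * x ∈ closedRightIdeal b :=
  add_mem hx (closedRightIdeal.mul_mem h.mem.1 _)

protected lemma star (h : IsUnitaryIncrement b v) : IsUnitaryIncrement b (star v) :=
  ⟨star_mem h.mem, by rw [star_star, add_comm (star v), h.mul_star_self],
    by rw [star_star, add_comm (star v), h.star_mul_self]⟩

lemma star_act_act (h : IsUnitaryIncrement b v) (x : V) :
    (x + v * x) + star v * (x + v * x) = x := by
  have hexp : (x + v * x) + star v * (x + v * x) = x + (v + star v + star v * v) * x := by
    noncomm_ring
  rw [hexp, h.star_mul_self, zero_mul, add_zero]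

lemma comp (h : IsUnitaryIncrement b v) {w : V} (hw : IsUnitaryIncrement b w) :
    IsUnitaryIncrement b (v + w + v * w) := by
  have hprod : (1 + ((v + w + v * w : V) : Unitization ℂ V)) = (1 + v) * (1 + w) := by
    simp only [Unitization.inr_add, Unitization.inr_mul]
    noncomm_ring
  refine isUnitaryIncrement_iff.2
    ⟨add_mem (add_mem h.mem hw.mem) (mul_mem h.mem hw.mem), ?_⟩
  rw [hprod]
  exact mul_mem (isUnitaryIncrement_iff.1 h).2 (isUnitaryIncrement_iff.1 hw).2

lemma mono (h : IsUnitaryIncrement b v) {b' : V} (hb : b ∈ closedRightIdeal b') :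
    IsUnitaryIncrement b' v :=
  ⟨⟨closedRightIdeal.le_of_mem hb h.mem.1, closedRightIdeal.le_of_mem hb h.mem.2⟩,
    h.star_mul_self, h.mul_star_self⟩

end IsUnitaryIncrement

lemma comp_act (v w x : V) :
    x + (v + w + v * w) * x = (x + w * x) + v * (x + w * x) := by
  noncomm_ring

lemma exists_fst_eq_of_nonneg {s : Unitization ℂ V} (hs : 0 ≤ s) :
    ∃ c : ℝ, 0 ≤ c ∧ s.fst = (c : ℂ) := by
  refine ⟨Complex.normSq (CFC.sqrt s).fst, Complex.normSq_nonneg _, ?_⟩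
  rw [Complex.normSq_eq_conj_mul_self, starRingEnd_apply, ← Unitization.fst_star,
    ← Unitization.fst_mul, star_sqrt, CFC.sqrt_mul_sqrt_self s hs]

lemma fst_sqrt_star_mul_self {g : Unitization ℂ V} {r : ℝ} (hr : 0 ≤ r) (hg : g.fst = (r : ℂ)) :
    (CFC.sqrt (star g * g)).fst = (r : ℂ) := by
  obtain ⟨c, hc, hfst⟩ := exists_fst_eq_of_nonneg (CFC.sqrt_nonneg (star g * g))
  have hsq := congrArg (·.fst) (CFC.sqrt_mul_sqrt_self _ (star_mul_self_nonneg g))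
  rw [Unitization.fst_mul, Unitization.fst_mul, Unitization.fst_star, hfst, hg, Complex.star_def,
    Complex.conj_ofReal] at hsq
  rw [hfst, (mul_self_inj_of_nonneg hc hr).1 (by exact_mod_cast hsq)]

lemma exists_isUnitaryIncrement_mul_sqrt_eq {b : V} {g : Unitization ℂ V}
    (hg : g ∈ positiveScalarUnits b) :
    ∃ v, IsUnitaryIncrement b v ∧
      ((1 : Unitization ℂ V) + v) * CFC.sqrt (star g * g) = g := by
  obtain ⟨hgA, hg_unit, r, hr, hgr⟩ := hg
  obtain ⟨u, hu, huA, hug⟩ := exists_unitary_mul_sqrt_eq (hereditaryUnitization b) hgA hg_unit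
  have hfst : u.fst = 1 := by
    have h := congrArg (·.fst) hug
    rw [Unitization.fst_mul, fst_sqrt_star_mul_self hr.le hgr, hgr] at h
    exact (mul_eq_right₀ (by exact_mod_cast hr.ne')).1 h
  have hdec : u = 1 + (u.snd : Unitization ℂ V) := by
    conv_lhs => rw [← Unitization.inl_fst_add_inr_snd_eq u, hfst, Unitization.inl_one]
  rw [hdec] at hu hug
  exact ⟨u.snd, isUnitaryIncrement_iff.2 ⟨huA, hu⟩, hug⟩

end IsUnitaryIncrement

/-! ### Approximate unitary equivalence -/

section UnitaryApproximation

variable {V : Type*} [NonUnitalCStarAlgebra V]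

lemma norm_pow_four (T : V) : ‖T * (star T * T) * star T‖ = ‖T‖ ^ 4 := by
  have hassoc : T * (star T * T) * star T = star (T * star T) * (T * star T) := by
    rw [star_mul, star_star]
    noncomm_ring
  rw [hassoc, CStarRing.norm_star_mul_self, CStarRing.norm_self_mul_star]
  ring

lemma norm_mul_mul_star_le (x T : V) : ‖T * x * star T‖ ≤ ‖x‖ * ‖T‖ ^ 2 :=
  calc ‖T * x * star T‖ ≤ ‖T‖ * ‖x‖ * ‖star T‖ := norm_mul₃_le
    _ = ‖x‖ * ‖T‖ ^ 2 := by rw [norm_star]; ring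

lemma norm_act_sub_mul_star_le {b v X Y : V} {g : Unitization ℂ V}
    (hv : IsUnitaryIncrement b v) (hg : ((1 : Unitization ℂ V) + v) * CFC.sqrt (star g * g) = g) :
    ‖(Y + v * Y - X) * star Y‖ ≤
      ‖(Y : Unitization ℂ V) * star (Y : Unitization ℂ V) - CFC.sqrt (star g * g)‖ +
        ‖(X : Unitization ℂ V) * star (Y : Unitization ℂ V) - g‖ := by
  have hexp : (((Y + v * Y - X) * star Y : V) : Unitization ℂ V) =
      (1 + v) * (Y * star (Y : Unitization ℂ V) - CFC.sqrt (star g * g)) -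
        (X * star (Y : Unitization ℂ V) - g) := by
    rw [mul_sub, hg]
    simp only [Unitization.inr_mul, Unitization.inr_sub, Unitization.inr_add, Unitization.inr_star]
    noncomm_ring
  rw [← Unitization.norm_inr (𝕜 := ℂ), hexp]
  refine (norm_sub_le _ _).trans_eq ?_
  rw [CStarRing.norm_mem_unitary_mul _ (isUnitaryIncrement_iff.1 hv).2]

variable [PartialOrder V] [StarOrderedRing V]

lemma star_sub_mul_sub_le (Z X : V) :
    star (Z - X) * (Z - X) ≤ (4 : ℕ) • (star Z * Z) + (2 : ℕ) • (star X * X - star Z * Z) := by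
  have hexp : (4 : ℕ) • (star Z * Z) + (2 : ℕ) • (star X * X - star Z * Z) -
      star (Z - X) * (Z - X) = star (Z + X) * (Z + X) := by
    rw [star_sub, star_add]
    noncomm_ring
  rw [← sub_nonneg, hexp]
  exact star_mul_self_nonneg _

lemma norm_act_sub_pow_four_le {b v X Y : V} (hv : IsUnitaryIncrement b v) :
    ‖Y + v * Y - X‖ ^ 4 ≤ 4 * ‖(Y + v * Y - X) * star Y‖ ^ 2 +
      2 * ‖star X * X - star Y * Y‖ * ‖Y + v * Y - X‖ ^ 2 := by
  set T := Y + v * Y - X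
  have hT : star T * T ≤ (4 : ℕ) • (star Y * Y) + (2 : ℕ) • (star X * X - star Y * Y) := by
    simpa only [hv.star_act_mul_act] using star_sub_mul_sub_le (Y + v * Y) X
  have hexp : T * ((4 : ℕ) • (star Y * Y) + (2 : ℕ) • (star X * X - star Y * Y)) * star T =
      (4 : ℕ) • (T * star Y * star (T * star Y)) +
        (2 : ℕ) • (T * (star X * X - star Y * Y) * star T) := by
    rw [star_mul, star_star]
    noncomm_ring
  calc ‖T‖ ^ 4 = ‖T * (star T * T) * star T‖ := (norm_pow_four T).symm
    _ ≤ ‖T * ((4 : ℕ) • (star Y * Y) + (2 : ℕ) • (star X * X - star Y * Y)) * star T‖ :=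
      CStarAlgebra.norm_le_norm_of_nonneg_of_le
        (star_right_conjugate_nonneg (star_mul_self_nonneg _) _)
        (star_right_conjugate_le_conjugate hT T)
    _ ≤ 4 * ‖T * star Y * star (T * star Y)‖ +
        2 * ‖T * (star X * X - star Y * Y) * star T‖ := by
      rw [hexp]
      exact (norm_add_le _ _).trans (add_le_add (norm_nsmul_le ..) (norm_nsmul_le ..))
    _ ≤ 4 * ‖T * star Y‖ ^ 2 + 2 * ‖star X * X - star Y * Y‖ * ‖T‖ ^ 2 := by
      rw [CStarRing.norm_self_mul_star, ← sq, mul_assoc 2]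
      gcongr
      exact norm_mul_mul_star_le _ _

lemma norm_sub_sqrt_sq_le {U : Type*} [CStarAlgebra U] [PartialOrder U] [StarOrderedRing U]
    {x y g : U} {M γ : ℝ} (hx : ‖x‖ ≤ M) (hy : ‖y‖ ≤ M) (hg : ‖x * star y - g‖ ≤ γ) :
    ‖y * star y - CFC.sqrt (star g * g)‖ ^ 2 ≤
      ‖star x * x - star y * y‖ * M ^ 2 + γ * (2 * M ^ 2 + γ) := by
  have hM : 0 ≤ M := (norm_nonneg x).trans hx
  have hγ : 0 ≤ γ := (norm_nonneg _).trans hg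
  have hxy : ‖x * star y‖ ≤ M ^ 2 := by
    rw [sq, ← norm_star y] at *
    exact (norm_mul_le _ _).trans (mul_le_mul hx hy (norm_nonneg _) hM)
  have hg_norm : ‖g‖ ≤ M ^ 2 + γ := by linarith [norm_le_norm_add_norm_sub (x * star y) g]
  have hexp : y * star y * (y * star y) - star g * g =
      -(y * (star x * x - star y * y) * star y) +
        (star (x * star y) * (x * star y - g) + star (x * star y - g) * g) := by
    rw [star_sub, star_mul, star_star]
    noncomm_ring
  refine (norm_sub_sq_le_norm_mul_self_sub (mul_star_self_nonneg y) (CFC.sqrt_nonneg _)).trans ?_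
  rw [CFC.sqrt_mul_sqrt_self _ (star_mul_self_nonneg g), hexp]
  refine (norm_add_le _ _).trans (add_le_add ?_ ((norm_add_le _ _).trans ?_))
  · rw [norm_neg]
    exact (norm_mul_mul_star_le _ _).trans (by gcongr)
  · calc ‖star (x * star y) * (x * star y - g)‖ + ‖star (x * star y - g) * g‖
        ≤ ‖x * star y‖ * ‖x * star y - g‖ + ‖x * star y - g‖ * ‖g‖ := by
          simpa only [norm_star] using add_le_add (norm_mul_le (star (x * star y)) _)
            (norm_mul_le (star (x * star y - g)) _)
      _ ≤ M ^ 2 * γ + γ * (M ^ 2 + γ) := by gcongr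
      _ = γ * (2 * M ^ 2 + γ) := by ring

lemma exists_norm_act_sub_pow_four_lt {b X Y : V} {M D B : ℝ} (hX : ‖X‖ ≤ M) (hY : ‖Y‖ ≤ M)
    (hD : ‖star X * X - star Y * Y‖ ≤ D) (hB : 12 * M ^ 2 * D < B)
    (hXY : ((X * star Y : V) : Unitization ℂ V) ∈ closure (positiveScalarUnits b)) :
    ∃ v, IsUnitaryIncrement b v ∧ ‖Y + v * Y - X‖ ^ 4 < B := by
  have hD₀ : 0 ≤ D := (norm_nonneg _).trans hD
  have hlim : Tendsto
      (fun γ : ℝ => 4 * (√(D * M ^ 2 + γ * (2 * M ^ 2 + γ)) + γ) ^ 2 + 2 * D * (2 * M) ^ 2)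
      (𝓝[>] 0) (𝓝 (12 * M ^ 2 * D)) := by
    refine tendsto_nhdsWithin_of_tendsto_nhds (Continuous.tendsto' (by fun_prop) _ _ ?_)
    rw [zero_mul, add_zero, add_zero, Real.sq_sqrt (by positivity)]
    ring
  obtain ⟨γ, hγB, hγ⟩ := ((hlim.eventually_lt_const hB).and self_mem_nhdsWithin).exists
  obtain ⟨g, hg, hgz⟩ := Metric.mem_closure_iff.1 hXY γ hγ
  obtain ⟨v, hv, hpolar⟩ := exists_isUnitaryIncrement_mul_sqrt_eq hg
  refine ⟨v, hv, lt_of_le_of_lt ?_ hγB⟩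
  rw [dist_eq_norm, Unitization.inr_mul, Unitization.inr_star] at hgz
  have hD' : ‖star (X : Unitization ℂ V) * X - star (Y : Unitization ℂ V) * Y‖ ≤ D := by
    simpa only [← Unitization.inr_star, ← Unitization.inr_mul, ← Unitization.inr_sub,
      Unitization.norm_inr] using hD
  have hsqrt : ‖(Y : Unitization ℂ V) * star (Y : Unitization ℂ V) - CFC.sqrt (star g * g)‖ ≤
      √(D * M ^ 2 + γ * (2 * M ^ 2 + γ)) := by
    refine Real.le_sqrt_of_sq_le ((norm_sub_sqrt_sq_le (M := M) ?_ ?_ hgz.le).trans ?_)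
    · rwa [Unitization.norm_inr]
    · rwa [Unitization.norm_inr]
    · gcongr
  have hT : ‖Y + v * Y - X‖ ≤ 2 * M := by
    linarith [norm_sub_le (Y + v * Y) X, hv.norm_act Y]
  refine (norm_act_sub_pow_four_le hv).trans ?_
  gcongr
  exact (norm_act_sub_mul_star_le hv hpolar).trans (add_le_add hsqrt hgz.le)

lemma exists_norm_act_sub_lt (V : Type*) [NonUnitalCStarAlgebra V] [PartialOrder V]
    [StarOrderedRing V] (M : ℝ) {ε : ℝ} (hε : 0 < ε) :
    ∃ δ > 0, ∀ b X Y : V, ‖X‖ ≤ M → ‖Y‖ ≤ M → ‖star X * X - star Y * Y‖ ≤ δ →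
      ((X * star Y : V) : Unitization ℂ V) ∈ closure (positiveScalarUnits b) →
      ∃ v, IsUnitaryIncrement b v ∧ ‖Y + v * Y - X‖ < ε := by
  refine ⟨ε ^ 4 / (12 * M ^ 2 + 1), by positivity, fun b X Y hX hY hD hXY => ?_⟩
  have hB : 12 * M ^ 2 * (ε ^ 4 / (12 * M ^ 2 + 1)) < ε ^ 4 := by
    rw [mul_div_assoc', div_lt_iff₀ (by positivity)]
    linarith [pow_pos hε 4, mul_comm (12 * M ^ 2) (ε ^ 4)]
  obtain ⟨v, hv, hlt⟩ := exists_norm_act_sub_pow_four_lt hX hY hD hB hXY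
  exact ⟨v, hv, lt_of_pow_lt_pow_left₀ 4 hε.le hlt⟩

lemma mem_closure_positiveScalarUnits_of_mul_self_eq_zero {V : Type*} [NonUnitalCStarAlgebra V]
    {b z : V} (hz : z ∈ hereditarySubalgebra b) (h : z * z = 0) :
    (z : Unitization ℂ V) ∈ closure (positiveScalarUnits b) := by
  have hnil : IsNilpotent (z : Unitization ℂ V) :=
    ⟨2, by rw [sq, ← Unitization.inr_mul, h, Unitization.inr_zero]⟩
  refine Metric.mem_closure_iff.2 fun ε hε => ?_
  have hc : ((ε / 2 : ℝ) : ℂ) ≠ 0 := by exact_mod_cast (half_pos hε).ne'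
  refine ⟨algebraMap ℂ _ ((ε / 2 : ℝ) : ℂ) + z,
    ⟨add_mem (algebraMap_mem _ _) (inr_mem_hereditaryUnitization hz), ?_, ε / 2, half_pos hε, ?_⟩,
    ?_⟩
  · exact hnil.isUnit_add_left_of_commute ((isUnit_iff_ne_zero.2 hc).map _)
      (Algebra.commute_algebraMap_right _ _)
  · rw [Unitization.fst_add, Unitization.algebraMap_eq_inl, Unitization.fst_inl,
      Unitization.fst_inr, add_zero]
  · rw [dist_eq_norm, sub_add_cancel_right, norm_neg, norm_algebraMap', Complex.norm_real,
      Real.norm_of_nonneg (half_pos hε).le]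
    exact half_lt_self hε

lemma mul_star_mem_hereditarySubalgebra {V : Type*} [NonUnitalCStarAlgebra V] {b x y : V}
    (hx : x ∈ closedRightIdeal b) (hy : y ∈ closedRightIdeal b) :
    x * star y ∈ hereditarySubalgebra b :=
  ⟨closedRightIdeal.mul_mem hx _, by
    rw [star_mul, star_star]
    exact closedRightIdeal.mul_mem hy _⟩

lemma exists_norm_act_sub_lt_of_orthogonal (V : Type*) [NonUnitalCStarAlgebra V] [PartialOrder V]
    [StarOrderedRing V] (M : ℝ) {ε : ℝ} (hε : 0 < ε) :
    ∃ δ > 0, ∀ b x y : V, x ∈ closedRightIdeal b → y ∈ closedRightIdeal b → ‖x‖ ≤ M → ‖y‖ ≤ M →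
      ‖star x * x - star y * y‖ ≤ δ → star x * y = 0 →
      ∃ v, IsUnitaryIncrement b v ∧ ‖x + v * x - y‖ < ε := by
  obtain ⟨δ, hδ, h⟩ := exists_norm_act_sub_lt V M hε
  refine ⟨δ, hδ, fun b x y hx hy hxM hyM hxy horth =>
    h b y x hyM hxM ((norm_sub_rev _ _).trans_le hxy) ?_⟩
  refine mem_closure_positiveScalarUnits_of_mul_self_eq_zero
    (mul_star_mem_hereditarySubalgebra hy hx) ?_
  rw [mul_assoc, ← mul_assoc (star x), horth, zero_mul, mul_zero]

lemma norm_conj_fEps_sub_le {p z : V} (hp : 0 ≤ p) {η : ℝ} (hη : 0 < η) :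
    ‖fEps η p * z * fEps η p - p‖ ≤ ‖p - z‖ + 2 * η := by
  set e := fEps η p
  have he : ‖e‖ ≤ 1 := norm_fEps_le_one _ _
  have hep : ‖p - e * p‖ ≤ η := norm_sub_fEps_mul_self_le hp hη
  have hexp : e * z * e - p = -(e * (p - z) * e) - (p - e * p) - e * star (p - e * p) := by
    rw [star_sub, star_mul, star_fEps, hp.star_eq]
    noncomm_ring
  have hconj : ‖e * (p - z) * e‖ ≤ ‖p - z‖ :=
    calc ‖e * (p - z) * e‖ ≤ ‖e‖ * ‖p - z‖ * ‖e‖ := norm_mul₃_le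
      _ ≤ 1 * ‖p - z‖ * 1 := by gcongr
      _ = ‖p - z‖ := by rw [one_mul, mul_one]
  have hstar : ‖e * star (p - e * p)‖ ≤ η :=
    calc ‖e * star (p - e * p)‖ ≤ ‖e‖ * ‖p - e * p‖ := by
          simpa only [norm_star] using norm_mul_le e (star (p - e * p))
      _ ≤ 1 * η := by gcongr
      _ = η := one_mul η
  rw [hexp]
  refine (norm_sub_le _ _).trans ((add_le_add_left (norm_sub_le _ _) _).trans ?_)
  rw [norm_neg]
  linarith

lemma CuntzLE.exists_norm_star_mul_self_sub_lt {p q : V} (hp : 0 ≤ p) (hq : 0 ≤ q)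
    (h : CuntzLE p q) {δ : ℝ} (hδ : 0 < δ) :
    ∃ y ∈ closedRightIdeal q, star y ∈ closedRightIdeal p ∧ ‖star y * y - p‖ < δ := by
  obtain ⟨w, hw⟩ := h
  obtain ⟨n, hn⟩ := (hw.eventually_lt_const (half_pos hδ)).exists
  have hη : 0 < δ / 4 := by positivity
  refine ⟨CFC.sqrt q * w n * fEps (δ / 4) p, ?_, ?_, ?_⟩
  · exact closedRightIdeal.mul_mem (closedRightIdeal.mul_mem
      (sqrt_mem_closedRightIdeal hq (self_mem_closedRightIdeal hq)) _) _
  · rw [star_mul, star_fEps]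
    exact closedRightIdeal.mul_mem
      (fEps_mem_closedRightIdeal hp.isSelfAdjoint (self_mem_closedRightIdeal hp) _) _
  · have hsq : star (CFC.sqrt q * w n * fEps (δ / 4) p) * (CFC.sqrt q * w n * fEps (δ / 4) p) =
        fEps (δ / 4) p * (star (w n) * q * w n) * fEps (δ / 4) p := by
      conv_rhs => rw [← CFC.sqrt_mul_sqrt_self q hq]
      simp only [star_mul, star_fEps, star_sqrt, mul_assoc]
    rw [hsq]
    linarith [norm_conj_fEps_sub_le (z := star (w n) * q * w n) hp hη]

end UnitaryApproximation

/-! ### Moving orthogonal families by unitaries -/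

section OrthogonalFamilies

variable {V : Type*} [NonUnitalCStarAlgebra V]

lemma norm_star_mul_self_sub_le {x x' : V} {M μ : ℝ} (hx : ‖x‖ ≤ M) (hx' : ‖x'‖ ≤ M)
    (h : ‖x - x'‖ ≤ μ) : ‖star x * x - star x' * x'‖ ≤ 2 * M * μ := by
  have hM : 0 ≤ M := (norm_nonneg _).trans hx
  have hμ : 0 ≤ μ := (norm_nonneg _).trans h
  calc ‖star x * x - star x' * x'‖
      = ‖star x * (x - x') + star (x - x') * x'‖ := by rw [star_sub]; noncomm_ring
    _ ≤ ‖star x‖ * ‖x - x'‖ + ‖star (x - x')‖ * ‖x'‖ :=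
        norm_add_le_of_le (norm_mul_le _ _) (norm_mul_le _ _)
    _ ≤ M * μ + μ * M := by
        rw [norm_star, norm_star]
        gcongr
    _ = 2 * M * μ := by ring

lemma norm_fEps_mul_le (η : ℝ) (e x : V) : ‖fEps η e * x‖ ≤ ‖x‖ :=
  (norm_mul_le _ _).trans (mul_le_of_le_one_left (norm_nonneg _) (norm_fEps_le_one _ _))

lemma norm_sum_mul_star_mul_le {m : ℕ} {x z : ℕ → V} {y : V} {M N ε : ℝ}
    (hx : ∀ i < m, ‖x i‖ ≤ M) (hxz : ∀ i < m, ‖z i - x i‖ ≤ ε) (hzy : ∀ i < m, star (z i) * y = 0)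
    (hy : ‖y‖ ≤ N) :
    ‖(∑ i ∈ Finset.range m, x i * star (x i)) * y‖ ≤ m * (M * (ε * N)) := by
  rw [Finset.sum_mul]
  refine (norm_sum_le_of_le _ (n := fun _ => M * (ε * N)) fun i hi => ?_).trans_eq (by simp)
  have hi := Finset.mem_range.1 hi
  have hrw : x i * star (x i) * y = -(x i * (star (z i - x i) * y)) := by
    rw [star_sub, sub_mul, hzy i hi]
    noncomm_ring
  rw [hrw, norm_neg]
  have : 0 ≤ M := (norm_nonneg _).trans (hx i hi)
  have : 0 ≤ ε := (norm_nonneg _).trans (hxz i hi)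
  refine norm_mul_le_of_le (hx i hi) (norm_mul_le_of_le ?_ hy)
  rw [norm_star]
  exact hxz i hi

lemma fEps_two_mul_mul_complCompression (e b : V) {η : ℝ} (hη : 0 < η) :
    fEps (2 * η) e * complCompression (fEps η e) b = 0 :=
  mul_complCompression_eq_zero
    ((commute_fEps_fEps e _ _).eq.trans (fEps_mul_fEps e hη (by linarith))) b

lemma mul_eq_zero_comm_of_isSelfAdjoint {φ y : V} (hφ : IsSelfAdjoint φ) (h : φ * y = 0) :
    star y * φ = 0 := by
  have h := congrArg star h
  rwa [star_mul, hφ.star_eq, star_zero] at h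

lemma norm_le_add_one_of_norm_sub_lt {x y : V} {M : ℝ} (hx : ‖x‖ ≤ M)
    (h : ‖star y * y - star x * x‖ < 1) : ‖y‖ ≤ M + 1 := by
  have hM : 0 ≤ M := (norm_nonneg x).trans hx
  refine abs_le_of_sq_le_sq' ?_ (by linarith) |>.2
  calc ‖y‖ ^ 2 = ‖star y * y‖ := by rw [sq, CStarRing.norm_star_mul_self]
    _ ≤ ‖star x * x‖ + ‖star y * y - star x * x‖ := norm_le_insert' _ _
    _ = ‖x‖ ^ 2 + ‖star y * y - star x * x‖ := by rw [sq, CStarRing.norm_star_mul_self]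
    _ ≤ M ^ 2 + 1 := by gcongr
    _ ≤ (M + 1) ^ 2 := by nlinarith

namespace IsUnitaryIncrement

variable {b v : V}

lemma norm_act_sub_le (hv : IsUnitaryIncrement b v) (x x' y y' : V) :
    ‖x + v * x - y‖ ≤ ‖x - x'‖ + ‖x' + v * x' - y'‖ + ‖y - y'‖ :=
  calc ‖x + v * x - y‖
      = ‖((x - x') + v * (x - x')) + (x' + v * x' - y') - (y - y')‖ := by
        congr 1
        noncomm_ring
    _ ≤ ‖(x - x') + v * (x - x')‖ + ‖x' + v * x' - y'‖ + ‖y - y'‖ :=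
        norm_sub_le_of_le (norm_add_le _ _) le_rfl
    _ = ‖x - x'‖ + ‖x' + v * x' - y'‖ + ‖y - y'‖ := by rw [hv.norm_act]

lemma norm_act_sub_le_of_mul_eq_zero (hv : IsUnitaryIncrement b v) {φ : V}
    (hφ : IsSelfAdjoint φ) (h : φ * b = 0) (z x : V) :
    ‖z + v * z - x‖ ≤ ‖z - x‖ + 2 * ‖x - φ * x‖ := by
  have hvφ : v * φ = 0 := by
    simpa using mul_eq_zero_comm_of_isSelfAdjoint hφ (closedRightIdeal.mul_eq_zero h hv.mem.2)
  have hfix : φ * x + v * (φ * x) - φ * x = 0 := by rw [← mul_assoc, hvφ]; simp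
  have hact := hv.norm_act_sub_le z (φ * x) x (φ * x)
  rw [hfix, norm_zero] at hact
  linarith [norm_sub_le_norm_sub_add_norm_sub z x (φ * x)]

end IsUnitaryIncrement

/-- Elements `y 0, …, y (m - 1)` of `b V` with mutually orthogonal ranges such that `y i` is
supported under `d i` and `star (y i) * y i` approximates `d i` up to `δ`. -/
structure IsOrthogonalFamily (b : V) (d : ℕ → V) (δ : ℝ) (m : ℕ) (y : ℕ → V) : Prop where
  mem : ∀ i < m, y i ∈ closedRightIdeal b
  star_mem : ∀ i < m, star (y i) ∈ closedRightIdeal (d i)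
  norm_sub_le : ∀ i < m, ‖star (y i) * y i - d i‖ ≤ δ
  star_mul_eq_zero : ∀ i < m, ∀ j < m, i ≠ j → star (y i) * y j = 0

lemma IsOrthogonalFamily.update {b t φ y : V} {d z : ℕ → V} {δ : ℝ} {m : ℕ}
    (hz : IsOrthogonalFamily t d δ m z) (htb : t ∈ closedRightIdeal b) (hφ : IsSelfAdjoint φ)
    (hφb : φ ∈ closedRightIdeal b) (hφt : φ * t = 0) (hy : star y ∈ closedRightIdeal (d m))
    (hyd : ‖star (φ * y) * (φ * y) - d m‖ ≤ δ) :
    IsOrthogonalFamily b d δ (m + 1) (Function.update z m (φ * y)) := by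
  have hφz : ∀ i < m, φ * z i = 0 := fun i hi => closedRightIdeal.mul_eq_zero hφt (hz.mem i hi)
  have hcases {p : ℕ → V → Prop} (hm : p m (φ * y)) (hlt : ∀ i < m, p i (z i)) :
      ∀ i < m + 1, p i (Function.update z m (φ * y) i) := fun i hi => by
    rcases eq_or_ne i m with rfl | him
    · rwa [Function.update_self]
    · rw [Function.update_of_ne him]
      exact hlt i (by omega)
  refine ⟨hcases (p := fun _ x => x ∈ closedRightIdeal b) (closedRightIdeal.mul_mem hφb _)
      fun i hi => closedRightIdeal.le_of_mem htb (hz.mem i hi),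
    hcases (p := fun i x => star x ∈ closedRightIdeal (d i)) ?_ hz.star_mem,
    hcases (p := fun i x => ‖star x * x - d i‖ ≤ δ) hyd hz.norm_sub_le, fun i hi j hj hij => ?_⟩
  · rw [star_mul]
    exact closedRightIdeal.mul_mem hy _
  · by_cases him : i = m <;> by_cases hjm : j = m
    · exact absurd (him.trans hjm.symm) hij
    · rw [him, Function.update_self, Function.update_of_ne hjm, star_mul, hφ.star_eq, mul_assoc,
        hφz j (by omega), mul_zero]
    · rw [hjm, Function.update_self, Function.update_of_ne him, ← mul_assoc,
        mul_eq_zero_comm_of_isSelfAdjoint hφ (hφz i (by omega)), zero_mul]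
    · rw [Function.update_of_ne him, Function.update_of_ne hjm]
      exact hz.star_mul_eq_zero i (by omega) j (by omega) hij

lemma IsOrthogonalFamily.mono {b : V} {d y : ℕ → V} {δ δ' : ℝ} {m m' : ℕ}
    (hy : IsOrthogonalFamily b d δ m y) (hδ : δ ≤ δ') (hm : m' ≤ m) :
    IsOrthogonalFamily b d δ' m' y :=
  ⟨fun i hi => hy.mem i (by omega), fun i hi => hy.star_mem i (by omega),
    fun i hi => (hy.norm_sub_le i (by omega)).trans hδ,
    fun i hi j hj => hy.star_mul_eq_zero i (by omega) j (by omega)⟩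

lemma IsOrthogonalFamily.act {b v : V} {d y : ℕ → V} {δ : ℝ} {m : ℕ}
    (hy : IsOrthogonalFamily b d δ m y) (hv : IsUnitaryIncrement b v) :
    IsOrthogonalFamily b d δ m fun i => y i + v * y i := by
  refine ⟨fun i hi => hv.act_mem (hy.mem i hi), fun i hi => ?_, fun i hi => ?_,
    fun i hi j hj hij => ?_⟩
  · rw [star_add, star_mul]
    exact add_mem (hy.star_mem i hi) (closedRightIdeal.mul_mem (hy.star_mem i hi) _)
  · rw [hv.star_act_mul_act]
    exact hy.norm_sub_le i hi
  · rw [hv.star_act_mul_act]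
    exact hy.star_mul_eq_zero i hi j hj hij

lemma IsOrthogonalFamily.norm_star_sum_mul_sum_sub_le {b : V} {d y : ℕ → V} {δ : ℝ} {m : ℕ}
    (hy : IsOrthogonalFamily b d δ m y) :
    ‖star (∑ i ∈ Finset.range m, y i) * ∑ i ∈ Finset.range m, y i - ∑ i ∈ Finset.range m, d i‖ ≤
      m * δ := by
  have hgram : star (∑ i ∈ Finset.range m, y i) * ∑ i ∈ Finset.range m, y i =
      ∑ i ∈ Finset.range m, star (y i) * y i := by
    rw [star_sum, Finset.sum_mul]
    refine Finset.sum_congr rfl fun i hi => ?_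
    rw [Finset.mul_sum]
    exact Finset.sum_eq_single_of_mem i hi fun j hj hij => hy.star_mul_eq_zero i
      (Finset.mem_range.1 hi) j (Finset.mem_range.1 hj) hij.symm
  rw [hgram, ← Finset.sum_sub_distrib]
  exact (norm_sum_le_of_le _ fun i hi => hy.norm_sub_le i (Finset.mem_range.1 hi)).trans_eq
    (by simp)

lemma norm_sq_le_of_norm_star_mul_self_sub_le {x a : V} {r : ℝ} (h : ‖star x * x - a‖ ≤ r) :
    ‖x‖ ^ 2 ≤ ‖a‖ + r := by
  rw [sq, ← CStarRing.norm_star_mul_self]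
  exact (norm_le_norm_add_norm_sub' _ a).trans (by gcongr)

variable [PartialOrder V] [StarOrderedRing V]

lemma norm_fEps_mul_le_mul_norm {e : V} (he : 0 ≤ e) {η : ℝ} (hη : 0 < η) (y : V) :
    ‖fEps η e * y‖ ≤ 2 / η * ‖e * y‖ := by
  have hcut : ∀ t ∈ quasispectrum ℝ e, cutoff η t * cutoff η t ≤ (2 / η) ^ 2 * (t * t) := by
    intro t ht
    have h := cutoff_le_mul hη (quasispectrum_nonneg_of_nonneg e he t ht)
    nlinarith [cutoff_nonneg η t]
  have hle : fEps η e * fEps η e ≤ (2 / η) ^ 2 • (e * e) := by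
    have hee : (2 / η) ^ 2 • (e * e) = cfcₙ (fun t : ℝ => (2 / η) ^ 2 * (t * t)) e := by
      rw [cfcₙ_const_mul .., cfcₙ_mul .., cfcₙ_id' ℝ e]
    rw [hee, fEps, ← cfcₙ_mul ..]
    exact cfcₙ_mono hcut
  have hconj := CStarAlgebra.norm_le_norm_of_nonneg_of_le
    (star_left_conjugate_nonneg (by simpa using star_mul_self_nonneg (fEps η e)) y)
    (star_left_conjugate_le_conjugate hle y)
  have hE : star y * (fEps η e * fEps η e) * y = star (fEps η e * y) * (fEps η e * y) := by
    rw [star_mul, star_fEps]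
    noncomm_ring
  have he' : star y * ((2 / η) ^ 2 • (e * e)) * y = (2 / η) ^ 2 • (star (e * y) * (e * y)) := by
    rw [star_mul, he.star_eq, mul_smul_comm, smul_mul_assoc]
    noncomm_ring
  rw [hE, he', norm_smul, CStarRing.norm_star_mul_self, CStarRing.norm_star_mul_self,
    Real.norm_of_nonneg (by positivity)] at hconj
  exact abs_le_of_sq_le_sq' (by nlinarith) (by positivity) |>.2

lemma dTau_star_mul_self_sub_le (τ : QuasiTrace V) (E y : V) :
    dTau τ (star (y - E * y) * (y - E * y)) ≤ dTau τ (star y * y) := by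
  refine dTau_le_dTau τ (star_mul_self_nonneg _) (star_mul_self_nonneg _)
    (closedRightIdeal.mul_mem ?_ _)
  have hy : star y ∈ closedRightIdeal (star y * y) := by
    simpa using mem_closedRightIdeal_of_mul_star_le (le_refl (star y * star (star y)))
  rw [star_sub, star_mul]
  exact sub_mem hy (closedRightIdeal.mul_mem hy _)

variable {L : ℕ → V → V}

lemma exists_cutoff_complement (hL : OrthogonalIsometries L) {b e : V} (hb : 0 ≤ b) (he : 0 ≤ e)
    (heb : e ∈ closedRightIdeal b) {μ : ℝ} (hμ : 0 < μ) :
    ∃ φ ∈ closedRightIdeal b, IsSelfAdjoint φ ∧ (∀ x, ‖φ * x‖ ≤ ‖x‖) ∧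
      (∀ x, x * star x ≤ e → ‖x - φ * x‖ ≤ μ) ∧
      ∃ t ∈ closedRightIdeal b, 0 ≤ t ∧ φ * t = 0 ∧
        ∀ τ : QuasiTrace V, dTau τ b ≤ dTau τ e + dTau τ t := by
  have hη : 0 < μ ^ 2 / 2 := by positivity
  exact ⟨fEps (2 * (μ ^ 2 / 2)) e, fEps_mem_closedRightIdeal (.of_nonneg he) heb _,
    isSelfAdjoint_fEps _ _, norm_fEps_mul_le _ _,
    fun x hx => norm_sub_fEps_mul_le hx hμ.le (by positivity) (by linarith),
    complCompression (fEps (μ ^ 2 / 2) e) b,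
    complCompression_mem_closedRightIdeal (self_mem_closedRightIdeal hb)
      (fEps_mem_closedRightIdeal (.of_nonneg he) heb _),
    complCompression_nonneg (isSelfAdjoint_fEps _ _) hb,
    fEps_two_mul_mul_complCompression e b hη, fun τ => dTau_le_add_complCompression τ hL hb he _⟩

lemma exists_norm_act_sub_lt_of_orthogonal_middle (V : Type*) [NonUnitalCStarAlgebra V]
    [PartialOrder V] [StarOrderedRing V] (M : ℝ) {ε : ℝ} (hε : 0 < ε) :
    ∃ δ > 0, ∀ b x y z : V, x ∈ closedRightIdeal b → y ∈ closedRightIdeal b →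
      z ∈ closedRightIdeal b → ‖x‖ ≤ M → ‖y‖ ≤ M → ‖z‖ ≤ M →
      ‖star x * x - star y * y‖ ≤ δ → ‖star y * y - star z * z‖ ≤ δ →
      star x * y = 0 → star y * z = 0 →
      ∃ v, IsUnitaryIncrement b v ∧ ‖x + v * x - z‖ < ε := by
  obtain ⟨δ, hδ, hrot⟩ := exists_norm_act_sub_lt_of_orthogonal V M (half_pos hε)
  refine ⟨δ, hδ, fun b x y z hx hy hz hxM hyM hzM hxy hyz hxy' hyz' => ?_⟩
  obtain ⟨v₁, hv₁, h₁⟩ := hrot b x y hx hy hxM hyM hxy hxy'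
  obtain ⟨v₂, hv₂, h₂⟩ := hrot b y z hy hz hyM hzM hyz hyz'
  refine ⟨_, hv₂.comp hv₁, ?_⟩
  rw [comp_act]
  have hact := hv₂.norm_act_sub_le (x + v₁ * x) y z z
  rw [sub_self, norm_zero] at hact
  linarith

lemma exists_cutoff_orthogonal (hL : OrthogonalIsometries L) (hsc : StrictComparison V)
    {b e p : V} (hb : 0 ≤ b) (he : 0 ≤ e) (heb : e ∈ closedRightIdeal b) (hp : 0 ≤ p)
    (hd : ∀ τ : QuasiTrace V, ¬ τ.IsZero → dTau τ e + dTau τ p < dTau τ b)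
    {μ ν : ℝ} (hμ : 0 < μ) (hν : 0 < ν) :
    ∃ φ ∈ closedRightIdeal b, IsSelfAdjoint φ ∧ (∀ x, ‖φ * x‖ ≤ ‖x‖) ∧
      (∀ x, x * star x ≤ e → ‖x - φ * x‖ ≤ μ) ∧
      ∃ y ∈ closedRightIdeal b, φ * y = 0 ∧ ‖star y * y - p‖ < ν := by
  obtain ⟨φ, hφb, hφ, hφ₁, hφe, t, htb, ht, hφt, hdt⟩ := exists_cutoff_complement hL hb he heb hμ
  have hcuntz : CuntzLE p t := hsc _ _ hp ht fun τ hτ =>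
    lt_of_add_lt_add_left ((hd τ hτ).trans_le (hdt τ))
  obtain ⟨y, hyt, -, hyp⟩ := hcuntz.exists_norm_star_mul_self_sub_lt hp ht hν
  exact ⟨φ, hφb, hφ, hφ₁, hφe, y, closedRightIdeal.le_of_mem htb hyt,
    closedRightIdeal.mul_eq_zero hφt hyt, hyp⟩

lemma exists_norm_act_sub_lt_of_dTau_lt (hL : OrthogonalIsometries L) (hsc : StrictComparison V)
    (M : ℝ) {ε : ℝ} (hε : 0 < ε) :
    ∃ δ > 0, ∀ b x z : V, 0 ≤ b → x ∈ closedRightIdeal b → z ∈ closedRightIdeal b →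
      ‖x‖ ≤ M → ‖z‖ ≤ M → ‖star x * x - star z * z‖ ≤ δ →
      (∀ τ : QuasiTrace V, ¬ τ.IsZero →
        dTau τ (star x * x) + dTau τ (star z * z) + dTau τ (star x * x) < dTau τ b) →
      ∃ v, IsUnitaryIncrement b v ∧ ‖x + v * x - z‖ < ε := by
  obtain ⟨δ, hδ, hrot⟩ :=
    exists_norm_act_sub_lt_of_orthogonal_middle V (M + 1) (half_pos hε)
  refine ⟨δ / 3, by positivity, fun b x z hb hx hz hxM hzM hxz hd => ?_⟩
  obtain ⟨μ, hμ, hMμ, hμε⟩ : ∃ μ > 0, 2 * M * μ ≤ δ / 3 ∧ μ ≤ ε / 4 := by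
    obtain ⟨μ, hμ, h⟩ := exists_pos_mul_lt (show 0 < δ / 3 by positivity) (2 * M)
    have hM : 0 ≤ M := (norm_nonneg x).trans hxM
    exact ⟨min μ (ε / 4), by positivity,
      (mul_le_mul_of_nonneg_left (min_le_left _ _) (by positivity)).trans h.le, min_le_right _ _⟩
  have hxx := mul_star_self_nonneg x
  have hzz := mul_star_self_nonneg z
  have hde : ∀ τ : QuasiTrace V, ¬ τ.IsZero →
      dTau τ (x * star x + z * star z) + dTau τ (star x * x) < dTau τ b := fun τ hτ => by
    refine lt_of_le_of_lt (add_le_add_left (dTau_add_le τ hL hxx hzz) _) ?_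
    rw [dTau_mul_star_eq, dTau_mul_star_eq]
    exact hd τ hτ
  -- The unitary moves `φ x` to `φ z` through a vector `y` orthogonal to both.
  obtain ⟨φ, hφb, hφ, hφ₁, hφe, y, hyb, hφy, hyx⟩ := exists_cutoff_orthogonal hL hsc hb
    (add_nonneg hxx hzz) (add_mem (closedRightIdeal.mul_mem hx _) (closedRightIdeal.mul_mem hz _))
    (star_mul_self_nonneg x) hde hμ (show 0 < min (δ / 3) 1 by positivity)
  have hxφ := (norm_star_mul_self_sub_le hxM ((hφ₁ x).trans hxM)
    (hφe x (le_add_of_nonneg_right hzz))).trans hMμ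
  have hzφ := (norm_star_mul_self_sub_le hzM ((hφ₁ z).trans hzM)
    (hφe z (le_add_of_nonneg_left hxx))).trans hMμ
  have hyx' : ‖star y * y - star x * x‖ ≤ δ / 3 := hyx.le.trans (min_le_left _ _)
  have hM₁ : M ≤ M + 1 := by linarith
  obtain ⟨v, hv, hvxz⟩ := hrot b (φ * x) y (φ * z) (closedRightIdeal.mul_mem hφb _)
    hyb (closedRightIdeal.mul_mem hφb _)
    (((hφ₁ x).trans hxM).trans hM₁)
    (norm_le_add_one_of_norm_sub_lt hxM (hyx.trans_le (min_le_right _ _)))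
    (((hφ₁ z).trans hzM).trans hM₁)
    (by linarith [norm_sub_le_norm_sub_add_norm_sub (star (φ * x) * (φ * x)) (star x * x)
          (star y * y), norm_sub_rev (star (φ * x) * (φ * x)) (star x * x),
          norm_sub_rev (star x * x) (star y * y)])
    (by linarith [norm_sub_le_norm_sub_add_norm_sub (star y * y) (star x * x)
          (star (φ * z) * (φ * z)), norm_sub_le_norm_sub_add_norm_sub (star x * x) (star z * z)
          (star (φ * z) * (φ * z))])
    (by rw [star_mul, hφ.star_eq, mul_assoc, hφy, mul_zero])
    (by rw [← mul_assoc, mul_eq_zero_comm_of_isSelfAdjoint hφ hφy, zero_mul])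
  refine ⟨v, hv, ?_⟩
  linarith [hv.norm_act_sub_le x (φ * x) z (φ * z), hφe x (le_add_of_nonneg_right hzz),
    hφe z (le_add_of_nonneg_left hxx)]

lemma exists_norm_act_sub_lt_complCompression (hL : OrthogonalIsometries L)
    (hsc : StrictComparison V) (M : ℝ) {ε : ℝ} (hε : 0 < ε) :
    ∃ δ > 0, ∀ (b e x y : V) (η : ℝ), 0 ≤ b → 0 ≤ e → x ∈ closedRightIdeal b →
      y ∈ closedRightIdeal b → ‖x‖ ≤ M → ‖y‖ ≤ M → ‖star x * x - star y * y‖ ≤ δ →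
      e * x = 0 → ‖fEps η e * y‖ ≤ δ →
      (∀ τ : QuasiTrace V, ¬ τ.IsZero →
        dTau τ e + (dTau τ (star y * y) + dTau τ (star x * x) + dTau τ (star y * y)) < dTau τ b) →
      ∃ v, IsUnitaryIncrement (complCompression (fEps η e) b) v ∧ ‖y + v * y - x‖ < ε := by
  obtain ⟨δ, hδ, hS⟩ := exists_norm_act_sub_lt_of_dTau_lt hL hsc (2 * M) (half_pos hε)
  obtain ⟨μ, hμ, hMμ⟩ := exists_pos_mul_lt (half_pos hδ) (2 * (2 * M))
  refine ⟨min (δ / 2) (min μ (ε / 2)), by positivity,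
    fun b e x y η hb he hx hy hxM hyM hxy hex hEy hd => ?_⟩
  have hM : 0 ≤ M := (norm_nonneg x).trans hxM
  set E := fEps η e
  have hEs : IsSelfAdjoint E := isSelfAdjoint_fEps _ _
  have hEx : E * x = 0 := by
    have h := closedRightIdeal.mul_eq_zero (c := star x)
      (by simpa [he.star_eq] using congrArg star hex)
      (fEps_mem_closedRightIdeal (.of_nonneg he) (self_mem_closedRightIdeal he) η)
    simpa [hEs.star_eq] using congrArg star h
  have hxt : x ∈ closedRightIdeal (complCompression E b) := by
    simpa [hEx] using sub_mul_mem_closedRightIdeal_complCompression hEs hb hx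
  have hyE : ‖y - (y - E * y)‖ ≤ min (δ / 2) (min μ (ε / 2)) := by rwa [sub_sub_cancel]
  have hyEM : ‖y - E * y‖ ≤ 2 * M := by
    linarith [norm_sub_le y (E * y), norm_fEps_mul_le η e y]
  have hyy := norm_star_mul_self_sub_le (show ‖y‖ ≤ 2 * M by linarith) hyEM
    (hyE.trans ((min_le_right _ _).trans (min_le_left _ _)))
  obtain ⟨v, hv, hvy⟩ := hS _ (y - E * y) x (complCompression_nonneg hEs hb)
    (sub_mul_mem_closedRightIdeal_complCompression hEs hb hy) hxt hyEM (by linarith)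
    (by
      rw [norm_sub_rev]
      linarith [norm_sub_le_norm_sub_add_norm_sub (star x * x) (star y * y)
        (star (y - E * y) * (y - E * y)), hxy.trans (min_le_left _ _)])
    (fun τ hτ => by
      have hyτ := dTau_star_mul_self_sub_le τ E y
      refine lt_of_le_of_lt (add_le_add (add_le_add_left hyτ _) hyτ) ?_
      exact lt_of_add_lt_add_left ((hd τ hτ).trans_le (dTau_le_add_complCompression τ hL hb he η)))
  refine ⟨v, hv, ?_⟩
  have hact := hv.norm_act_sub_le y (y - E * y) x x
  rw [sub_self, norm_zero] at hact
  linarith [hyE.trans ((min_le_right _ _).trans (min_le_right _ _))]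

lemma dTau_sum_mul_star_le (τ : QuasiTrace V) (hL : OrthogonalIsometries L) {ι : Type*}
    (s : Finset ι) (x : ι → V) :
    dTau τ (∑ i ∈ s, x i * star (x i)) ≤ ∑ i ∈ s, dTau τ (star (x i) * x i) := by
  simpa only [dTau_mul_star_eq] using
    dTau_sum_le τ hL s (fun i => x i * star (x i)) fun i _ => mul_star_self_nonneg _

lemma exists_norm_act_sub_lt_succ (hL : OrthogonalIsometries L) (hsc : StrictComparison V)
    (M : ℝ) (m : ℕ) {ε : ℝ} (hε : 0 < ε) :
    ∃ δ > 0, ∀ (b : V) (x z : ℕ → V) (x' z' : V), 0 ≤ b →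
      (∀ i < m, x i ∈ closedRightIdeal b ∧ ‖x i‖ ≤ M ∧ ‖z i - x i‖ ≤ δ ∧
        star (x i) * x' = 0 ∧ star (z i) * z' = 0) →
      x' ∈ closedRightIdeal b → z' ∈ closedRightIdeal b → ‖x'‖ ≤ M → ‖z'‖ ≤ M →
      ‖star x' * x' - star z' * z'‖ ≤ δ →
      (∀ τ : QuasiTrace V, ¬ τ.IsZero →
        ∑ i ∈ Finset.range m, dTau τ (star (x i) * x i) +
          (dTau τ (star z' * z') + dTau τ (star x' * x') + dTau τ (star z' * z')) < dTau τ b) →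
      ∃ v, IsUnitaryIncrement b v ∧ (∀ i < m, ‖z i + v * z i - x i‖ < ε) ∧
        ‖z' + v * z' - x'‖ < ε := by
  obtain ⟨δ₁, hδ₁, hnew⟩ := exists_norm_act_sub_lt_complCompression hL hsc M hε
  set η := (ε / 8) ^ 2 / 2 with hη
  have hη₀ : 0 < η := by positivity
  obtain ⟨δ₂, hδ₂, hMδ⟩ := exists_pos_mul_lt hδ₁ (2 / η * (m * (M * M)))
  refine ⟨min δ₁ (min δ₂ (ε / 2)), by positivity,
    fun b x z x' z' hb hxz hx' hz' hx'M hz'M hx'z' hd => ?_⟩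
  have hxz' : ∀ i ∈ Finset.range m, _ := fun i hi => hxz i (Finset.mem_range.1 hi)
  set e := ∑ i ∈ Finset.range m, x i * star (x i) with he
  have he₀ : 0 ≤ e := Finset.sum_nonneg fun i _ => mul_star_self_nonneg _
  have heb : e ∈ closedRightIdeal b := sum_mem fun i hi => closedRightIdeal.mul_mem (hxz' i hi).1 _
  have hex : e * x' = 0 := by
    rw [he, Finset.sum_mul]
    exact Finset.sum_eq_zero fun i hi => by rw [mul_assoc, (hxz' i hi).2.2.2.1, mul_zero]
  have hEz : ‖fEps η e * z'‖ ≤ δ₁ := by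
    have h := norm_sum_mul_star_mul_le (fun i hi => (hxz i hi).2.1)
      (fun i hi => (hxz i hi).2.2.1.trans ((min_le_right _ _).trans (min_le_left _ _)))
      (fun i hi => (hxz i hi).2.2.2.2) hz'M
    refine (norm_fEps_mul_le_mul_norm he₀ hη₀ _).trans
      ((mul_le_mul_of_nonneg_left h (by positivity)).trans ?_)
    linarith [show 2 / η * (m * (M * (δ₂ * M))) = 2 / η * (m * (M * M)) * δ₂ by ring]
  obtain ⟨v, hv, hvz'⟩ := hnew b e x' z' η hb he₀ hx' hz' hx'M hz'M
    (hx'z'.trans (min_le_left _ _)) hex hEz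
    (fun τ hτ => (add_le_add_left (dTau_sum_mul_star_le τ hL _ x) _).trans_lt (hd τ hτ))
  refine ⟨v, hv.mono (complCompression_mem_closedRightIdeal (self_mem_closedRightIdeal hb)
    (fEps_mem_closedRightIdeal (.of_nonneg he₀) heb η)), fun i hi => ?_, hvz'⟩
  have hle : x i * star (x i) ≤ e := Finset.single_le_sum (f := fun i => x i * star (x i))
    (fun j _ => mul_star_self_nonneg _) (Finset.mem_range.2 hi)
  have hφ : ‖x i - fEps (2 * η) e * x i‖ ≤ ε / 8 :=
    norm_sub_fEps_mul_le hle (by positivity) (by positivity) (by rw [hη]; linarith)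
  linarith [(hxz i hi).2.2.1.trans ((min_le_right _ _).trans (min_le_right _ _)),
    hv.norm_act_sub_le_of_mul_eq_zero (isSelfAdjoint_fEps _ _)
      (fEps_two_mul_mul_complCompression e b hη₀) (z i) (x i)]

lemma exists_isUnitaryIncrement_forall_norm_act_sub_lt (hL : OrthogonalIsometries L)
    (hsc : StrictComparison V) (M : ℝ) (m : ℕ) :
    ∀ ε > 0, ∃ δ > 0, ∀ (b : V) (x y : ℕ → V) (κ : QuasiTrace V → ℕ → ℝ≥0∞), 0 ≤ b →
      (∀ i < m, x i ∈ closedRightIdeal b ∧ y i ∈ closedRightIdeal b ∧ ‖x i‖ ≤ M ∧ ‖y i‖ ≤ M ∧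
        ‖star (x i) * x i - star (y i) * y i‖ ≤ δ) →
      (∀ i < m, ∀ j < m, i ≠ j → star (x i) * x j = 0 ∧ star (y i) * y j = 0) →
      (∀ τ : QuasiTrace V, ¬ τ.IsZero → ∀ i < m,
        dTau τ (star (x i) * x i) ≤ κ τ i ∧ dTau τ (star (y i) * y i) ≤ κ τ i ∧
          ∑ j ∈ Finset.range i, κ τ j + 3 * κ τ i < dTau τ b) →
      ∃ v, IsUnitaryIncrement b v ∧ ∀ i < m, ‖y i + v * y i - x i‖ < ε := by
  induction m with
  | zero => exact fun ε _ => ⟨1, one_pos, fun b x y κ _ _ _ _ => ⟨0, .zero b, by simp⟩⟩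
  | succ m ih =>
    intro ε hε
    obtain ⟨δ₁, hδ₁, hnew⟩ := exists_norm_act_sub_lt_succ hL hsc M m hε
    obtain ⟨δ₂, hδ₂, hold⟩ := ih δ₁ hδ₁
    refine ⟨min δ₁ δ₂, by positivity, fun b x y κ hb hxy horth hd => ?_⟩
    obtain ⟨v, hv, hvyx⟩ := hold b x y κ hb
      (fun i hi => by
        obtain ⟨hx, hy, hxM, hyM, h⟩ := hxy i (by omega)
        exact ⟨hx, hy, hxM, hyM, h.trans (min_le_right _ _)⟩)
      (fun i hi j hj => horth i (by omega) j (by omega)) (fun τ hτ i hi => hd τ hτ i (by omega))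
    obtain ⟨hx, hy, hxM, hyM, hxym⟩ := hxy m (by omega)
    obtain ⟨w, hw, hwold, hwnew⟩ := hnew b x (fun i => y i + v * y i) (x m) (y m + v * y m) hb
      (fun i hi => by
        have hoim := horth i (by omega) m (by omega) (by omega)
        exact ⟨(hxy i (by omega)).1, (hxy i (by omega)).2.2.1, (hvyx i hi).le, hoim.1,
          (hv.star_act_mul_act _ _).trans hoim.2⟩)
      hx (hv.act_mem hy) hxM ((hv.norm_act _).trans_le hyM)
      (by rw [hv.star_act_mul_act]; exact hxym.trans (min_le_left _ _))
      (fun τ hτ => by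
        obtain ⟨hxκ, hyκ, hκ⟩ := hd τ hτ m (by omega)
        rw [hv.star_act_mul_act]
        refine lt_of_le_of_lt (add_le_add (Finset.sum_le_sum fun i hi => ?_)
          (add_le_add (add_le_add hyκ hxκ) hyκ)) (lt_of_eq_of_lt (by ring) hκ)
        have := Finset.mem_range.1 hi
        exact (hd τ hτ i (by omega)).1)
    refine ⟨_, hw.comp hv, fun i hi => ?_⟩
    rw [comp_act]
    rcases Nat.lt_succ_iff_lt_or_eq.1 hi with hi | rfl
    exacts [hwold i hi, hwnew]

lemma exists_isOrthogonalFamily (hL : OrthogonalIsometries L) (hsc : StrictComparison V)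
    {d : ℕ → V} {δ : ℝ} (hδ : 0 < δ) (m : ℕ) (hd : ∀ i < m, 0 ≤ d i) :
    ∀ b : V, 0 ≤ b →
      (∀ τ : QuasiTrace V, ¬ τ.IsZero → ∑ i ∈ Finset.range m, dTau τ (d i) < dTau τ b) →
      ∃ y : ℕ → V, IsOrthogonalFamily b d δ m y := by
  induction m with
  | zero => exact fun b _ _ => ⟨0, by simp, by simp, by simp, by simp⟩
  | succ m ih =>
    intro b hb hlt
    have hdm := hd m (by omega)
    have hcuntz : CuntzLE (d m) b := hsc _ _ hdm hb fun τ hτ =>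
      (Finset.single_le_sum (f := fun i => dTau τ (d i)) (fun i _ => zero_le)
        (Finset.self_mem_range_succ m)).trans_lt (hlt τ hτ)
    obtain ⟨y, hyb, hyd, hyn⟩ := hcuntz.exists_norm_star_mul_self_sub_lt hdm hb (half_pos hδ)
    obtain ⟨μ, hμ, hyμ⟩ := exists_pos_mul_lt (half_pos hδ) (2 * ‖y‖)
    obtain ⟨φ, hφb, hφ, hφ₁, hφe, t, htb, ht, hφt, hdt⟩ := exists_cutoff_complement hL hb
      (mul_star_self_nonneg y) (closedRightIdeal.mul_mem hyb _) hμ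
    obtain ⟨z, hz⟩ := ih (fun i hi => hd i (by omega)) t ht fun τ hτ => by
      have hyτ : dTau τ (y * star y) ≤ dTau τ (d m) :=
        (dTau_mul_star_eq τ y).trans_le (dTau_le_dTau τ (star_mul_self_nonneg _) hdm
          (closedRightIdeal.mul_mem hyd _))
      have h := ((hlt τ hτ).trans_le (hdt τ)).trans_le (add_le_add_left hyτ _)
      rw [Finset.sum_range_succ, add_comm] at h
      exact lt_of_add_lt_add_left h
    have hφy := (norm_star_mul_self_sub_le le_rfl (hφ₁ y) (hφe y le_rfl)).trans_lt hyμ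
    refine ⟨_, hz.update htb hφ hφb hφt hyd ?_⟩
    linarith [norm_sub_le_norm_sub_add_norm_sub (star (φ * y) * (φ * y)) (star y * y) (d m),
      norm_sub_rev (star (φ * y) * (φ * y)) (star y * y)]

lemma exists_isUnitaryIncrement_norm_sum_sub_le (hL : OrthogonalIsometries L)
    (hsc : StrictComparison V) (m : ℕ) {ε : ℝ} (hε : 0 < ε) :
    ∃ δ > 0, ∀ (b : V) (d y z : ℕ → V), 0 ≤ b → (∀ i, 0 ≤ d i) → (∀ i, ‖d i‖ ≤ 1) →
      (∀ i, ∀ τ : QuasiTrace V, ¬ τ.IsZero →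
        ∑ j ∈ Finset.range i, dTau τ (d j) + 3 * dTau τ (d i) < dTau τ b) →
      IsOrthogonalFamily b d δ m y → IsOrthogonalFamily b d δ m z →
      ∃ v, IsUnitaryIncrement b v ∧
        ‖∑ i ∈ Finset.range m, y i - ∑ i ∈ Finset.range m, (z i + v * z i)‖ ≤ ε := by
  obtain ⟨μ, hμ, hmμ⟩ := exists_pos_mul_lt hε m
  obtain ⟨δ, hδ, h⟩ := exists_isUnitaryIncrement_forall_norm_act_sub_lt hL hsc 2 m μ hμ
  refine ⟨min 1 (δ / 2), by positivity, fun b d y z hb hd hd₁ hlt hy hz => ?_⟩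
  have hnorm {x : ℕ → V} (hx : IsOrthogonalFamily b d (min 1 (δ / 2)) m x) {i : ℕ} (hi : i < m) :
      ‖x i‖ ≤ 2 := by
    have hsq := norm_sq_le_of_norm_star_mul_self_sub_le (hx.norm_sub_le i hi)
    nlinarith [hd₁ i, min_le_left 1 (δ / 2), norm_nonneg (x i)]
  have hdim {x : ℕ → V} (hx : IsOrthogonalFamily b d (min 1 (δ / 2)) m x) {i : ℕ} (hi : i < m)
      (τ : QuasiTrace V) : dTau τ (star (x i) * x i) ≤ dTau τ (d i) :=
    dTau_le_dTau τ (star_mul_self_nonneg _) (hd i) (closedRightIdeal.mul_mem (hx.star_mem i hi) _)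
  obtain ⟨v, hv, hvz⟩ := h b y z (fun τ i => dTau τ (d i)) hb
    (fun i hi => ⟨hy.mem i hi, hz.mem i hi, hnorm hy hi, hnorm hz hi, by
      linarith [norm_sub_le_norm_sub_add_norm_sub (star (y i) * y i) (d i) (star (z i) * z i),
        norm_sub_rev (d i) (star (z i) * z i), hy.norm_sub_le i hi, hz.norm_sub_le i hi,
        min_le_right 1 (δ / 2)]⟩)
    (fun i hi j hj hij => ⟨hy.star_mul_eq_zero i hi j hj hij, hz.star_mul_eq_zero i hi j hj hij⟩)
    (fun τ hτ i hi => ⟨hdim hy hi τ, hdim hz hi τ, hlt i τ hτ⟩)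
  refine ⟨v, hv, ?_⟩
  rw [← Finset.sum_sub_distrib]
  refine (norm_sum_le_of_le (n := fun _ => μ) _ fun i hi => ?_).trans ?_
  · rw [norm_sub_rev]
    exact (hvz i (Finset.mem_range.1 hi)).le
  · simpa using hmμ.le

end OrthogonalFamilies

/-! ### Chains of dominated blocks -/

section DominatedChain

lemma isUnit_smul_one_add_add_add {𝕜 U : Type*} [Field 𝕜] [Ring U] [Algebra 𝕜 U] {c : 𝕜}
    (hc : c ≠ 0) {B D R : U} (hB : IsUnit (c • 1 + B)) (hD : IsUnit (1 + c⁻¹ • D))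
    (hDB : D * B = 0) (hBD : B * D = 0) (hBR : B * R = 0) (hRD : R * D = 0) (hRR : R * R = 0) :
    IsUnit (c • 1 + B + D + R) := by
  obtain ⟨g, hg⟩ := hB
  have hinv {q : U} (hq : B * q = 0) : ↑g⁻¹ * q = c⁻¹ • q := by
    rw [Units.inv_mul_eq_iff_eq_mul, hg, mul_smul_comm, add_mul, hq, add_zero, smul_mul_assoc,
      one_mul, smul_smul, inv_mul_cancel₀ hc, one_smul]
  have hnil : IsNilpotent (R * ↑g⁻¹) := by
    refine ⟨2, ?_⟩
    rw [sq, ← mul_assoc, mul_assoc R, hinv hBR, mul_smul_comm, hRR, smul_zero, zero_mul]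
  have hDg : (1 + c⁻¹ • D) * (c • 1 + B) = c • 1 + B + D := by
    rw [add_mul, one_mul, mul_add, smul_mul_assoc, smul_mul_assoc, hDB, mul_smul_comm, mul_one,
      smul_smul, inv_mul_cancel₀ hc, one_smul, smul_zero, add_zero]
  have hprod : c • 1 + B + D + R = (1 + R * ↑g⁻¹) * ((1 + c⁻¹ • D) * g) := by
    rw [hg, hDg, add_mul, one_mul, mul_add _ _ D, ← hg, Units.inv_mul_cancel_right, mul_assoc,
      hinv hBD, mul_smul_comm, hRD, smul_zero, add_zero]
  rw [hprod]
  exact hnil.isUnit_one_add.mul (hD.mul g.isUnit)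

variable {V : Type*} [NonUnitalCStarAlgebra V]

lemma mul_eq_zero_of_star_mem {c d x y : V} (hc : IsSelfAdjoint c) (hcd : c * d = 0)
    (hx : star x ∈ closedRightIdeal c) (hy : y ∈ closedRightIdeal d) : x * y = 0 := by
  have h := closedRightIdeal.mul_eq_zero
    (mul_eq_zero_comm_of_isSelfAdjoint hc (closedRightIdeal.mul_eq_zero hcd hy)) hx
  rw [← star_star x, ← star_star y, ← star_mul, h, star_zero]

lemma IsUnitaryIncrement.inr_act_mem_closure {b v y : V} (hv : IsUnitaryIncrement b v)
    (hy : (y : Unitization ℂ V) ∈ closure (positiveScalarUnits b)) :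
    ((y + v * y : V) : Unitization ℂ V) ∈ closure (positiveScalarUnits b) := by
  have hact : ((y + v * y : V) : Unitization ℂ V) = (1 + v) * y := by
    rw [Unitization.inr_add, Unitization.inr_mul, add_mul, one_mul]
  rw [hact]
  refine map_mem_closure (f := fun g => (1 + (v : Unitization ℂ V)) * g)
    (continuous_const.mul continuous_id) hy ?_
  rintro g ⟨hg, hgu, r, hr, hgr⟩
  refine ⟨mul_mem (add_mem (one_mem _) (inr_mem_hereditaryUnitization hv.mem)) hg,
    IsUnit.mul ?_ hgu, r, hr, by simp [hgr]⟩
  exact (Unitary.toUnits ⟨_, (isUnitaryIncrement_iff.1 hv).2⟩).isUnit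

variable [PartialOrder V] [StarOrderedRing V]

/-- The elements of a list followed by a remainder `ρ` are positive, each is orthogonal to the sum
of the later ones and `ρ`, and twice its dimension is less than the dimension of that sum. -/
def DominatedChain (ρ : V) : List V → Prop
  | [] => True
  | d :: l => 0 ≤ d ∧ d * (l.sum + ρ) = 0 ∧
      (∀ τ : QuasiTrace V, ¬ τ.IsZero → 2 * dTau τ d < dTau τ (l.sum + ρ)) ∧ DominatedChain ρ l

lemma DominatedChain.sum_nonneg {ρ : V} : ∀ {l : List V}, DominatedChain ρ l → 0 ≤ l.sum
  | [], _ => by rw [List.sum_nil]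
  | d :: l, h => by
    rw [List.sum_cons]
    exact add_nonneg h.1 h.2.2.2.sum_nonneg

lemma add_add_mem_positiveScalarUnits {b c d D r : V} {g : Unitization ℂ V}
    (hc : IsSelfAdjoint c) (hd : IsSelfAdjoint d) (hcd : c * d = 0) (hcb : c ∈ closedRightIdeal b)
    (hdb : d ∈ closedRightIdeal b) (hg : g ∈ positiveScalarUnits c) (hD : 0 ≤ D)
    (hDd : D ∈ closedRightIdeal d) (hr : r ∈ closedRightIdeal d)
    (hr' : star r ∈ closedRightIdeal c) :
    g + (D : Unitization ℂ V) + (r : Unitization ℂ V) ∈ positiveScalarUnits b := by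
  obtain ⟨hgc, hgu, t, ht, hgt⟩ := hg
  have hDd' : star D ∈ closedRightIdeal d := by rwa [hD.star_eq]
  have hle := closedRightIdeal.le_of_mem hcb
  have hle' := closedRightIdeal.le_of_mem hdb
  have hdc : d * c = 0 := ((hc.commute_of_mul_eq_zero hd hcd).eq).symm.trans hcd
  have hinr {x y : V} (h : x * y = 0) : (x : Unitization ℂ V) * (y : Unitization ℂ V) = 0 := by
    rw [← Unitization.inr_mul, h, Unitization.inr_zero]
  have hgdec : g = t • (1 : Unitization ℂ V) + (g.snd : Unitization ℂ V) := by
    conv_lhs => rw [← Unitization.inl_fst_add_inr_snd_eq g, hgt]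
    rw [← Algebra.algebraMap_eq_smul_one]
    rfl
  refine ⟨add_mem (add_mem ⟨hle hgc.1, hle hgc.2⟩ ⟨hle' hDd, hle' hDd'⟩) ⟨hle' hr, hle hr'⟩, ?_,
    t, ht, by simp [hgt]⟩
  have hD_inr : (0 : Unitization ℂ V) ≤ t⁻¹ • (D : Unitization ℂ V) :=
    smul_nonneg (inv_nonneg.2 ht.le) (Unitization.inr_nonneg_iff.2 hD)
  have hunit : IsUnit (1 + t⁻¹ • (D : Unitization ℂ V)) :=
    CStarAlgebra.isUnit_of_le 1 (le_add_of_nonneg_right hD_inr) isStrictlyPositive_one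
  rw [hgdec] at hgu ⊢
  exact isUnit_smul_one_add_add_add ht.ne' hgu hunit
    (hinr (mul_eq_zero_of_star_mem hd hdc hDd' hgc.1))
    (hinr (mul_eq_zero_of_star_mem hc hcd hgc.2 hDd))
    (hinr (mul_eq_zero_of_star_mem hc hcd hgc.2 hr))
    (hinr (mul_eq_zero_of_star_mem hc hcd hr' hDd))
    (hinr (mul_eq_zero_of_star_mem hc hcd hr' hr))

lemma inr_add_mul_mem_closure_positiveScalarUnits {c d n : V} (hc : 0 ≤ c) (hd : 0 ≤ d)
    (hcd : c * d = 0) (hn : IsSelfAdjoint n) (hnc : n ∈ closedRightIdeal c)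
    (hw : ∀ w, ((c * w * n : V) : Unitization ℂ V) ∈ closure (positiveScalarUnits c)) {D x : V}
    (hD : 0 ≤ D) (hDd : D ∈ closedRightIdeal d) (hx : x ∈ closedRightIdeal (d + c)) :
    ((D + x * n : V) : Unitization ℂ V) ∈ closure (positiveScalarUnits (d + c)) := by
  refine closedRightIdeal.induction
    (p := fun x => ((D + x * n : V) : Unitization ℂ V) ∈ closure (positiveScalarUnits (d + c)))
    (isClosed_closure.preimage (Unitization.continuous_inr.comp (by fun_prop))) (fun w => ?_) hx
  have hsplit : ((D + (d + c) * w * n : V) : Unitization ℂ V) =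
      ((c * w * n : V) : Unitization ℂ V) + (D : Unitization ℂ V) +
        ((d * w * n : V) : Unitization ℂ V) := by
    rw [← Unitization.inr_add, ← Unitization.inr_add]
    congr 1
    noncomm_ring
  rw [hsplit]
  refine map_mem_closure
    (f := fun g => g + (D : Unitization ℂ V) + ((d * w * n : V) : Unitization ℂ V))
    ((continuous_id.add continuous_const).add continuous_const) (hw w) fun g hg => ?_
  refine add_add_mem_positiveScalarUnits hc.isSelfAdjoint hd.isSelfAdjoint hcd
    (mem_closedRightIdeal_of_le hc (le_add_of_nonneg_left hd))
    (mem_closedRightIdeal_of_le hd (le_add_of_nonneg_right hc)) hg hD hDd ?_ ?_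
  · rw [mul_assoc]
    exact closedRightIdeal.base_mul_mem _ _
  · rw [star_mul, hn.star_eq]
    exact closedRightIdeal.mul_mem hnc _

variable {L : ℕ → V → V}

lemma exists_norm_act_sub_sqrt_lt (hL : OrthogonalIsometries L) (hsc : StrictComparison V)
    {b d : V} (hb : 0 ≤ b) (hd : 0 ≤ d) (hdb : d ∈ closedRightIdeal b)
    (hlt : ∀ τ : QuasiTrace V, ¬ τ.IsZero → 3 * dTau τ d < dTau τ b) {z : V}
    (hz : z ∈ closedRightIdeal b) (hzd : star z ∈ closedRightIdeal d) {ε : ℝ} (hε : 0 < ε) :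
    ∃ v, IsUnitaryIncrement b v ∧ ‖z + v * z - CFC.sqrt (star z * z)‖ < ε := by
  have hzz : star z * z ∈ closedRightIdeal d := closedRightIdeal.mul_mem hzd _
  have hD := sqrt_mem_closedRightIdeal (star_mul_self_nonneg z) hzz
  have hgram : star (CFC.sqrt (star z * z)) * CFC.sqrt (star z * z) = star z * z := by
    rw [star_sqrt, CFC.sqrt_mul_sqrt_self _ (star_mul_self_nonneg z)]
  obtain ⟨δ, hδ, h⟩ :=
    exists_norm_act_sub_lt_of_dTau_lt hL hsc (max ‖z‖ ‖CFC.sqrt (star z * z)‖) hε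
  refine h b z _ hb hz (closedRightIdeal.le_of_mem hdb hD) (le_max_left _ _) (le_max_right _ _)
    (by rw [hgram, sub_self, norm_zero]; exact hδ.le) fun τ hτ => ?_
  have hle : dTau τ (star z * z) ≤ dTau τ d := dTau_le_dTau τ (star_mul_self_nonneg z) hd hzz
  rw [hgram]
  calc dTau τ (star z * z) + dTau τ (star z * z) + dTau τ (star z * z)
      ≤ dTau τ d + dTau τ d + dTau τ d := by gcongr
    _ = 3 * dTau τ d := by ring
    _ < dTau τ b := hlt τ hτ

lemma inr_mul_mul_add_mem_closure_positiveScalarUnits (hL : OrthogonalIsometries L)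
    (hsc : StrictComparison V) {c d n : V} (hc : 0 ≤ c) (hd : 0 ≤ d) (hdc : d * c = 0)
    (hlt : ∀ τ : QuasiTrace V, ¬ τ.IsZero → 2 * dTau τ d < dTau τ c) (hn : 0 ≤ n)
    (hnc : n ∈ closedRightIdeal c)
    (hw : ∀ w, ((c * w * n : V) : Unitization ℂ V) ∈ closure (positiveScalarUnits c)) (w : V) :
    (((d + c) * w * (d + n) : V) : Unitization ℂ V) ∈ closure (positiveScalarUnits (d + c)) := by
  set b := d + c
  have hdb : d ∈ closedRightIdeal b := mem_closedRightIdeal_of_le hd (le_add_of_nonneg_right hc)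
  have hcd : c * d = 0 :=
    ((hd.isSelfAdjoint.commute_of_mul_eq_zero hc.isSelfAdjoint hdc).eq).symm.trans hdc
  set z := b * w * d
  have hz : star z ∈ closedRightIdeal d := by
    rw [star_mul, hd.star_eq]
    exact closedRightIdeal.base_mul_mem _ _
  set D := CFC.sqrt (star z * z)
  have hDd : D ∈ closedRightIdeal d :=
    sqrt_mem_closedRightIdeal (star_mul_self_nonneg z) (closedRightIdeal.mul_mem hz _)
  rw [← closure_closure, Metric.mem_closure_iff]
  intro ε hε
  obtain ⟨v, hv, hvz⟩ := exists_norm_act_sub_sqrt_lt hL hsc (add_nonneg hd hc) hd hdb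
    (fun τ hτ => by
      have htop : dTau τ d ≠ ∞ := fun h => by simpa [h] using hlt τ hτ
      rw [dTau_add_of_mul_eq_zero τ hd hc hdc]
      calc 3 * dTau τ d = dTau τ d + 2 * dTau τ d := by ring
        _ < dTau τ d + dTau τ c := ENNReal.add_lt_add_left htop (hlt τ hτ))
    (closedRightIdeal.mul_mem (closedRightIdeal.base_mul_mem _ _) _) hz hε
  set y := D + (b * w + v * (b * w)) * n
  have hy : (y : Unitization ℂ V) ∈ closure (positiveScalarUnits b) :=
    inr_add_mul_mem_closure_positiveScalarUnits hc hd hcd hn.isSelfAdjoint hnc hw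
      (CFC.sqrt_nonneg _) hDd (hv.act_mem (closedRightIdeal.base_mul_mem _ _))
  refine ⟨_, hv.star.inr_act_mem_closure hy, ?_⟩
  set x := b * w * (d + n)
  have hxy : x - (y + star v * y) = (z + v * z - D) + star v * (z + v * z - D) := by
    have hdec : z + v * z - D = (x + v * x) - y := by
      simp only [x, y, z]
      noncomm_ring
    rw [hdec]
    conv_lhs => rw [← hv.star_act_act x]
    noncomm_ring
  rwa [dist_eq_norm, ← Unitization.inr_sub, Unitization.norm_inr, hxy, hv.star.norm_act]

lemma DominatedChain.inr_mul_mul_sum_mem_closure (hL : OrthogonalIsometries L)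
    (hsc : StrictComparison V) {ρ : V} (hρ : 0 ≤ ρ) {l : List V} (hl : DominatedChain ρ l) :
    ∀ w, (((l.sum + ρ) * w * l.sum : V) : Unitization ℂ V) ∈
      closure (positiveScalarUnits (l.sum + ρ)) := by
  induction l with
  | nil =>
    intro w
    rw [List.sum_nil, mul_zero]
    exact mem_closure_positiveScalarUnits_of_mul_self_eq_zero (zero_mem _) (mul_zero 0)
  | cons d l ih =>
    obtain ⟨hd, hdo, hlt, hl⟩ := hl
    rw [List.sum_cons, add_assoc]
    exact inr_mul_mul_add_mem_closure_positiveScalarUnits hL hsc (add_nonneg hl.sum_nonneg hρ) hd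
      hdo hlt hl.sum_nonneg
      (mem_closedRightIdeal_of_le hl.sum_nonneg (le_add_of_nonneg_right hρ)) (ih hl)

end DominatedChain

/-! ### Factorization through an orthogonal series -/

lemma exists_tendsto_of_forall_exists_dist_le {X : Type*} [PseudoMetricSpace X] [CompleteSpace X]
    {P : ℕ → X → Prop} (h₀ : ∃ x, P 0 x) {C : ℝ}
    (hstep : ∀ k x, P k x → ∃ x', P (k + 1) x' ∧ dist x x' ≤ C * (1 / 2) ^ k) :
    ∃ (u : ℕ → X) (x : X), (∀ k, P k (u k)) ∧ Tendsto u atTop (𝓝 x) := by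
  obtain ⟨x₀, hx₀⟩ := h₀
  choose! next hnext hdist using hstep
  let u : ℕ → X := Nat.rec x₀ next
  have hu : ∀ k, P k (u k) := Nat.rec hx₀ fun k ih => hnext k _ ih
  obtain ⟨x, hx⟩ := cauchySeq_tendsto_of_complete
    (cauchySeq_of_le_geometric (1 / 2) C (by norm_num) fun k => hdist k (u k) (hu k))
  exact ⟨u, x, hu, hx⟩

section OrthogonalSeries

variable {V : Type*} [NonUnitalCStarAlgebra V]

lemma positiveScalarUnits_subset {b b' : V} (h : b ∈ closedRightIdeal b') :
    positiveScalarUnits b ⊆ positiveScalarUnits b' :=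
  fun _ hg => ⟨⟨closedRightIdeal.le_of_mem h hg.1.1, closedRightIdeal.le_of_mem h hg.1.2⟩, hg.2⟩

lemma inr_mul_star_mem_of_forall_inr_mul_mul_mem {b : V} (hb : IsSelfAdjoint b)
    {S : Set (Unitization ℂ V)} (hS : IsClosed S)
    (h : ∀ w, ((b * w * b : V) : Unitization ℂ V) ∈ S) {x y : V} (hx : x ∈ closedRightIdeal b)
    (hy : y ∈ closedRightIdeal b) : ((x * star y : V) : Unitization ℂ V) ∈ S := by
  have hclosed {f : V → V} (hf : Continuous f) : IsClosed {x | (f x : Unitization ℂ V) ∈ S} :=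
    hS.preimage (Unitization.continuous_inr.comp hf)
  refine closedRightIdeal.induction (p := fun x => ((x * star y : V) : Unitization ℂ V) ∈ S)
    (hclosed (by fun_prop)) (fun s => ?_) hx
  refine closedRightIdeal.induction (p := fun y => ((b * s * star y : V) : Unitization ℂ V) ∈ S)
    (hclosed (by fun_prop)) (fun t => ?_) hy
  rw [star_mul, hb.star_eq, ← mul_assoc, mul_assoc b]
  exact h _

lemma norm_le_of_norm_star_mul_self_sub_le {x a : V} {k : ℕ}
    (hx : ‖star x * x - a‖ ≤ (1 / 4) ^ k) (ha : ‖a‖ ≤ (1 / 4) ^ k) : ‖x‖ ≤ 2 * (1 / 2) ^ k := by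
  rw [← sq_le_sq₀ (norm_nonneg _) (by positivity)]
  calc ‖x‖ ^ 2 ≤ ‖a‖ + (1 / 4) ^ k := norm_sq_le_of_norm_star_mul_self_sub_le hx
    _ ≤ 4 * (1 / 4) ^ k := by linarith [show (0 : ℝ) < (1 / 4) ^ k by positivity]
    _ = (2 * (1 / 2) ^ k) ^ 2 := by
      rw [mul_pow, pow_right_comm]
      norm_num

variable [PartialOrder V]

/-- A sequence of mutually orthogonal positive elements, twice the dimension of each being less
than the dimension of a finite sum of later ones. -/
structure DominatedSequence (d : ℕ → V) : Prop where
  nonneg : ∀ i, 0 ≤ d i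
  mul_eq_zero : ∀ i j, i ≠ j → d i * d j = 0
  exists_two_mul_lt : ∀ i, ∃ r, ∀ τ : QuasiTrace V, ¬ τ.IsZero →
    2 * dTau τ (d i) < ∑ j ∈ Finset.Ico (i + 1) r, dTau τ (d j)

lemma DominatedSequence.exists_forall_two_mul_lt {d : ℕ → V} (hd : DominatedSequence d) (n : ℕ) :
    ∃ r ≥ n, ∀ i < n, ∀ τ : QuasiTrace V, ¬ τ.IsZero →
      2 * dTau τ (d i) < ∑ j ∈ Finset.Ico (i + 1) r, dTau τ (d j) := by
  choose r hr using hd.exists_two_mul_lt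
  refine ⟨n + (Finset.range n).sup r, by omega, fun i hi τ hτ => (hr i τ hτ).trans_le ?_⟩
  have hri : r i ≤ (Finset.range n).sup r := Finset.le_sup (Finset.mem_range.2 hi)
  exact Finset.sum_le_sum_of_subset (Finset.Ico_subset_Ico le_rfl (by omega))

lemma DominatedSequence.sum_range_add_three_mul_lt {d : ℕ → V} {b : V}
    (hd : DominatedSequence d)
    (hlt : ∀ m, ∀ τ : QuasiTrace V, ¬ τ.IsZero → ∑ i ∈ Finset.range m, dTau τ (d i) < dTau τ b)
    (i : ℕ) (τ : QuasiTrace V) (hτ : ¬ τ.IsZero) :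
    ∑ j ∈ Finset.range i, dTau τ (d j) + 3 * dTau τ (d i) < dTau τ b := by
  obtain ⟨r, hr, hir⟩ := hd.exists_forall_two_mul_lt (i + 1)
  refine lt_of_le_of_lt ?_ (hlt r τ hτ)
  calc ∑ j ∈ Finset.range i, dTau τ (d j) + 3 * dTau τ (d i)
      = ∑ j ∈ Finset.range (i + 1), dTau τ (d j) + 2 * dTau τ (d i) := by
        rw [Finset.sum_range_succ]; ring
    _ ≤ ∑ j ∈ Finset.range (i + 1), dTau τ (d j) + ∑ j ∈ Finset.Ico (i + 1) r, dTau τ (d j) := by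
        gcongr
        exact (hir i (by omega) τ hτ).le
    _ = ∑ j ∈ Finset.range r, dTau τ (d j) := Finset.sum_range_add_sum_Ico _ hr

variable [StarOrderedRing V]

lemma dTau_sum_of_orthogonal (τ : QuasiTrace V) {d : ℕ → V} (hd : ∀ i, 0 ≤ d i)
    (ho : ∀ i j, i ≠ j → d i * d j = 0) (s : Finset ℕ) :
    dTau τ (∑ i ∈ s, d i) = ∑ i ∈ s, dTau τ (d i) := by
  induction s using Finset.induction_on with
  | empty => simp [dTau_zero]
  | insert i s hi ih =>
    rw [Finset.sum_insert hi, Finset.sum_insert hi, ← ih]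
    refine dTau_add_of_mul_eq_zero τ (hd i) (Finset.sum_nonneg fun j _ => hd j) ?_
    rw [Finset.mul_sum]
    exact Finset.sum_eq_zero fun j hj => ho i j fun h => hi (h ▸ hj)

lemma sum_range_le_of_tendsto {d : ℕ → V} (hd : ∀ i, 0 ≤ d i) {D : V}
    (hD : Tendsto (fun n => ∑ i ∈ Finset.range n, d i) atTop (𝓝 D)) (n : ℕ) :
    ∑ i ∈ Finset.range n, d i ≤ D :=
  Monotone.ge_of_tendsto (fun _ _ h => Finset.sum_le_sum_of_subset_of_nonneg
    (Finset.range_mono h) fun i _ _ => hd i) hD n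

namespace DominatedSequence

variable {d : ℕ → V}

lemma dominatedChain_map_range' (hd : DominatedSequence d) {n r : ℕ} (hnr : n ≤ r)
    (h : ∀ i < n, ∀ τ : QuasiTrace V, ¬ τ.IsZero →
      2 * dTau τ (d i) < ∑ j ∈ Finset.Ico (i + 1) r, dTau τ (d j)) (m : ℕ) :
    ∀ s, s + m = n → DominatedChain (∑ j ∈ Finset.Ico n r, d j) ((List.range' s m).map d) := by
  induction m with
  | zero => exact fun _ _ => trivial
  | succ m ih =>
    intro s hs
    have hrange : ((List.range' (s + 1) m).map d).sum = ∑ j ∈ Finset.Ico (s + 1) n, d j := by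
      rw [show m = n - (s + 1) by omega]
      rfl
    have hsum : ((List.range' (s + 1) m).map d).sum + ∑ j ∈ Finset.Ico n r, d j =
        ∑ j ∈ Finset.Ico (s + 1) r, d j := by
      rw [hrange, Finset.sum_Ico_consecutive _ (by omega) hnr]
    refine ⟨hd.nonneg s, ?_, fun τ hτ => ?_, ih (s + 1) (by omega)⟩
    · rw [hsum, Finset.mul_sum]
      refine Finset.sum_eq_zero fun j hj => hd.mul_eq_zero s j ?_
      have := Finset.mem_Ico.1 hj
      omega
    · rw [hsum, dTau_sum_of_orthogonal τ hd.nonneg hd.mul_eq_zero]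
      exact h s (by omega) τ hτ

variable {L : ℕ → V → V}

lemma inr_mul_mul_sum_range_mem_closure (hL : OrthogonalIsometries L) (hsc : StrictComparison V)
    (hd : DominatedSequence d) (n : ℕ) : ∃ r ≥ n, ∀ w,
      (((∑ i ∈ Finset.range r, d i) * w * ∑ i ∈ Finset.range n, d i : V) : Unitization ℂ V) ∈
        closure (positiveScalarUnits (∑ i ∈ Finset.range r, d i)) := by
  obtain ⟨r, hnr, hr⟩ := hd.exists_forall_two_mul_lt n
  refine ⟨r, hnr, ?_⟩
  have hchain := hd.dominatedChain_map_range' hnr hr n 0 (zero_add n)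
  have hrange : ((List.range' 0 n).map d).sum = ∑ i ∈ Finset.range n, d i := by
    rw [Finset.range_eq_Ico]
    rfl
  have h := hchain.inr_mul_mul_sum_mem_closure hL hsc (Finset.sum_nonneg fun j _ => hd.nonneg j)
  rwa [hrange, Finset.sum_range_add_sum_Ico _ hnr] at h

lemma inr_mul_star_mem_closure (hL : OrthogonalIsometries L) (hsc : StrictComparison V)
    (hd : DominatedSequence d) {D : V}
    (hD : Tendsto (fun n => ∑ i ∈ Finset.range n, d i) atTop (𝓝 D)) {x y : V}
    (hx : x ∈ closedRightIdeal D) (hy : y ∈ closedRightIdeal D) :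
    ((x * star y : V) : Unitization ℂ V) ∈ closure (positiveScalarUnits D) := by
  have hle := sum_range_le_of_tendsto hd.nonneg hD
  have hnonneg n : 0 ≤ ∑ i ∈ Finset.range n, d i := Finset.sum_nonneg fun j _ => hd.nonneg j
  have hD₀ : 0 ≤ D := (hnonneg 0).trans (hle 0)
  choose r hr hmem using hd.inr_mul_mul_sum_range_mem_closure hL hsc
  refine inr_mul_star_mem_of_forall_inr_mul_mul_mem hD₀.isSelfAdjoint isClosed_closure
    (fun w => ?_) hx hy
  have hlim := ((hD.comp (tendsto_atTop_mono hr tendsto_id)).mul_const w).mul hD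
  refine isClosed_closure.mem_of_tendsto ((Unitization.continuous_inr.tendsto _).comp hlim)
    (Eventually.of_forall fun n => ?_)
  exact closure_mono (positiveScalarUnits_subset
    (mem_closedRightIdeal_of_le (hnonneg (r n)) (hle (r n)))) (hmem n w)

end DominatedSequence

/-- Successive approximants are moved close to one another by unitaries over `D`, so that they
converge. -/
lemma exists_star_mul_self_eq_of_forall_inr_mul_star_mem {a D : V}
    (hD : ∀ x ∈ closedRightIdeal D, ∀ y ∈ closedRightIdeal D,
      ((x * star y : V) : Unitization ℂ V) ∈ closure (positiveScalarUnits D))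
    (ha : ∀ ε > 0, ∃ y ∈ closedRightIdeal D, ‖star y * y - a‖ ≤ ε) :
    ∃ x ∈ closedRightIdeal D, star x * x = a := by
  choose σ hσ hact using fun k : ℕ => exists_norm_act_sub_lt (V := V) (‖a‖ + 1)
    (show (0 : ℝ) < (1 / 2) ^ k by positivity)
  let θ : ℕ → ℝ := fun k => min (σ k / 2) (1 / ((k : ℝ) + 1))
  have hθ k : 0 < θ k := lt_min (half_pos (hσ k)) (by positivity)
  have hθ₁ k : θ k ≤ 1 := (min_le_right _ _).trans (by
    rw [div_le_one (by positivity)]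
    linarith [(Nat.cast_nonneg k : (0 : ℝ) ≤ k)])
  have hnorm {x : V} {k : ℕ} (hx : ‖star x * x - a‖ ≤ θ k) : ‖x‖ ≤ ‖a‖ + 1 := by
    have := norm_sq_le_of_norm_star_mul_self_sub_le (hx.trans (hθ₁ k))
    nlinarith [norm_nonneg a, norm_nonneg x]
  obtain ⟨u, x, hu, hx⟩ := exists_tendsto_of_forall_exists_dist_le (C := 1)
    (P := fun k x => x ∈ closedRightIdeal D ∧ ‖star x * x - a‖ ≤ θ k) (ha _ (hθ 0)) (by
      rintro k x ⟨hxD, hxa⟩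
      obtain ⟨y, hyD, hya⟩ := ha (min (θ k) (θ (k + 1))) (lt_min (hθ _) (hθ _))
      have hyk := hya.trans (min_le_left _ _)
      obtain ⟨v, hv, hvx⟩ := hact k D x y (hnorm hxa) (hnorm hyk) (by
        linarith [norm_sub_le_norm_sub_add_norm_sub (star x * x) a (star y * y),
          norm_sub_rev a (star y * y), (min_le_left _ _ : θ k ≤ σ k / 2)]) (hD x hxD y hyD)
      refine ⟨y + v * y, ⟨hv.act_mem hyD, ?_⟩, ?_⟩
      · rw [hv.star_act_mul_act]
        exact hya.trans (min_le_right _ _)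
      · rw [one_mul, dist_comm, dist_eq_norm]
        exact hvx.le)
  refine ⟨x, (closedRightIdeal.isClosed D).mem_of_tendsto hx (.of_forall fun k => (hu k).1),
    tendsto_nhds_unique (hx.star.mul hx) (tendsto_iff_norm_sub_tendsto_zero.2 ?_)⟩
  exact squeeze_zero (fun _ => norm_nonneg _) (fun k => (hu k).2.trans (min_le_right _ _))
    tendsto_one_div_add_atTop_nhds_zero_nat

variable {L : ℕ → V → V} {d : ℕ → V} {b D : V}

lemma exists_star_mul_self_eq_of_sum_lt (hL : OrthogonalIsometries L) (hsc : StrictComparison V)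
    (hb : 0 ≤ b) (hd : ∀ i, 0 ≤ d i) (hdn : ∀ i, ‖d i‖ ≤ (1 / 4) ^ i)
    (hD : Tendsto (fun n => ∑ i ∈ Finset.range n, d i) atTop (𝓝 D))
    (hlt : ∀ i, ∀ τ : QuasiTrace V, ¬ τ.IsZero →
      ∑ j ∈ Finset.range i, dTau τ (d j) + 3 * dTau τ (d i) < dTau τ b) :
    ∃ x ∈ closedRightIdeal b, star x * x = D := by
  choose σ hσ hact using fun k : ℕ => exists_isUnitaryIncrement_norm_sum_sub_le hL hsc k
    (show (0 : ℝ) < (1 / 2) ^ k by positivity)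
  let θ : ℕ → ℝ := fun k => min ((1 / 4) ^ k) (σ k)
  have hθ k : 0 < θ k := lt_min (by positivity) (hσ k)
  have hlt' m (τ : QuasiTrace V) (hτ : ¬ τ.IsZero) :
      ∑ i ∈ Finset.range m, dTau τ (d i) < dTau τ b := le_self_add.trans_lt (hlt m τ hτ)
  obtain ⟨u, x, hu, hx⟩ := exists_tendsto_of_forall_exists_dist_le (C := 3)
    (P := fun k x => ∃ y, IsOrthogonalFamily b d (θ k) k y ∧ x = ∑ i ∈ Finset.range k, y i)
    ⟨0, 0, ⟨by simp, by simp, by simp, by simp⟩, by simp⟩ (by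
      rintro k _ ⟨y, hy, rfl⟩
      obtain ⟨z, hz⟩ := exists_isOrthogonalFamily hL hsc (lt_min (hθ k) (hθ (k + 1))) (k + 1)
        (fun i _ => hd i) b hb (hlt' (k + 1))
      have hzk := hz.mono (min_le_left _ _) le_rfl
      obtain ⟨v, hv, hvyz⟩ := hact k b d y z hb hd
        (fun i => (hdn i).trans (pow_le_one₀ (by norm_num) (by norm_num))) hlt
        (hy.mono (min_le_right _ _) le_rfl) (hzk.mono (min_le_right _ _) k.le_succ)
      refine ⟨_, ⟨_, (hz.mono (min_le_right _ _) le_rfl).act hv, rfl⟩, ?_⟩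
      have hlast : ‖z k + v * z k‖ ≤ 2 * (1 / 2) ^ k := by
        rw [hv.norm_act]
        exact norm_le_of_norm_star_mul_self_sub_le
          ((hzk.norm_sub_le k k.lt_succ_self).trans (min_le_left _ _)) (hdn k)
      rw [dist_eq_norm, Finset.sum_range_succ, ← sub_sub]
      linarith [norm_sub_le_of_le hvyz hlast])
  refine ⟨x, (closedRightIdeal.isClosed b).mem_of_tendsto hx (.of_forall fun k => ?_),
    tendsto_nhds_unique (hx.star.mul hx) ?_⟩
  · obtain ⟨y, hy, hyk⟩ := hu k
    rw [hyk]
    exact sum_mem fun i hi => hy.mem i (Finset.mem_range.1 hi)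
  · have hgap : Tendsto (fun k => star (u k) * u k - ∑ i ∈ Finset.range k, d i) atTop (𝓝 0) := by
      refine squeeze_zero_norm (fun k => ?_) (tendsto_self_mul_const_pow_of_lt_one
        (r := (1 / 4 : ℝ)) (by norm_num) (by norm_num))
      obtain ⟨y, hy, hyk⟩ := hu k
      rw [hyk]
      exact hy.norm_star_sum_mul_sum_sub_le.trans (by gcongr; exact min_le_left _ _)
    simpa using hgap.add hD

lemma exists_star_mul_self_eq_star_mul_self {x t : V} (hD : 0 ≤ D)
    (hx : x ∈ closedRightIdeal D) (ht : t ∈ closedRightIdeal b) (htD : star t * t = D) :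
    ∃ z ∈ closedRightIdeal b, star z * z = star x * x := by
  choose w hw using fun n : ℕ =>
    closedRightIdeal.exists_norm_sub_lt hx (show (0 : ℝ) < 1 / ((n : ℝ) + 1) by positivity)
  have hlim : Tendsto (fun n => D * w n) atTop (𝓝 x) := by
    refine tendsto_iff_norm_sub_tendsto_zero.2 (squeeze_zero (fun _ => norm_nonneg _)
      (fun n => ?_) tendsto_one_div_add_atTop_nhds_zero_nat)
    rw [norm_sub_rev]
    exact (hw n).le
  have hgram (p : V) :
      star (t * (CFC.sqrt D * p)) * (t * (CFC.sqrt D * p)) = star (D * p) * (D * p) := by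
    calc star (t * (CFC.sqrt D * p)) * (t * (CFC.sqrt D * p))
        = star p * CFC.sqrt D * (star t * t) * (CFC.sqrt D * p) := by
          rw [star_mul, star_mul, star_sqrt]; noncomm_ring
      _ = star p * (CFC.sqrt D * CFC.sqrt D) * ((CFC.sqrt D * CFC.sqrt D) * p) := by
          rw [htD]; nth_rw 2 [← CFC.sqrt_mul_sqrt_self D]; noncomm_ring
      _ = star (D * p) * (D * p) := by rw [CFC.sqrt_mul_sqrt_self D, star_mul, hD.star_eq]
  have hnorm (p : V) : ‖t * (CFC.sqrt D * p)‖ = ‖D * p‖ := by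
    rw [← mul_self_inj_of_nonneg (norm_nonneg _) (norm_nonneg _), ← CStarRing.norm_star_mul_self,
      hgram, CStarRing.norm_star_mul_self]
  have hcauchy : CauchySeq fun n => t * (CFC.sqrt D * w n) := by
    have hc := hlim.cauchySeq
    rw [Metric.cauchySeq_iff] at hc ⊢
    simpa only [dist_eq_norm, ← mul_sub, hnorm] using hc
  obtain ⟨z, hz⟩ := cauchySeq_tendsto_of_complete hcauchy
  have hzz := hz.star.mul hz
  simp only [hgram] at hzz
  exact ⟨z, (closedRightIdeal.isClosed b).mem_of_tendsto hz
    (.of_forall fun n => closedRightIdeal.mul_mem ht _),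
    tendsto_nhds_unique hzz (hlim.star.mul hlim)⟩

lemma exists_norm_star_mul_self_sub_lt_of_dTau_lt (hsc : StrictComparison V)
    (hd : ∀ i, 0 ≤ d i) (ho : ∀ i j, i ≠ j → d i * d j = 0)
    (hD : Tendsto (fun n => ∑ i ∈ Finset.range n, d i) atTop (𝓝 D)) {a' : V} (ha' : 0 ≤ a')
    {n : ℕ} (hlt : ∀ τ : QuasiTrace V, ¬ τ.IsZero →
      dTau τ a' < ∑ i ∈ Finset.range n, dTau τ (d i)) {ε : ℝ} (hε : 0 < ε) :
    ∃ y ∈ closedRightIdeal D, ‖star y * y - a'‖ < ε := by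
  have hnonneg : 0 ≤ ∑ i ∈ Finset.range n, d i := Finset.sum_nonneg fun j _ => hd j
  have hcuntz : CuntzLE a' (∑ i ∈ Finset.range n, d i) := hsc _ _ ha' hnonneg fun τ hτ => by
    rw [dTau_sum_of_orthogonal τ hd ho]
    exact hlt τ hτ
  obtain ⟨y, hy, -, hya⟩ := hcuntz.exists_norm_star_mul_self_sub_lt ha' hnonneg hε
  exact ⟨y, closedRightIdeal.le_of_mem
    (mem_closedRightIdeal_of_le hnonneg (sum_range_le_of_tendsto hd hD n)) hy, hya⟩

lemma DominatedSequence.exists_star_mul_self_eq (hL : OrthogonalIsometries L)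
    (hsc : StrictComparison V) (hd : DominatedSequence d) (hdn : ∀ i, ‖d i‖ ≤ (1 / 4) ^ i) {a : V}
    (hb : 0 ≤ b)
    (happrox : ∀ δ > 0, ∃ (n : ℕ) (a' : V), 0 ≤ a' ∧ ‖a - a'‖ < δ ∧
      ∀ τ : QuasiTrace V, ¬ τ.IsZero → dTau τ a' < ∑ i ∈ Finset.range n, dTau τ (d i))
    (hlt : ∀ m, ∀ τ : QuasiTrace V, ¬ τ.IsZero → ∑ i ∈ Finset.range m, dTau τ (d i) < dTau τ b) :
    ∃ x : V, star x * x = a ∧ x * star x ∈ her b := by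
  obtain ⟨D, hsum⟩ := Summable.of_norm_bounded (summable_geometric_of_lt_one (r := (1 / 4 : ℝ))
    (by norm_num) (by norm_num)) hdn
  have hD := hsum.tendsto_sum_nat
  obtain ⟨x, hx, hxa⟩ : ∃ x ∈ closedRightIdeal D, star x * x = a := by
    refine exists_star_mul_self_eq_of_forall_inr_mul_star_mem
      (fun x hx y hy => hd.inr_mul_star_mem_closure hL hsc hD hx hy) fun ε hε => ?_
    obtain ⟨n, a', ha', haa', hn⟩ := happrox (ε / 2) (half_pos hε)
    obtain ⟨y, hy, hya⟩ := exists_norm_star_mul_self_sub_lt_of_dTau_lt hsc hd.nonneg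
      hd.mul_eq_zero hD ha' hn (half_pos hε)
    exact ⟨y, hy, by
      linarith [norm_sub_le_norm_sub_add_norm_sub (star y * y) a' a, norm_sub_rev a a']⟩
  obtain ⟨t, ht, htD⟩ := exists_star_mul_self_eq_of_sum_lt hL hsc hb hd.nonneg hdn hD
    (hd.sum_range_add_three_mul_lt hlt)
  have hD₀ : 0 ≤ D := by simpa using sum_range_le_of_tendsto hd.nonneg hD 0
  obtain ⟨z, hz, hzx⟩ := exists_star_mul_self_eq_star_mul_self hD₀ hx ht htD
  exact ⟨z, hzx.trans hxa, closedRightIdeal.mul_star_mem_her hb.isSelfAdjoint hz⟩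

end OrthogonalSeries

/-! ### The stabilization -/

section Stabilization

variable {A W : Type*} [NonUnitalCStarAlgebra A] [NonUnitalCStarAlgebra W]

namespace Stabilization

variable (SB : Stabilization A W)

lemma continuous_emb (i j : ℕ) : Continuous (SB.emb i j) :=
  (AddMonoidHomClass.isometry_of_norm (SB.emb i j) (SB.norm_emb i j)).continuous

lemma emb_mul_emb (i j k : ℕ) (a b : A) :
    SB.emb i j a * SB.emb j k b = SB.emb i k (a * b) := by
  rw [SB.emb_mul, if_pos rfl]

lemma induction {p : W → Prop} (hp : IsClosed {w | p w}) (emb : ∀ i j a, p (SB.emb i j a))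
    (add : ∀ x y, p x → p y → p (x + y)) (w : W) : p w := by
  refine hp.closure_subset_iff.2 (fun w hw => ?_) (SB.dense_span w)
  suffices h : ∀ c : ℂ, p (c • w) from one_smul ℂ w ▸ h 1
  induction hw using Submodule.span_induction with
  | mem w h =>
    obtain ⟨i, j, a, rfl⟩ := h
    exact fun c => by rw [← map_smul]; exact emb i j _
  | zero => exact fun c => by simpa only [map_zero, smul_zero] using emb 0 0 0
  | add x y _ _ hx hy => exact fun c => by rw [smul_add]; exact add _ _ (hx c) (hy c)
  | smul d w _ h => exact fun c => by rw [smul_smul]; exact h _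

/-- The graphs of the shifts `e_{pq} ↦ e_{⟨i,p⟩,q}`, `i : ℕ`, taken simultaneously, on finite sums
of matrix units with coefficients in `A`. The pairing `⟨i,p⟩` splits `ℕ` into infinitely many copies
of itself, so the shifts are isometries with orthogonal ranges. -/
def shiftGraph : Submodule ℂ (W × (ℕ → W)) :=
  Submodule.span ℂ {z | ∃ (p q : ℕ) (a : A),
    z = (SB.emb p q a, fun i => SB.emb (Nat.pair i p) q a)}

variable {SB}

lemma star_mul_of_mem_shiftGraph {x y : W × (ℕ → W)} (hx : x ∈ SB.shiftGraph)
    (hy : y ∈ SB.shiftGraph) (i j : ℕ) :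
    star (x.2 i) * y.2 j = if i = j then star x.1 * y.1 else 0 := by
  induction hx, hy using Submodule.span_induction₂ with
  | mem_mem x y hx hy =>
    obtain ⟨p, q, a, rfl⟩ := hx
    obtain ⟨p', q', a', rfl⟩ := hy
    simp only [SB.emb_star, SB.emb_mul, Nat.pair_eq_pair]
    by_cases hij : i = j <;> by_cases hp : p = p' <;> simp [hij, hp]
  | zero_left => simp
  | zero_right => simp
  | add_left x y z _ _ _ hx hy => simp [add_mul, hx, hy, ite_add_ite]
  | add_right x y z _ _ _ hy hz => simp [mul_add, hy, hz, ite_add_ite]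
  | smul_left c x y _ _ h => simp [smul_mul_assoc, h]
  | smul_right c x y _ _ h => simp [mul_smul_comm, h]

lemma norm_snd_of_mem_shiftGraph {x : W × (ℕ → W)} (hx : x ∈ SB.shiftGraph) (i : ℕ) :
    ‖x.2 i‖ = ‖x.1‖ := by
  rw [← mul_self_inj (norm_nonneg _) (norm_nonneg _), ← CStarRing.norm_star_mul_self,
    ← CStarRing.norm_star_mul_self, star_mul_of_mem_shiftGraph hx hx, if_pos rfl]

variable (SB)

lemma exists_mem_shiftGraph_tendsto (w : W) :
    ∃ u : ℕ → W × (ℕ → W), (∀ n, u n ∈ SB.shiftGraph) ∧ Tendsto (fun n => (u n).1) atTop (𝓝 w) := by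
  have hspan : Submodule.span ℂ {w : W | ∃ (i j : ℕ) (a : A), w = SB.emb i j a} ≤
      SB.shiftGraph.map (LinearMap.fst ℂ W (ℕ → W)) := by
    rw [Submodule.span_le]
    rintro _ ⟨p, q, a, rfl⟩
    exact ⟨_, Submodule.subset_span ⟨p, q, a, rfl⟩, rfl⟩
  obtain ⟨s, hs, hsw⟩ := mem_closure_iff_seq_limit.1 (SB.dense_span w)
  choose u hu hus using fun n => hspan (hs n)
  exact ⟨u, hu, (tendsto_congr hus).2 hsw⟩

lemma exists_orthogonalIsometries (SB : Stabilization A W) :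
    ∃ L : ℕ → W → W, OrthogonalIsometries L := by
  choose u hu huw using SB.exists_mem_shiftGraph_tendsto
  have hlim (i : ℕ) (w : W) : ∃ l, Tendsto (fun n => (u w n).2 i) atTop (𝓝 l) := by
    refine cauchySeq_tendsto_of_complete (cauchySeq_iff_tendsto_dist_atTop_0.2 ?_)
    have hdist (m n : ℕ) : dist ((u w m).2 i) ((u w n).2 i) = dist (u w m).1 (u w n).1 := by
      rw [dist_eq_norm, dist_eq_norm]
      exact norm_snd_of_mem_shiftGraph (sub_mem (hu w m) (hu w n)) i
    simpa only [hdist] using cauchySeq_iff_tendsto_dist_atTop_0.1 (huw w).cauchySeq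
  choose L hL using hlim
  refine ⟨L, fun i j x y => tendsto_nhds_unique ((hL i x).star.mul (hL j y)) ?_⟩
  simp only [star_mul_of_mem_shiftGraph (hu x _) (hu y _)]
  split_ifs
  · exact (huw x).star.mul (huw y)
  · exact tendsto_const_nhds

lemma exists_emb_mul_mul_emb_eq (i j : ℕ) (a b : A) (w : W) :
    ∃ c : A, SB.emb 0 i a * w * SB.emb j 0 b = SB.emb 0 0 c := by
  have hclosed : IsClosed (Set.range (SB.emb 0 0)) :=
    (AddMonoidHomClass.isometry_of_norm (SB.emb 0 0)
      (SB.norm_emb 0 0)).isClosedEmbedding.isClosed_range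
  suffices h : SB.emb 0 i a * w * SB.emb j 0 b ∈ (SB.emb 0 0).range from h.imp fun _ hc => hc.symm
  refine SB.induction (p := fun w => SB.emb 0 i a * w * SB.emb j 0 b ∈ (SB.emb 0 0).range)
    (hclosed.preimage (by fun_prop)) (fun p q c => ?_)
    (fun x y hx hy => by rw [mul_add, add_mul]; exact add_mem hx hy) w
  simp only [SB.emb_mul]
  split_ifs <;> simp [SB.emb_mul, apply_ite (· ∈ (SB.emb 0 0).range)]

variable [PartialOrder A] [StarOrderedRing A]

lemma eq_zero_of_forall_mul_emb_eq_zero {w : W} (h : ∀ j b, w * SB.emb j 0 b = 0) : w = 0 := by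
  have hmul (j k : ℕ) (b : A) : w * SB.emb j k b = 0 := by
    refine closedRightIdeal.induction (b := b * star b)
      (isClosed_eq ((SB.continuous_emb j k).const_mul w) continuous_const) (fun y => ?_)
      (mem_closedRightIdeal_of_mul_star_le (x := b) le_rfl)
    rw [← SB.emb_mul_emb j 0 k, ← mul_assoc, h, zero_mul]
  refine (CStarRing.mul_star_self_eq_zero_iff w).1 ?_
  exact SB.induction (isClosed_eq (continuous_const_mul w) continuous_const) hmul
    (fun x y hx hy => by rw [mul_add, hx, hy, add_zero]) (star w)

lemma eq_zero_of_forall_emb_mul_mul_emb_eq_zero {w : W}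
    (h : ∀ i j a b, SB.emb 0 i a * w * SB.emb j 0 b = 0) : w = 0 := by
  have hleft (i : ℕ) (a : A) : SB.emb 0 i a * w = 0 :=
    SB.eq_zero_of_forall_mul_emb_eq_zero fun j b => h i j a b
  refine star_eq_zero.1 (SB.eq_zero_of_forall_mul_emb_eq_zero fun j b => ?_)
  simpa only [star_mul, star_star, star_zero, SB.emb_star] using congrArg star (hleft j (star b))

/-- The inclusion `a ↦ a ⊗ e₀₀` of `A` as a corner of its stabilization. -/
def corner : A →ₙ+* W where
  toFun := SB.emb 0 0
  map_mul' a b := (SB.emb_mul_emb 0 0 0 a b).symm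
  map_zero' := map_zero _
  map_add' := map_add _

lemma eq_univ_of_comap_corner_eq_univ {I : TwoSidedIdeal W} (hI : IsClosed (I : Set W))
    (h : (I.comap SB.corner : Set A) = Set.univ) : (I : Set W) = Set.univ := by
  have hcorner (a : A) : SB.emb 0 0 a ∈ I :=
    (TwoSidedIdeal.mem_comap SB.corner).1 (Set.eq_univ_iff_forall.1 h a)
  refine Set.eq_univ_of_forall
    (SB.induction hI (fun i j a => ?_) fun x y hx hy => I.add_mem hx hy)
  refine closedRightIdeal.induction (b := a * star a) (hI.preimage (SB.continuous_emb i j))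
    (fun y => ?_) (mem_closedRightIdeal_of_mul_star_le (x := a) le_rfl)
  rw [← SB.emb_mul_emb i 0 j, ← SB.emb_mul_emb i 0 0]
  exact I.mul_mem_right _ _ (I.mul_mem_left _ _ (hcorner _))

lemma eq_zero_of_comap_corner_eq_zero {I : TwoSidedIdeal W}
    (h : (I.comap SB.corner : Set A) = {0}) : (I : Set W) = {0} := by
  refine Set.eq_singleton_iff_unique_mem.2 ⟨I.zero_mem, fun w hw => ?_⟩
  refine SB.eq_zero_of_forall_emb_mul_mul_emb_eq_zero fun i j a b => ?_
  obtain ⟨c, hc⟩ := SB.exists_emb_mul_mul_emb_eq i j a b w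
  have hcI : c ∈ (I.comap SB.corner : Set A) := (TwoSidedIdeal.mem_comap SB.corner).2 <| by
    change SB.emb 0 0 c ∈ I
    exact hc ▸ I.mul_mem_right _ _ (I.mul_mem_left _ _ hw)
  rw [h, Set.mem_singleton_iff] at hcI
  rw [hc, hcI, map_zero]

lemma isSimpleCStar (SB : Stabilization A W) (hA : IsSimpleCStar A) : IsSimpleCStar W := by
  obtain ⟨a, ha⟩ := hA.1
  refine ⟨⟨SB.emb 0 0 a, norm_ne_zero_iff.1 (by rwa [SB.norm_emb, norm_ne_zero_iff])⟩,
    fun I hI => ?_⟩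
  have hclosed : IsClosed (I.comap SB.corner : Set A) := by
    have hcoe : (I.comap SB.corner : Set A) = SB.emb 0 0 ⁻¹' I :=
      Set.ext fun _ => TwoSidedIdeal.mem_comap SB.corner
    exact hcoe ▸ hI.preimage (SB.continuous_emb 0 0)
  exact (hA.2 _ hclosed).imp SB.eq_zero_of_comap_corner_eq_zero
    (SB.eq_univ_of_comap_corner_eq_univ hI)

end Stabilization

end Stabilization

/-! ### Full elements of a simple C*-algebra -/

section IdealSpan

variable {V : Type*} [NonUnitalCStarAlgebra V]

/-- The linear span of `V e V`, an ideal that need not be closed. -/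
def idealSpan (e : V) : Submodule ℂ V := Submodule.span ℂ {z | ∃ y y' : V, z = y * e * y'}

lemma mul_mem_idealSpan {e z : V} (w : V) (hz : z ∈ idealSpan e) : w * z ∈ idealSpan e := by
  suffices h : idealSpan e ≤ (idealSpan e).comap (LinearMap.mulLeft ℂ w) from h hz
  rw [idealSpan, Submodule.span_le]
  rintro _ ⟨y, y', rfl⟩
  exact Submodule.subset_span ⟨w * y, y', by simp only [LinearMap.mulLeft_apply, mul_assoc]⟩

lemma mem_idealSpan_mul {e z : V} (hz : z ∈ idealSpan e) (w : V) : z * w ∈ idealSpan e := by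
  suffices h : idealSpan e ≤ (idealSpan e).comap (LinearMap.mulRight ℂ w) from h hz
  rw [idealSpan, Submodule.span_le]
  rintro _ ⟨y, y', rfl⟩
  exact Submodule.subset_span ⟨y, y' * w, by simp only [LinearMap.mulRight_apply, mul_assoc]⟩

lemma exists_eq_sum_mul_mul_of_mem_idealSpan {e z : V} (hz : z ∈ idealSpan e) :
    ∃ (n : ℕ) (y y' : Fin n → V), z = ∑ i, y i * e * y' i := by
  obtain ⟨n, c, g, rfl⟩ := Submodule.mem_span_set'.1 hz
  choose y y' hy using fun i => (g i).2
  exact ⟨n, fun i => c i • y i, y', by simp only [hy, smul_mul_assoc]⟩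

/-- An element is full if the closed two-sided ideal it generates is everything. -/
def IsFull (e : V) : Prop := ∀ x, x ∈ (idealSpan e).topologicalClosure

lemma IsSimpleCStar.isFull (hV : IsSimpleCStar V) {e : V} (he : e ≠ 0) : IsFull e := by
  intro x
  let I : TwoSidedIdeal V := TwoSidedIdeal.mk' ((idealSpan e).topologicalClosure : Set V)
    (zero_mem _) add_mem neg_mem
    (fun {w _} hz => map_mem_closure (continuous_const_mul w) hz fun _ => mul_mem_idealSpan w)
    (fun {_ w} hz => map_mem_closure (f := (· * w)) (continuous_mul_const w) hz
      fun _ h => mem_idealSpan_mul h w)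
  have hcoe : (I : Set V) = (idealSpan e).topologicalClosure := by
    ext z; exact TwoSidedIdeal.mem_mk' _ _ _ _ _ _ z
  rcases hV.2 I (hcoe ▸ Submodule.isClosed_topologicalClosure _) with hI | hI
  · have hmem : e * star e * star (e * star e) ∈ (I : Set V) := by
      rw [hcoe, (IsSelfAdjoint.mul_star_self e).star_eq]
      exact Submodule.le_topologicalClosure _
        (Submodule.subset_span ⟨e * star e, star e, (mul_assoc _ _ _).symm⟩)
    rw [hI, Set.mem_singleton_iff, CStarRing.mul_star_self_eq_zero_iff,
      CStarRing.mul_star_self_eq_zero_iff] at hmem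
    exact absurd hmem he
  · exact (hcoe ▸ hI ▸ Set.mem_univ x : x ∈ ((idealSpan e).topologicalClosure : Set V))

end IdealSpan

/-! ### Uniform estimates over all quasitraces -/

section UniformEstimates

variable {V : Type*} [NonUnitalCStarAlgebra V]

lemma exists_eq_mul_mul_of_norm_sub_lt_one {f h x : V} (hf : f * h = f) (hx : ‖h - x‖ < 1) :
    ∃ y : V, f = f * x * y := by
  obtain ⟨u, hu⟩ := isUnit_one_sub_of_norm_lt_one
    (show ‖((h - x : V) : Unitization ℂ V)‖ < 1 by rwa [Unitization.norm_inr])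
  have hfu : (f : Unitization ℂ V) * u = (f * x : V) := by
    rw [hu, mul_sub, mul_one, ← Unitization.inr_mul, mul_sub, hf, ← Unitization.inr_sub,
      sub_sub_cancel]
  obtain ⟨y, hy⟩ : ∃ y : V, (↑u⁻¹ : Unitization ℂ V) * (h : Unitization ℂ V) = y := by
    set v : Unitization ℂ V := ↑u⁻¹
    exact ⟨(v * (h : Unitization ℂ V)).snd, by ext <;> simp⟩
  refine ⟨y, Unitization.inr_injective (R := ℂ) ?_⟩
  rw [Unitization.inr_mul, ← hfu, ← hy, mul_assoc, Units.mul_inv_cancel_left,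
    ← Unitization.inr_mul, hf]

lemma exists_fEps_eq_mul_mul {a x : V} {ε : ℝ} (hε : 0 < ε) (hx : ‖fEps (ε / 2) a - x‖ < 1) :
    ∃ y : V, fEps ε a = fEps ε a * x * y := by
  refine exists_eq_mul_mul_of_norm_sub_lt_one ?_ hx
  rw [(commute_fEps_fEps a _ _).eq, fEps_mul_fEps a (half_pos hε) le_rfl]

lemma fEps_mem_pedersen (a : V) {ε : ℝ} (hε : 0 < ε) : fEps ε a ∈ pedersen V := by
  simp only [pedersen, pedersenIn, Set.mem_iInter]
  rintro I ⟨⟨-, -, -, -, hI⟩, hdense⟩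
  obtain ⟨x, hx, hdist⟩ :=
    Metric.mem_closure_iff.1 (hdense (Set.mem_univ (fEps (ε / 2) a))) 1 one_pos
  obtain ⟨y, hy⟩ := exists_fEps_eq_mul_mul hε (dist_eq_norm _ x ▸ hdist)
  rw [hy]
  exact (hI _ (hI x hx _ trivial).2 y trivial).1

variable [PartialOrder V]

lemma continuous_toFun {p : V} (hp : p ∈ pedersen V) :
    Continuous fun τ : QuasiTrace V => τ.toFun p := by
  have h : Continuous fun (τ : QuasiTrace V) (a : pedersen V) => τ.toFun a := continuous_induced_dom
  exact (continuous_apply (⟨p, hp⟩ : pedersen V)).comp h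

variable [StarOrderedRing V]

lemma QuasiTrace.exists_toFun_fEps_ne_zero {τ : QuasiTrace V} (hτ : ¬ τ.IsZero) :
    ∃ a : V, ∃ ε : ℝ, 0 < ε ∧ τ.toFun (fEps ε a) ≠ 0 := by
  contrapose! hτ
  intro a
  by_cases ha : 0 ≤ a
  · have hr : 0 < (‖a‖ + 1)⁻¹ := by positivity
    have hra : 0 ≤ (‖a‖ + 1)⁻¹ • a := smul_nonneg hr.le ha
    have hnorm : ‖(‖a‖ + 1)⁻¹ • a‖ ≤ 1 := by
      rw [norm_smul, Real.norm_of_nonneg hr.le, inv_mul_le_one₀ (by positivity)]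
      linarith
    have hzero : τ.toFun ((‖a‖ + 1)⁻¹ • a) ≤ 0 :=
      (toFun_le_dTau τ hra hra (self_mem_closedRightIdeal hra) hnorm).trans
        (dTau_le τ fun δ hδ => (hτ _ δ hδ).le)
    rw [τ.map_smul _ _ hr ha, nonpos_iff_eq_zero, mul_eq_zero] at hzero
    exact hzero.resolve_left (ENNReal.ofReal_pos.2 hr).ne'
  · exact τ.zero_of_not_nonneg a ha

lemma toFun_fEps_le_of_eq_mul_star (τ : QuasiTrace V) {a y g : V} {ε : ℝ}
    (h : fEps ε a = y * star g) : τ.toFun (fEps ε a) ≤ dTau τ (y * star y) :=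
  toFun_le_dTau τ (fEps_nonneg ε a) (mul_star_self_nonneg y)
    (h ▸ closedRightIdeal.mul_mem (mem_closedRightIdeal_of_mul_star_le le_rfl) _)
    (norm_fEps_le_one ε a)

lemma IsFull.exists_toFun_fEps_le {L : ℕ → V → V} (hL : OrthogonalIsometries L) {e : V}
    (hfull : IsFull e) (he : 0 ≤ e) (a : V) {ε : ℝ} (hε : 0 < ε) :
    ∃ n : ℕ, ∀ τ : QuasiTrace V, τ.toFun (fEps ε a) ≤ n * dTau τ e := by
  obtain ⟨x, hx, hdist⟩ := Metric.mem_closure_iff.1 (hfull (fEps (ε / 2) a)) 1 one_pos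
  obtain ⟨y, hy⟩ := exists_fEps_eq_mul_mul hε (dist_eq_norm _ x ▸ hdist)
  obtain ⟨n, u, v, rfl⟩ := exists_eq_sum_mul_mul_of_mem_idealSpan hx
  set B : Fin n → V := fun i => star (v i * y) * e with hB
  have hsum : fEps ε a = ∑ i, B i * star (fEps ε a * u i) := by
    rw [← star_fEps ε a]
    conv_lhs => rw [hy]
    simp only [hB, Finset.mul_sum, Finset.sum_mul, star_sum, star_mul, star_fEps, he.star_eq,
      mul_assoc]
  have hmem : fEps ε a ∈ closedRightIdeal (∑ i, B i * star (B i)) := by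
    rw [hsum]
    exact Submodule.sum_mem _ fun i hi => closedRightIdeal.mul_mem
      (mem_closedRightIdeal_of_mul_star_le
        (Finset.single_le_sum (fun j _ => mul_star_self_nonneg (B j)) hi)) _
  have hBe (τ : QuasiTrace V) (i : Fin n) : dTau τ (B i * star (B i)) ≤ dTau τ e := by
    rw [dTau_mul_star_eq]
    refine dTau_le_dTau τ (star_mul_self_nonneg _) he ?_
    rw [hB, star_mul, he.star_eq, mul_assoc]
    exact closedRightIdeal.base_mul_mem e _
  refine ⟨n, fun τ => ?_⟩
  calc τ.toFun (fEps ε a) ≤ dTau τ (∑ i, B i * star (B i)) :=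
        toFun_le_dTau τ (fEps_nonneg ε a)
          (Finset.sum_nonneg fun i _ => mul_star_self_nonneg (B i)) hmem (norm_fEps_le_one ε a)
    _ ≤ ∑ i, dTau τ (B i * star (B i)) :=
        dTau_sum_le τ hL _ _ fun i _ => mul_star_self_nonneg (B i)
    _ ≤ ∑ _i : Fin n, dTau τ e := Finset.sum_le_sum fun i _ => hBe τ i
    _ = n * dTau τ e := by simp

lemma IsFull.dTau_pos {L : ℕ → V → V} (hL : OrthogonalIsometries L) {e : V} (hfull : IsFull e)
    (he : 0 ≤ e) {τ : QuasiTrace V} (hτ : ¬ τ.IsZero) : 0 < dTau τ e := by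
  obtain ⟨a, ε, hε, ha⟩ := QuasiTrace.exists_toFun_fEps_ne_zero hτ
  obtain ⟨n, hn⟩ := hfull.exists_toFun_fEps_le hL he a hε
  refine pos_iff_ne_zero.2 fun h => ha (nonpos_iff_eq_zero.1 ?_)
  simpa [h] using hn τ

lemma exists_forall_toFun_fEps_le_dTau {a : V} (ha : 0 ≤ a) {ε : ℝ} (hε : 0 < ε) :
    ∃ r > 0, ∀ c : V, 0 ≤ c → ‖a - c‖ < r →
      ∀ τ : QuasiTrace V, τ.toFun (fEps ε a) ≤ dTau τ c := by
  set k : V := cfcₙ (cutoffRoot (ε / 2)) a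
  have hkak : k * a * k = fEps (ε / 2) a := cfcₙ_cutoffRoot_conj ha.isSelfAdjoint (half_pos hε)
  obtain ⟨r, hr, hkr⟩ := exists_pos_mul_lt one_pos (‖k‖ * ‖k‖)
  refine ⟨r, hr, fun c hc hac τ => ?_⟩
  have hnorm : ‖fEps (ε / 2) a - k * c * k‖ < 1 := by
    rw [← hkak, ← sub_mul, ← mul_sub]
    calc ‖k * (a - c) * k‖ ≤ ‖k‖ * ‖a - c‖ * ‖k‖ := norm_mul₃_le
      _ ≤ ‖k‖ * r * ‖k‖ := by gcongr
      _ = ‖k‖ * ‖k‖ * r := by ring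
      _ < 1 := hkr
  obtain ⟨z, hz⟩ := exists_fEps_eq_mul_mul hε hnorm
  have hfactor : fEps ε a = star (k * z) * c * star (fEps ε a * k) := by
    rw [← star_fEps ε a]
    conv_lhs => rw [hz]
    simp only [star_mul, star_fEps, hc.star_eq, mul_assoc]
  calc τ.toFun (fEps ε a)
      ≤ dTau τ (star (k * z) * c * star (star (k * z) * c)) :=
        toFun_fEps_le_of_eq_mul_star τ hfactor
    _ = dTau τ (star (star (k * z) * c) * (star (k * z) * c)) := dTau_mul_star_eq τ _
    _ ≤ dTau τ c := dTau_le_dTau τ (star_mul_self_nonneg _) hc (by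
        rw [star_mul, hc.star_eq, mul_assoc]
        exact closedRightIdeal.base_mul_mem c _)

lemma exists_norm_star_fEps_mul_mul_sub_lt {a b y : V} (hb : 0 ≤ b)
    (hy : y ∈ closedRightIdeal b) {r : ℝ} (h : ‖a - star y * y‖ < r) :
    ∃ δ > 0, ‖a - star (fEps δ b * y) * (fEps δ b * y)‖ < r := by
  have hlim := tendsto_fEps_mul hb hy
  obtain ⟨n, hn⟩ :=
    (((hlim.star.mul hlim).const_sub a).norm.eventually (gt_mem_nhds h)).exists
  exact ⟨1 / (n + 1), by positivity, hn⟩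

lemma CuntzLE.exists_fEps_mul_eq {a b : V} (ha : 0 ≤ a) (hb : 0 ≤ b) (h : CuntzLE a b) {ε : ℝ}
    (hε : 0 < ε) :
    ∃ p : V, 0 ≤ p ∧ (∃ δ > 0, fEps δ b * p = p) ∧
      (∀ τ : QuasiTrace V, dTau τ p ≤ dTau τ a) ∧
      ∃ η > 0, ∀ τ : QuasiTrace V, τ.toFun (fEps ε a) ≤ dTau τ (fEps η p) := by
  obtain ⟨r, hr, hnear⟩ := exists_forall_toFun_fEps_le_dTau ha hε
  obtain ⟨y₀, hyb, hya, hy₀⟩ := h.exists_norm_star_mul_self_sub_lt ha hb hr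
  obtain ⟨δ, hδ, hy⟩ := exists_norm_star_fEps_mul_mul_sub_lt hb hyb (norm_sub_rev a _ ▸ hy₀)
  set y := fEps δ b * y₀ with hy_def
  have hp : 0 ≤ y * star y := mul_star_self_nonneg y
  obtain ⟨η, hη, hφ⟩ := exists_norm_star_fEps_mul_mul_sub_lt hp
    (mem_closedRightIdeal_of_mul_star_le le_rfl) hy
  refine ⟨y * star y, hp, ⟨δ / 2, half_pos hδ, ?_⟩, fun τ => ?_, η, hη, fun τ => ?_⟩
  · rw [← mul_assoc, hy_def, ← mul_assoc (fEps (δ / 2) b), fEps_mul_fEps b (half_pos hδ) le_rfl]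
  · rw [dTau_mul_star_eq]
    refine dTau_le_dTau τ (star_mul_self_nonneg y) ha (closedRightIdeal.mul_mem ?_ y)
    rw [hy_def, star_mul]
    exact closedRightIdeal.mul_mem hya _
  · refine (hnear _ (star_mul_self_nonneg _) hφ τ).trans ?_
    rw [← dTau_mul_star_eq]
    exact dTau_le_dTau τ (mul_star_self_nonneg _) (fEps_nonneg _ _)
      (closedRightIdeal.mul_mem (closedRightIdeal.base_mul_mem _ y) _)

lemma exists_complCompression_fEps_ne_zero {E b : V} (hE : IsSelfAdjoint E) (hb : 0 ≤ b)
    (h : E * b ≠ b) {δ₁ : ℝ} (hδ₁ : 0 < δ₁) :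
    ∃ δ > 0, δ ≤ δ₁ ∧ complCompression E (fEps δ b) ≠ 0 := by
  contrapose! h
  have hlim := tendsto_fEps_mul hb (self_mem_closedRightIdeal hb)
  refine tendsto_nhds_unique ((hlim.const_mul E).congr' ?_) hlim
  filter_upwards [tendsto_one_div_add_atTop_nhds_zero_nat.eventually (gt_mem_nhds hδ₁)]
    with n hn
  have hmem := sub_mul_mem_closedRightIdeal_complCompression hE
    (fEps_nonneg (1 / ((n : ℝ) + 1)) b) (closedRightIdeal.base_mul_mem _ b)
  rw [h _ (by positivity) hn.le] at hmem
  exact (sub_eq_zero.1 (closedRightIdeal.induction (p := (· = 0)) isClosed_singleton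
    (fun y => zero_mul y) hmem)).symm

lemma exists_forall_succ_mul_toFun_fEps_le {L : ℕ → V → V} (hL : OrthogonalIsometries L)
    (hV : IsSimpleCStar V) {a b : V} (ha : 0 ≤ a) (hb : 0 ≤ b) (hab : CuntzLE a b)
    {τ₀ : QuasiTrace V} (hlt : dTau τ₀ a < dTau τ₀ b) {ε : ℝ} (hε : 0 < ε) :
    ∃ δ > 0, ∃ n : ℕ,
      (∀ τ : QuasiTrace V, (n + 1) * τ.toFun (fEps ε a) ≤ n * τ.toFun (fEps δ b)) ∧
      ∀ τ : QuasiTrace V, ¬ τ.IsZero → 0 < τ.toFun (fEps δ b) := by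
  obtain ⟨p, hp, ⟨δ₁, hδ₁, hbp⟩, hpa, η, hη, haφ⟩ := hab.exists_fEps_mul_eq ha hb hε
  set φ := fEps η p
  set E := fEps (η / 2) p
  have hpp := self_mem_closedRightIdeal hp
  have hEp : E ∈ closedRightIdeal p := fEps_mem_closedRightIdeal hp.isSelfAdjoint hpp _
  have hφE : φ * E = φ := by
    rw [(commute_fEps_fEps p _ _).eq, fEps_mul_fEps p (half_pos hη) le_rfl]
  have hEb : E * b ≠ b := fun hb_eq =>
    ((dTau_le_dTau τ₀ hb hp (hb_eq ▸ closedRightIdeal.mul_mem hEp b)).trans (hpa τ₀)).not_gt hlt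
  obtain ⟨δ, hδ, hδδ₁, ht⟩ := exists_complCompression_fEps_ne_zero
    (isSelfAdjoint_fEps _ p) hb hEb (half_pos hδ₁)
  set t := complCompression E (fEps δ b)
  have hpδ : closedRightIdeal p ≤ closedRightIdeal (fEps δ b) := by
    refine closedRightIdeal.le_of_mem ?_
    rw [← hbp, ← fEps_mul_fEps b hδ hδδ₁, mul_assoc]
    exact closedRightIdeal.base_mul_mem _ _
  have htpos : 0 ≤ t := complCompression_nonneg (isSelfAdjoint_fEps _ p) (fEps_nonneg δ b)
  have hadd (τ : QuasiTrace V) : dTau τ φ + dTau τ t ≤ τ.toFun (fEps (δ / 2) b) :=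
    (dTau_add_le_of_orthogonal_mem τ (fEps_nonneg η p) htpos (fEps_nonneg δ b)
      (mul_complCompression_eq_zero hφE _)
      (hpδ (fEps_mem_closedRightIdeal hp.isSelfAdjoint hpp _))
      (complCompression_mem_closedRightIdeal (self_mem_closedRightIdeal (fEps_nonneg δ b))
        (hpδ hEp))).trans
    (dTau_le_toFun τ (fEps_nonneg _ _) (norm_fEps_le_one _ _) (fEps_nonneg _ _)
      (fEps_mul_fEps b (half_pos hδ) le_rfl))
  obtain ⟨n, hn⟩ := (hV.isFull ht).exists_toFun_fEps_le hL htpos a hε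
  refine ⟨δ / 2, half_pos hδ, n, fun τ => ?_, fun τ hτ => ?_⟩
  · calc (n + 1) * τ.toFun (fEps ε a) = n * τ.toFun (fEps ε a) + τ.toFun (fEps ε a) := by ring
      _ ≤ n * dTau τ φ + n * dTau τ t := by gcongr; exacts [haφ τ, hn τ]
      _ = n * (dTau τ φ + dTau τ t) := (mul_add _ _ _).symm
      _ ≤ n * τ.toFun (fEps (δ / 2) b) := by gcongr; exact hadd τ
  · exact (((hV.isFull ht).dTau_pos hL htpos hτ).trans_le le_add_self).trans_le (hadd τ)

end UniformEstimates

/-! ### Exponential smoothing of increments -/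

section ExponentialSmoothing

/-- Exponential smoothing `g` of a sequence `e`: each term passes nine tenths of itself on to the
next. The factor `9/10` makes every `g m` less than half the sum of its next three terms, since
`0.9 + 0.81 + 0.729 > 2`, while the partial sums of `g` still exhaust those of `e`. -/
def smoothing (e : ℕ → ℝ≥0∞) : ℕ → ℝ≥0∞
  | 0 => 10⁻¹ * e 0
  | m + 1 => 10⁻¹ * (9 * smoothing e m + e (m + 1))

namespace smoothing

variable (e : ℕ → ℝ≥0∞)

lemma ten_mul_zero : 10 * smoothing e 0 = e 0 := by
  rw [smoothing, ← mul_assoc, ENNReal.mul_inv_cancel (by norm_num) (by norm_num), one_mul]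

lemma ten_mul_succ (m : ℕ) : 10 * smoothing e (m + 1) = 9 * smoothing e m + e (m + 1) := by
  rw [smoothing, ← mul_assoc, ENNReal.mul_inv_cancel (by norm_num) (by norm_num), one_mul]

lemma sum_add_nine_mul (m : ℕ) :
    ∑ i ∈ Finset.range (m + 1), smoothing e i + 9 * smoothing e m =
      ∑ i ∈ Finset.range (m + 1), e i := by
  induction m with
  | zero => simp only [zero_add, Finset.sum_range_one, ← ten_mul_zero e]; ring
  | succ m ih =>
    rw [Finset.sum_range_succ, Finset.sum_range_succ _ (m + 1), ← ih, add_assoc, add_assoc,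
      ← ten_mul_succ]
    ring

lemma ten_mul_sum_succ (m : ℕ) :
    10 * ∑ i ∈ Finset.range (m + 2), smoothing e i =
      9 * ∑ i ∈ Finset.range (m + 1), smoothing e i + ∑ i ∈ Finset.range (m + 2), e i := by
  rw [Finset.sum_range_succ _ (m + 1), Finset.sum_range_succ e (m + 1), mul_add, ten_mul_succ,
    ← sum_add_nine_mul e m]
  ring

lemma nine_mul_le (m : ℕ) : 9 * smoothing e m ≤ 10 * smoothing e (m + 1) :=
  (ten_mul_succ e m).symm ▸ le_self_add

lemma ten_pow_mul_sum_le (k j : ℕ) :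
    10 ^ j * ∑ i ∈ Finset.range (k + 1), e i ≤
      10 ^ j * ∑ i ∈ Finset.range (k + j + 1), smoothing e i +
        9 ^ j * ∑ i ∈ Finset.range (k + 1), e i := by
  induction j with
  | zero => simp
  | succ j ih =>
    have hmono : ∑ i ∈ Finset.range (k + 1), e i ≤ ∑ i ∈ Finset.range (k + j + 2), e i :=
      Finset.sum_le_sum_of_subset (Finset.range_mono (by lia))
    calc 10 ^ (j + 1) * ∑ i ∈ Finset.range (k + 1), e i
        = 9 * (10 ^ j * ∑ i ∈ Finset.range (k + 1), e i) +
          10 ^ j * ∑ i ∈ Finset.range (k + 1), e i := by ring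
      _ ≤ 9 * (10 ^ j * ∑ i ∈ Finset.range (k + j + 1), smoothing e i +
            9 ^ j * ∑ i ∈ Finset.range (k + 1), e i) +
          10 ^ j * ∑ i ∈ Finset.range (k + j + 2), e i := by gcongr
      _ = 10 ^ j * (10 * ∑ i ∈ Finset.range (k + j + 2), smoothing e i) +
          9 ^ (j + 1) * ∑ i ∈ Finset.range (k + 1), e i := by rw [ten_mul_sum_succ]; ring
      _ = _ := by ring_nf

variable {e}

lemma pos (h₀ : 0 < e 0) (m : ℕ) : 0 < smoothing e m := by
  induction m with
  | zero => exact ENNReal.mul_pos (by norm_num) h₀.ne'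
  | succ m ih =>
    exact ENNReal.mul_pos (by norm_num)
      ((ENNReal.mul_pos (by norm_num) ih.ne').trans_le le_self_add).ne'

lemma ne_top (he : ∀ i, e i ≠ ∞) (m : ℕ) : smoothing e m ≠ ∞ := by
  induction m with
  | zero => exact ENNReal.mul_ne_top (by norm_num) (he 0)
  | succ m ih =>
    exact ENNReal.mul_ne_top (by norm_num)
      (ENNReal.add_ne_top.2 ⟨ENNReal.mul_ne_top (by norm_num) ih, he _⟩)

lemma two_mul_lt (h₀ : 0 < e 0) (he : ∀ i, e i ≠ ∞) (m : ℕ) :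
    2 * smoothing e m < ∑ i ∈ Finset.Ico (m + 1) (m + 4), smoothing e i := by
  have h₁ := nine_mul_le e m
  have h₂ := nine_mul_le e (m + 1)
  have h₃ := nine_mul_le e (m + 2)
  have hsum : ∑ i ∈ Finset.Ico (m + 1) (m + 4), smoothing e i =
      smoothing e (m + 1) + smoothing e (m + 2) + smoothing e (m + 3) := by
    simp [Finset.sum_Ico_eq_sum_range, Finset.sum_range_succ, add_assoc]
  refine lt_of_mul_lt_mul_left' (a := 1000) ?_
  calc 1000 * (2 * smoothing e m) = 2000 * smoothing e m := by ring
    _ < 2439 * smoothing e m := ENNReal.mul_lt_mul_left (pos h₀ m).ne' (ne_top he m) (by norm_num)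
    _ = 171 * (9 * smoothing e m) + 100 * (9 * smoothing e m) := by ring
    _ ≤ 171 * (10 * smoothing e (m + 1)) + 100 * (10 * smoothing e (m + 1)) := by gcongr
    _ = 190 * (9 * smoothing e (m + 1)) + 1000 * smoothing e (m + 1) := by ring
    _ ≤ 190 * (10 * smoothing e (m + 2)) + 1000 * smoothing e (m + 1) := by gcongr
    _ = 100 * (9 * smoothing e (m + 2)) + 1000 * smoothing e (m + 2) +
        1000 * smoothing e (m + 1) := by ring
    _ ≤ 100 * (10 * smoothing e (m + 3)) + 1000 * smoothing e (m + 2) +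
        1000 * smoothing e (m + 1) := by gcongr
    _ = 1000 * ∑ i ∈ Finset.Ico (m + 1) (m + 4), smoothing e i := by rw [hsum]; ring

lemma sum_lt (h₀ : 0 < e 0) (he : ∀ i, e i ≠ ∞) (m : ℕ) :
    ∑ i ∈ Finset.range (m + 1), smoothing e i < ∑ i ∈ Finset.range (m + 1), e i :=
  sum_add_nine_mul e m ▸ ENNReal.lt_add_right (ENNReal.sum_ne_top.2 fun i _ => ne_top he i)
    (mul_ne_zero (by norm_num) (pos h₀ m).ne')

lemma lt_sum (h₀ : 0 < e 0) (he : ∀ i, e i ≠ ∞) {α : ℝ≥0∞} {n k j : ℕ}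
    (hα : (n + 1) * α ≤ n * ∑ i ∈ Finset.range (k + 1), e i) (hj : (n + 1) * 9 ^ j < 10 ^ j) :
    α < ∑ i ∈ Finset.range (k + j + 1), smoothing e i := by
  set β := ∑ i ∈ Finset.range (k + 1), e i
  set γ := ∑ i ∈ Finset.range (k + j + 1), smoothing e i
  have hβ₀ : β ≠ 0 := (h₀.trans_le
    (Finset.single_le_sum (fun _ _ => zero_le) (Finset.mem_range.2 k.succ_pos))).ne'
  have hβ : β ≠ ∞ := ENNReal.sum_ne_top.2 fun i _ => he i
  have hγ : γ ≠ ∞ := ENNReal.sum_ne_top.2 fun i _ => ne_top he i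
  have hj' : ((n : ℝ≥0∞) + 1) * 9 ^ j < 10 ^ j := by exact_mod_cast hj
  have hlt : n * (10 ^ j * β) + 10 ^ j * β < (n + 1) * (10 ^ j * γ) + 10 ^ j * β :=
    calc n * (10 ^ j * β) + 10 ^ j * β = (n + 1) * (10 ^ j * β) := by ring
      _ ≤ (n + 1) * (10 ^ j * γ + 9 ^ j * β) := by gcongr; exact ten_pow_mul_sum_le e k j
      _ = (n + 1) * (10 ^ j * γ) + (n + 1) * 9 ^ j * β := by ring
      _ < (n + 1) * (10 ^ j * γ) + 10 ^ j * β :=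
        ENNReal.add_lt_add_left (by finiteness) (ENNReal.mul_lt_mul_left hβ₀ hβ hj')
  refine lt_of_mul_lt_mul_left' (a := ((n : ℝ≥0∞) + 1) * 10 ^ j) ?_
  calc (n + 1) * 10 ^ j * α = 10 ^ j * ((n + 1) * α) := by ring
    _ ≤ 10 ^ j * (n * β) := by gcongr
    _ = n * (10 ^ j * β) := by ring
    _ < (n + 1) * (10 ^ j * γ) := lt_of_add_lt_add_right hlt
    _ = (n + 1) * 10 ^ j * γ := by ring

end smoothing

end ExponentialSmoothing

/-! ### Continuous affine functions on the cone of quasitraces -/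

section ContinuousAffine

variable {V : Type*} [NonUnitalCStarAlgebra V]

lemma sub_mem_pedersen {x y : V} (hx : x ∈ pedersen V) (hy : y ∈ pedersen V) :
    x - y ∈ pedersen V := by
  simp only [pedersen, pedersenIn, Set.mem_iInter] at *
  intro I hI
  rw [sub_eq_add_neg]
  exact hI.1.2.2.1 _ (hx I hI) _ (hI.1.2.2.2.1 _ (hy I hI))

/-- The increments of the increasing sequence `f_{δ/(k+1)}(b)`, starting from `0`. -/
def fEpsIncrement (δ : ℝ) (b : V) : ℕ → V
  | 0 => fEps δ b
  | k + 1 => fEps (δ / (k + 2)) b - fEps (δ / (k + 1)) b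

lemma fEpsIncrement_mem_pedersen (b : V) {δ : ℝ} (hδ : 0 < δ) (k : ℕ) :
    fEpsIncrement δ b k ∈ pedersen V := by
  cases k with
  | zero => exact fEps_mem_pedersen b hδ
  | succ k =>
    exact sub_mem_pedersen (fEps_mem_pedersen b (by positivity))
      (fEps_mem_pedersen b (by positivity))

variable [PartialOrder V]

/-- Finite continuous affine functions on the cone of quasitraces; up to strict positivity these
are the members of `Aff₊`. -/
structure IsContinuousAffine (g : QuasiTrace V → ℝ≥0∞) : Prop where
  continuous : Continuous g
  isAffineQT : IsAffineQT V g
  lt_top : ∀ τ, g τ < ∞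
  eq_zero : ∀ τ : QuasiTrace V, τ.IsZero → g τ = 0

namespace IsContinuousAffine

variable {f g : QuasiTrace V → ℝ≥0∞}

lemma toFun {p : V} (hp : 0 ≤ p) (h : p ∈ pedersen V) :
    IsContinuousAffine fun τ : QuasiTrace V => τ.toFun p where
  continuous := continuous_toFun h
  isAffineQT _ _ _ _ _ _ hcombo := hcombo p hp
  lt_top τ := τ.finite_on_pedersen p h hp
  eq_zero _ hτ := hτ p

lemma add (hf : IsContinuousAffine f) (hg : IsContinuousAffine g) :
    IsContinuousAffine fun τ => f τ + g τ where
  continuous := hf.continuous.add hg.continuous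
  isAffineQT t h₀ h₁ τ σ ρ hcombo := by
    simp only [hf.isAffineQT t h₀ h₁ τ σ ρ hcombo, hg.isAffineQT t h₀ h₁ τ σ ρ hcombo]
    ring
  lt_top τ := ENNReal.add_lt_top.2 ⟨hf.lt_top τ, hg.lt_top τ⟩
  eq_zero τ hτ := by rw [hf.eq_zero τ hτ, hg.eq_zero τ hτ, add_zero]

lemma const_mul (hf : IsContinuousAffine f) {c : ℝ≥0∞} (hc : c ≠ ∞) :
    IsContinuousAffine fun τ => c * f τ where
  continuous := (ENNReal.continuous_const_mul hc).comp hf.continuous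
  isAffineQT t h₀ h₁ τ σ ρ hcombo := by
    simp only [hf.isAffineQT t h₀ h₁ τ σ ρ hcombo]
    ring
  lt_top τ := ENNReal.mul_lt_top hc.lt_top (hf.lt_top τ)
  eq_zero τ hτ := by rw [hf.eq_zero τ hτ, mul_zero]

lemma smoothing {e : ℕ → QuasiTrace V → ℝ≥0∞} (he : ∀ k, IsContinuousAffine (e k)) (m : ℕ) :
    IsContinuousAffine fun τ => smoothing (fun k => e k τ) m := by
  induction m with
  | zero => exact (he 0).const_mul (by norm_num)
  | succ m ih => exact ((ih.const_mul (by norm_num)).add (he _)).const_mul (by norm_num)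

lemma memLAffPlus (hf : IsContinuousAffine f) (hpos : ∀ τ : QuasiTrace V, ¬ τ.IsZero → 0 < f τ) :
    MemLAffPlus V f :=
  ⟨fun _ => f, fun _ => .inr ⟨hf.continuous, hf.isAffineQT, hf.lt_top, hpos, hf.eq_zero⟩,
    fun _ _ => le_rfl, fun _ => ciSup_const.symm⟩

end IsContinuousAffine

variable [StarOrderedRing V]

lemma fEpsIncrement_nonneg {b : V} (hb : 0 ≤ b) {δ : ℝ} (hδ : 0 < δ) (k : ℕ) :
    0 ≤ fEpsIncrement δ b k := by
  cases k with
  | zero => exact fEps_nonneg δ b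
  | succ k => exact sub_nonneg.2 (fEps_le_fEps hb (by positivity) (by gcongr; norm_num))

lemma sum_toFun_fEpsIncrement (τ : QuasiTrace V) {b : V} (hb : 0 ≤ b) {δ : ℝ} (hδ : 0 < δ)
    (m : ℕ) :
    ∑ k ∈ Finset.range (m + 1), τ.toFun (fEpsIncrement δ b k) =
      τ.toFun (fEps (δ / (m + 1)) b) := by
  induction m with
  | zero => simp [fEpsIncrement]
  | succ m ih =>
    have hcomm : Commute (fEps (δ / (m + 1)) b) (fEpsIncrement δ b (m + 1)) :=
      (commute_fEps_fEps b _ _).sub_right (.refl _)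
    rw [Finset.sum_range_succ, ih, ← τ.map_add_of_commute _ _ (fEps_nonneg _ b)
      (fEpsIncrement_nonneg hb hδ _) hcomm.eq, fEpsIncrement, add_sub_cancel]
    norm_num [add_assoc]

end ContinuousAffine

/-! ### Exact comparison -/

section ExactComparison

variable {V : Type*} [NonUnitalCStarAlgebra V] [PartialOrder V] [StarOrderedRing V] {L : ℕ → V → V}

lemma dTau_smul_le (τ : QuasiTrace V) {x : V} (hx : 0 ≤ x) {s : ℝ} (hs : 0 ≤ s) :
    dTau τ (s • x) ≤ dTau τ x :=
  dTau_le_dTau τ (smul_nonneg hs hx) hx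
    (Submodule.smul_of_tower_mem _ s (self_mem_closedRightIdeal hx))

lemma dTau_smul (τ : QuasiTrace V) {x : V} (hx : 0 ≤ x) {s : ℝ} (hs : 0 < s) :
    dTau τ (s • x) = dTau τ x := by
  refine (dTau_smul_le τ hx hs.le).antisymm ?_
  simpa [smul_smul, hs.ne'] using
    dTau_smul_le τ (smul_nonneg hs.le hx) (inv_nonneg.2 hs.le)

lemma OrthogonalIsometries.exists_orthogonal_dTau_eq (hL : OrthogonalIsometries L) {c : ℕ → V}
    (hc : ∀ i, 0 ≤ c i) {r : ℕ → ℝ} (hr : ∀ i, 0 < r i) :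
    ∃ d : ℕ → V, (∀ i, 0 ≤ d i) ∧ (∀ i j, i ≠ j → d i * d j = 0) ∧ (∀ i, ‖d i‖ ≤ r i) ∧
      ∀ i (τ : QuasiTrace V), dTau τ (d i) = dTau τ (c i) := by
  set x : ℕ → V := fun i => L i (CFC.sqrt (c i))
  set s : ℕ → ℝ := fun i => r i / (‖x i * star (x i)‖ + 1)
  have hs (i : ℕ) : 0 < s i := div_pos (hr i) (by positivity)
  have hx (i j : ℕ) (hij : i ≠ j) : star (x i) * x j = 0 := (hL i j _ _).trans (if_neg hij)
  refine ⟨fun i => s i • (x i * star (x i)),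
    fun i => smul_nonneg (hs i).le (mul_star_self_nonneg _), fun i j hij => ?_, fun i => ?_,
    fun i τ => ?_⟩
  · rw [smul_mul_smul_comm, mul_assoc, ← mul_assoc (star (x i)), hx i j hij, zero_mul, mul_zero,
      smul_zero]
  · rw [norm_smul, Real.norm_of_nonneg (hs i).le, div_mul_eq_mul_div,
      div_le_iff₀ (by positivity)]
    exact mul_le_mul_of_nonneg_left (by linarith) (hr i).le
  · rw [dTau_smul τ (mul_star_self_nonneg _) (hs i), dTau_mul_star_eq, hL, if_pos rfl, star_sqrt,
      CFC.sqrt_mul_sqrt_self (c i) (hc i)]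

lemma exists_succ_mul_nine_pow_lt (n : ℕ) : ∃ j : ℕ, (n + 1) * 9 ^ j < 10 ^ j := by
  obtain ⟨j, hj⟩ := exists_pow_lt_of_lt_one (show (0 : ℝ) < 1 / (n + 1) by positivity)
    (show (9 / 10 : ℝ) < 1 by norm_num)
  refine ⟨j, ?_⟩
  rw [div_pow, div_lt_div_iff₀ (by positivity) (by positivity), one_mul] at hj
  exact_mod_cast mul_comm (9 ^ j : ℝ) (n + 1) ▸ hj

lemma GammaSurjective.exists_dTau_eq_smoothing (hΓ : GammaSurjective V)
    (hL : OrthogonalIsometries L) {b : V} (hb : 0 ≤ b) {δ : ℝ} (hδ : 0 < δ)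
    (hpos : ∀ τ : QuasiTrace V, ¬ τ.IsZero → 0 < τ.toFun (fEps δ b)) :
    ∃ d : ℕ → V, DominatedSequence d ∧ (∀ i, ‖d i‖ ≤ (1 / 4) ^ i) ∧
      ∀ i τ, dTau τ (d i) = smoothing (fun k => τ.toFun (fEpsIncrement δ b k)) i := by
  have haff (k : ℕ) : IsContinuousAffine fun τ : QuasiTrace V => τ.toFun (fEpsIncrement δ b k) :=
    .toFun (fEpsIncrement_nonneg hb hδ k) (fEpsIncrement_mem_pedersen b hδ k)
  choose c hc hcτ using fun i =>
    hΓ _ ((IsContinuousAffine.smoothing haff i).memLAffPlus fun τ hτ =>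
      smoothing.pos (hpos τ hτ) i)
  obtain ⟨d, hd, ho, hdn, hdc⟩ :=
    hL.exists_orthogonal_dTau_eq hc (r := fun i => (1 / 4) ^ i) fun i => by positivity
  refine ⟨d, ⟨hd, ho, fun i => ⟨i + 4, fun τ hτ => ?_⟩⟩, hdn, fun i τ => by rw [hdc, hcτ]⟩
  simp only [hdc, hcτ]
  exact smoothing.two_mul_lt (hpos τ hτ) (fun k => ((haff k).lt_top τ).ne) i

lemma exists_forall_lt_sum_smoothing {a b : V} (hb : 0 ≤ b) {δ₀ δ : ℝ} (hδ₀ : 0 < δ₀)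
    (hδ : 0 < δ) (hpos : ∀ τ : QuasiTrace V, ¬ τ.IsZero → 0 < τ.toFun (fEps δ₀ b)) {ε : ℝ} {n : ℕ}
    (hn : ∀ τ : QuasiTrace V, (n + 1) * τ.toFun (fEps ε a) ≤ n * τ.toFun (fEps δ b)) :
    ∃ m, ∀ τ : QuasiTrace V, ¬ τ.IsZero → τ.toFun (fEps ε a) <
      ∑ i ∈ Finset.range m, smoothing (fun k => τ.toFun (fEpsIncrement δ₀ b k)) i := by
  obtain ⟨k, hk⟩ := exists_nat_gt (δ₀ / δ)
  obtain ⟨j, hj⟩ := exists_succ_mul_nine_pow_lt n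
  have hkδ : δ₀ / (k + 1) ≤ δ := by
    rw [div_lt_iff₀ hδ] at hk
    rw [div_le_iff₀ (by positivity)]
    linarith
  refine ⟨k + j + 1, fun τ hτ => smoothing.lt_sum (hpos τ hτ) (fun i => ?_) ((hn τ).trans ?_) hj⟩
  · exact (τ.finite_on_pedersen _ (fEpsIncrement_mem_pedersen b hδ₀ i)
      (fEpsIncrement_nonneg hb hδ₀ i)).ne
  · rw [sum_toFun_fEpsIncrement τ hb hδ₀]
    gcongr
    exact τ.fEps_anti hb (by positivity) hkδ

lemma sum_smoothing_lt_dTau {b : V} (hb : 0 ≤ b) {δ : ℝ} (hδ : 0 < δ) {τ : QuasiTrace V}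
    (hpos : 0 < τ.toFun (fEps δ b)) (m : ℕ) :
    ∑ i ∈ Finset.range m, smoothing (fun k => τ.toFun (fEpsIncrement δ b k)) i < dTau τ b :=
  calc ∑ i ∈ Finset.range m, smoothing (fun k => τ.toFun (fEpsIncrement δ b k)) i
      ≤ ∑ i ∈ Finset.range (m + 1), smoothing (fun k => τ.toFun (fEpsIncrement δ b k)) i :=
        Finset.sum_le_sum_of_subset (Finset.range_mono m.le_succ)
    _ < ∑ i ∈ Finset.range (m + 1), τ.toFun (fEpsIncrement δ b i) :=
        smoothing.sum_lt hpos (fun i => (τ.finite_on_pedersen _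
          (fEpsIncrement_mem_pedersen b hδ i) (fEpsIncrement_nonneg hb hδ i)).ne) m
    _ = τ.toFun (fEps (δ / (m + 1)) b) := sum_toFun_fEpsIncrement τ hb hδ m
    _ ≤ dTau τ b := toFun_fEps_le_dTau τ hb (by positivity)

lemma exists_norm_sub_le_dTau_le_toFun_fEps {a : V} (ha : 0 ≤ a) {ε : ℝ} (hε : 0 < ε) :
    ∃ a' : V, 0 ≤ a' ∧ ‖a - a'‖ ≤ ε ∧
      ∀ τ : QuasiTrace V, dTau τ a' ≤ τ.toFun (fEps (ε / 2) a) := by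
  have ha' : 0 ≤ fEps ε a * a :=
    (commute_fEps_self ha.isSelfAdjoint ε).mul_nonneg (fEps_nonneg ε a) ha
  refine ⟨fEps ε a * a, ha', norm_sub_fEps_mul_self_le ha hε, fun τ =>
    dTau_le_toFun τ (fEps_nonneg _ a) (norm_fEps_le_one _ a) ha' ?_⟩
  rw [← mul_assoc, fEps_mul_fEps a (half_pos hε) le_rfl]

theorem comparison_exact_general (hV : IsSimpleCStar V) (hL : OrthogonalIsometries L)
    (hsc : StrictComparison V) (hΓ : GammaSurjective V) {a b : V} (ha : 0 ≤ a) (hb : 0 ≤ b)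
    (hlt : ∀ τ : QuasiTrace V, ¬ τ.IsZero → dTau τ a < dTau τ b) :
    ∃ x : V, star x * x = a ∧ x * star x ∈ her b := by
  by_cases hqt : ∃ τ : QuasiTrace V, ¬ τ.IsZero
  · obtain ⟨τ₀, hτ₀⟩ := hqt
    have huniform {ε : ℝ} (hε : 0 < ε) := exists_forall_succ_mul_toFun_fEps_le hL hV ha hb
      (hsc a b ha hb hlt) (hlt τ₀ hτ₀) hε
    obtain ⟨δ₀, hδ₀, -, -, hpos⟩ := huniform one_pos
    obtain ⟨d, hd, hdn, hdτ⟩ := hΓ.exists_dTau_eq_smoothing hL hb hδ₀ hpos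
    refine hd.exists_star_mul_self_eq hL hsc hdn hb (fun ε hε => ?_) fun m τ hτ => ?_
    · obtain ⟨a', ha', haa', ha'τ⟩ := exists_norm_sub_le_dTau_le_toFun_fEps ha (half_pos hε)
      obtain ⟨δ, hδ, n, hn, -⟩ := huniform (half_pos (half_pos hε))
      obtain ⟨m, hm⟩ := exists_forall_lt_sum_smoothing hb hδ₀ hδ hpos hn
      refine ⟨m, a', ha', haa'.trans_lt (half_lt_self hε), fun τ hτ => ?_⟩
      simp only [hdτ]
      exact (ha'τ τ).trans_lt (hm τ hτ)
    · simp only [hdτ]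
      exact sum_smoothing_lt_dTau hb hδ₀ (hpos τ hτ) m
  · obtain ⟨x, hx⟩ := hsc a 0 ha le_rfl fun τ hτ => absurd ⟨τ, hτ⟩ hqt
    have ha₀ : a = 0 := by simpa using hx
    exact ⟨0, by simp [ha₀], subset_closure ⟨0, by simp⟩⟩

end ExactComparison

/-- **Corollary.** Let `A` be a σ-unital simple C*-algebra with `QT̃(A) ≠ {0}`, strict
comparison, and surjective `Γ`.  If `a, b ∈ (A ⊗ K)₊` satisfy `d_τ(a) < d_τ(b)` for all
nonzero `τ ∈ QT̃(A)`, then `a ≾̃ b`: there is `x` with `x*x = a` and `xx* ∈ Her(b)`. -/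
theorem comparison_exact
    (SB : Stabilization A W)
    (hσ : SigmaUnital A) (hsimple : IsSimpleCStar A)
    (hqt : ∃ τ : QuasiTrace W, ¬ τ.IsZero)
    (hsc : StrictComparison W) (hΓ : GammaSurjective W)
    (a b : W) (ha : 0 ≤ a) (hb : 0 ≤ b)
    (hlt : ∀ τ : QuasiTrace W, ¬ τ.IsZero → dTau τ a < dTau τ b) :
    ∃ x : W, star x * x = a ∧ x * star x ∈ her b := by
  obtain ⟨L, hL⟩ := SB.exists_orthogonalIsometries
  exact comparison_exact_general (SB.isSimpleCStar hsimple) hL hsc hΓ ha hb hlt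

end Paper
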